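/- arXiv:2205.09243 — 13 statements merged into one kernel-verified Lean document; each statement's English description precedes it below -/
import Mathlib

section
/- For every integer d ≥ 1 there exists a constant K = K(d) > 0 with the following property. Let ρ ≥ 0, let Z = (z_1, …, z_n) be a non-overlapping configuration of n entities of radius ρ in ℝ^d with pairwise distinct centers, let 1 ≤ x ≤ n−1 be an integer, and let B be a closed ball in ℝ^d of radius r_B. Then the number of indices i such that r_i(x) ≥ r_B and B_i(x) ∩ B ≠ ∅ is at most K·x. -/
open Metric Set

/-- The `x`-separation of entity `i` in the configuration `z` of entities of radius `ρ`:
the `x`-th smallest value of `dist (z i) (z j) - 2ρ` over `j ≠ i`. -/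
noncomputable def xSep {d n : ℕ} (ρ : ℝ) (z : Fin n → EuclideanSpace ℝ (Fin d))
    (x : ℕ) (i : Fin n) : ℝ :=
  sInf {r : ℝ | x ≤ {j : Fin n | j ≠ i ∧ dist (z i) (z j) - 2 * ρ ≤ r}.ncard}

lemma card_le_of_close {d n : ℕ} (ρ : ℝ) (z : Fin n → EuclideanSpace ℝ (Fin d)) (x : ℕ)
    (hρ : 0 ≤ ρ) (hx : 1 ≤ x) (A : Finset (Fin n)) (i : Fin n)
    (h : ∀ j ∈ A, j ≠ i → dist (z i) (z j) < ρ + xSep ρ z x i) : A.card ≤ x := by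
  classical
  by_contra! hc
  have h1 : x ≤ (A.erase i).card := by
    have := Finset.pred_card_le_card_erase (s := A) (a := i)
    omega
  have hne : (A.erase i).Nonempty := Finset.card_pos.mp (by omega)
  obtain ⟨m, hm, hmax⟩ := Finset.exists_max_image (A.erase i)
    (fun j => dist (z i) (z j) - 2 * ρ) hne
  have hle : xSep ρ z x i ≤ dist (z i) (z m) - 2 * ρ := by
    apply csInf_le
    · refine ⟨-(2 * ρ), ?_⟩
      intro r hr
      have hpos : 0 < {j : Fin n | j ≠ i ∧ dist (z i) (z j) - 2 * ρ ≤ r}.ncard :=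
        lt_of_lt_of_le hx hr
      obtain ⟨j, hj⟩ := (Set.ncard_pos (Set.toFinite _)).mp hpos
      have := hj.2
      have := dist_nonneg (x := z i) (y := z j)
      linarith
    · refine h1.trans ?_
      rw [← Set.ncard_coe_finset]
      refine Set.ncard_le_ncard ?_ (Set.toFinite _)
      intro j hj
      exact ⟨(Finset.mem_erase.mp hj).1, hmax j hj⟩
  have := h m (Finset.mem_of_mem_erase hm) (Finset.ne_of_mem_erase hm)
  linarith

lemma far_dist {E : Type*} [NormedAddCommGroup E] [NormedSpace ℝ E] (p q t : E)
    (hq : 0 < ‖q‖) (hqp : ‖q‖ ≤ ‖p‖)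
    (h1 : dist (‖p‖⁻¹ • p) t < 1 / 4) (h2 : dist (‖q‖⁻¹ • q) t < 1 / 4) :
    dist p q ≤ ‖p‖ - ‖q‖ / 2 := by
  have hp : 0 < ‖p‖ := hq.trans_le hqp
  set u := ‖p‖⁻¹ • p with hu
  set v := ‖q‖⁻¹ • q with hv
  have hpu : p = ‖p‖ • u := by rw [hu, smul_inv_smul₀ hp.ne']
  have hqv : q = ‖q‖ • v := by rw [hv, smul_inv_smul₀ hq.ne']
  have hun : ‖u‖ = 1 := by rw [hu, norm_smul, norm_inv, norm_norm, inv_mul_cancel₀ hp.ne']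
  have huv : ‖u - v‖ ≤ 1 / 2 := by
    rw [← dist_eq_norm]
    have := dist_triangle_right u v t
    linarith
  have e : p - q = (‖p‖ - ‖q‖) • u + ‖q‖ • (u - v) := by
    rw [sub_smul, smul_sub, ← hpu, ← hqv]; abel
  rw [dist_eq_norm, e]
  refine (norm_add_le _ _).trans ?_
  rw [norm_smul _ u, hun, norm_smul _ (u - v), norm_norm, Real.norm_of_nonneg (by linarith)]
  nlinarith

theorem stmt0 (d : ℕ) (hd : 1 ≤ d) :
    ∃ K : ℕ, 0 < K ∧
      ∀ (n : ℕ) (ρ : ℝ) (z : Fin n → EuclideanSpace ℝ (Fin d)) (x : ℕ),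
        0 ≤ ρ →
        Function.Injective z →
        (∀ i j : Fin n, i ≠ j → 2 * ρ ≤ dist (z i) (z j)) →
        1 ≤ x → x ≤ n - 1 →
        ∀ (c : EuclideanSpace ℝ (Fin d)) (rB : ℝ), 0 ≤ rB →
          {i : Fin n | rB ≤ ρ + xSep ρ z x i ∧
              (closedBall (z i) (ρ + xSep ρ z x i) ∩ closedBall c rB).Nonempty}.ncard
            ≤ K * x := by
  classical
  obtain ⟨T, -, hTf, hT⟩ := (isCompact_closedBall (0 : EuclideanSpace ℝ (Fin d)) 2).finite_cover_balls
    (e := 1 / 4) (by norm_num)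
  have hcov : ∀ w : EuclideanSpace ℝ (Fin d), ‖w‖ ≤ 2 → ∃ t ∈ hTf.toFinset, dist w t < 1 / 4 := by
    intro w hw
    have := hT (mem_closedBall_zero_iff.mpr hw)
    simpa using this
  choose! g hgT hg using hcov
  refine ⟨(hTf.toFinset ×ˢ (Finset.univ : Finset Bool)).card + 1, by omega, ?_⟩
  intro n ρ z x hρ hz _ hx _ c rB hrB
  set S : Finset (Fin n) := Finset.univ.filter (fun i => rB ≤ ρ + xSep ρ z x i ∧
              (closedBall (z i) (ρ + xSep ρ z x i) ∩ closedBall c rB).Nonempty) with hS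
  have hSc : {i : Fin n | rB ≤ ρ + xSep ρ z x i ∧
              (closedBall (z i) (ρ + xSep ρ z x i) ∩ closedBall c rB).Nonempty}.ncard = S.card := by
    rw [← Set.ncard_coe_finset]; congr 1; ext i; simp [hS]
  rw [hSc]
  have hS1 : ∀ i ∈ S, rB ≤ ρ + xSep ρ z x i := fun i hi => (Finset.mem_filter.mp hi).2.1
  have hS2 : ∀ i ∈ S, ‖z i - c‖ ≤ ρ + xSep ρ z x i + rB := by
    intro i hi
    obtain ⟨y, hy1, hy2⟩ := (Finset.mem_filter.mp hi).2.2
    rw [← dist_eq_norm]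
    have := dist_triangle_left (z i) c y
    have := mem_closedBall.mp hy1
    have := mem_closedBall.mp hy2
    linarith
  let w : Fin n → EuclideanSpace ℝ (Fin d) := fun i =>
    if 2 * rB < ‖z i - c‖ then ‖z i - c‖⁻¹ • (z i - c) else rB⁻¹ • (z i - c)
  have hw : ∀ i, ‖w i‖ ≤ 2 := by
    intro i
    simp only [w]
    split_ifs with h
    · have : 0 < ‖z i - c‖ := by linarith
      rw [norm_smul, norm_inv, norm_norm, inv_mul_cancel₀ this.ne']; norm_num
    · rw [norm_smul, norm_inv, Real.norm_of_nonneg hrB]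
      rcases hrB.eq_or_lt with h0 | h0
      · rw [← h0]; simp
      · rw [inv_mul_le_iff₀ h0]; linarith
  let f : Fin n → EuclideanSpace ℝ (Fin d) × Bool := fun i =>
    (g (w i), decide (2 * rB < ‖z i - c‖))
  have key : S.card ≤ x * (hTf.toFinset ×ˢ (Finset.univ : Finset Bool)).card := by
    refine Finset.card_le_mul_card_image_of_maps_to (f := f) ?_ x ?_
    · intro i _
      exact Finset.mem_product.mpr ⟨hgT _ (hw i), Finset.mem_univ _⟩
    · rintro ⟨t, b⟩ _
      rcases (S.filter (fun i => f i = (t, b))).eq_empty_or_nonempty with he | hne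
      · rw [he]; simp
      obtain ⟨i, hi, hmax⟩ := Finset.exists_max_image _ (fun j => ‖z j - c‖) hne
      refine card_le_of_close ρ z x hρ hx _ i ?_
      intro j hj hji
      obtain ⟨hiS, hif⟩ := Finset.mem_filter.mp hi
      obtain ⟨hjS, hjf⟩ := Finset.mem_filter.mp hj
      have hm : ‖z j - c‖ ≤ ‖z i - c‖ := hmax j hj
      obtain ⟨hit, hib⟩ := Prod.mk.inj hif
      obtain ⟨hjt, hjb⟩ := Prod.mk.inj hjf
      have di := hg _ (hw i)
      have dj := hg _ (hw j)
      rw [hit] at di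
      rw [hjt] at dj
      have e : dist (z i) (z j) = dist (z i - c) (z j - c) := (dist_sub_right _ _ _).symm
      have hi1 := hS1 i hiS
      have hi2 := hS2 i hiS
      rw [← hib] at hjb
      have hiff : (2 * rB < ‖z j - c‖) ↔ (2 * rB < ‖z i - c‖) := by simpa using hjb
      by_cases hb : 2 * rB < ‖z i - c‖
      · have hb' := hiff.mpr hb
        simp only [w, if_pos hb] at di
        simp only [w, if_pos hb'] at dj
        have := far_dist _ _ t (by linarith) hm di dj
        rw [e]; linarith
      · have hb' := fun h => hb (hiff.mp h)
        simp only [w, if_neg hb] at di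
        simp only [w, if_neg hb'] at dj
        rcases hrB.eq_or_lt with h0 | h0
        · exfalso
          apply hji
          apply hz
          have a1 : z i - c = 0 := by
            rw [← norm_le_zero_iff]; linarith
          have a2 : z j - c = 0 := by
            rw [← norm_le_zero_iff]; linarith
          exact (sub_left_inj (a := c)).mp (a2.trans a1.symm)
        · have h3 := dist_triangle_right (rB⁻¹ • (z i - c)) (rB⁻¹ • (z j - c)) t
          rw [dist_smul₀, norm_inv, Real.norm_of_nonneg hrB] at h3
          have h4 : rB⁻¹ * dist (z i - c) (z j - c) < 1 := by linarith
          rw [inv_mul_lt_iff₀ h0] at h4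
          rw [e]; linarith
  nlinarith
end

section
/- For every integer d ≥ 1 there exists a constant K = K(d) > 0 with the following property. Let ρ ≥ 0, let Z = (z_1, …, z_n) be a non-overlapping configuration of n entities of radius ρ in ℝ^d with pairwise distinct centers, and let 1 ≤ x ≤ n−1 be an integer. Then for every index j, the number of indices i such that the entity e_j (the closed ball of center z_j and radius ρ) intersects the x-ball B_i(x) is at most K·x. -/
open Metric Set

lemma aux_sep {d n : ℕ} (ρ : ℝ) (z : Fin n → EuclideanSpace ℝ (Fin d)) (x : ℕ) (hx : 1 ≤ x)
    (i : Fin n) (D : ℝ) (h : D - 2 * ρ ≤ xSep ρ z x i) :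
    {k : Fin n | k ≠ i ∧ dist (z i) (z k) < D}.ncard < x := by
  by_contra hc
  push Not at hc
  set T := {k : Fin n | k ≠ i ∧ dist (z i) (z k) < D} with hT
  have hTne : T.Nonempty := by
    rw [← Set.ncard_pos]; omega
  obtain ⟨m, hm, hmax⟩ := Set.exists_max_image T (fun k => dist (z i) (z k)) (Set.toFinite _) hTne
  have hle : xSep ρ z x i ≤ dist (z i) (z m) - 2 * ρ := by
    unfold xSep
    apply csInf_le
    · refine ⟨-2 * ρ, ?_⟩
      intro r hr
      have hr' : x ≤ {j : Fin n | j ≠ i ∧ dist (z i) (z j) - 2 * ρ ≤ r}.ncard := hr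
      have : {j : Fin n | j ≠ i ∧ dist (z i) (z j) - 2 * ρ ≤ r}.Nonempty := by
        rw [← Set.ncard_pos]; omega
      obtain ⟨j, _, hj⟩ := this
      have := dist_nonneg (x := z i) (y := z j)
      linarith
    · refine le_trans hc (Set.ncard_le_ncard ?_ (Set.toFinite _))
      intro k hk
      refine ⟨hk.1, ?_⟩
      have := hmax k hk
      linarith
  have := hm.2
  linarith

lemma aux_geom {E : Type*} [NormedAddCommGroup E] [NormedSpace ℝ E] (v w : E) (hw : w ≠ 0)
    (hvw : ‖w‖ ≤ ‖v‖) (h : ‖(‖v‖⁻¹ • v) - (‖w‖⁻¹ • w)‖ < 1) : ‖v - w‖ < ‖v‖ := by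
  have hb : 0 < ‖w‖ := norm_pos_iff.mpr hw
  have ha : 0 < ‖v‖ := lt_of_lt_of_le hb hvw
  have e : v - w = (‖v‖ - ‖w‖) • (‖v‖⁻¹ • v) + ‖w‖ • ((‖v‖⁻¹ • v) - (‖w‖⁻¹ • w)) := by
    rw [smul_sub, sub_smul, smul_inv_smul₀ ha.ne', smul_inv_smul₀ hb.ne']
    abel
  have hu : ‖(‖v‖⁻¹ • v)‖ = 1 := by
    rw [norm_smul, norm_inv, norm_norm, inv_mul_cancel₀ ha.ne']
  calc ‖v - w‖ ≤ ‖(‖v‖ - ‖w‖) • (‖v‖⁻¹ • v)‖ + ‖‖w‖ • ((‖v‖⁻¹ • v) - (‖w‖⁻¹ • w))‖ := by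
        conv_lhs => rw [e]
        exact norm_add_le _ _
    _ = (‖v‖ - ‖w‖) + ‖w‖ * ‖(‖v‖⁻¹ • v) - (‖w‖⁻¹ • w)‖ := by
        rw [norm_smul (‖v‖ - ‖w‖), norm_smul ‖w‖, hu, norm_norm, Real.norm_of_nonneg (by linarith), mul_one]
    _ < ‖v‖ := by nlinarith

theorem stmt1 (d : ℕ) (hd : 1 ≤ d) :
    ∃ K : ℕ, 0 < K ∧
      ∀ (n : ℕ) (ρ : ℝ) (z : Fin n → EuclideanSpace ℝ (Fin d)) (x : ℕ),
        0 ≤ ρ →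
        Function.Injective z →
        (∀ i j : Fin n, i ≠ j → 2 * ρ ≤ dist (z i) (z j)) →
        1 ≤ x → x ≤ n - 1 →
        ∀ j : Fin n,
          {i : Fin n |
              (closedBall (z j) ρ ∩ closedBall (z i) (ρ + xSep ρ z x i)).Nonempty}.ncard
            ≤ K * x := by
  classical
  obtain ⟨t, -, htf, hcov⟩ := (isCompact_sphere (0 : EuclideanSpace ℝ (Fin d)) 1).finite_cover_balls
    (e := 1 / 2) (by norm_num)
  lift t to Finset (EuclideanSpace ℝ (Fin d)) using htf
  refine ⟨t.card + 1, by omega, ?_⟩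
  intro n ρ z x hρ hz _ hx _ j
  let u : Fin n → EuclideanSpace ℝ (Fin d) := fun i => ‖z i - z j‖⁻¹ • (z i - z j)
  have hne : ∀ i, i ≠ j → z i - z j ≠ 0 := fun i hi => sub_ne_zero.mpr (fun h => hi (hz h))
  have hex : ∀ i, ∃ c, i ≠ j → c ∈ t ∧ dist (u i) c < 1 / 2 := by
    intro i
    by_cases hi : i = j
    · exact ⟨0, fun h => absurd hi h⟩
    · have : u i ∈ sphere (0 : EuclideanSpace ℝ (Fin d)) 1 := by
        rw [mem_sphere_zero_iff_norm]
        simp only [u]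
        rw [norm_smul, norm_inv, norm_norm, inv_mul_cancel₀ (norm_ne_zero_iff.mpr (hne i hi))]
      have := hcov this
      simp only [mem_iUnion, mem_ball] at this
      obtain ⟨c, hc, hd⟩ := this
      exact ⟨c, fun _ => ⟨by simpa using hc, hd⟩⟩
  choose f hf using hex
  set A := {i : Fin n |
      (closedBall (z j) ρ ∩ closedBall (z i) (ρ + xSep ρ z x i)).Nonempty} with hA
  have hcnt : ∀ i ∈ A, {k : Fin n | k ≠ i ∧ dist (z i) (z k) < dist (z i) (z j)}.ncard < x := by
    intro i hi
    obtain ⟨y, hy1, hy2⟩ := hi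
    apply aux_sep ρ z x hx
    rw [mem_closedBall] at hy1 hy2
    have := dist_triangle_left (z i) (z j) y
    linarith
  have key : ((A.toFinset).erase j).card ≤ x * t.card := by
    apply Finset.card_le_mul_card_image_of_maps_to (f := f)
    · intro i hi
      exact (hf i (Finset.ne_of_mem_erase hi)).1
    · intro c _
      set C := ((A.toFinset).erase j).filter (fun i => f i = c) with hC
      rcases C.eq_empty_or_nonempty with h0 | hCne
      · rw [h0]; simp
      obtain ⟨m, hm, hmax⟩ := C.exists_max_image (fun i => ‖z i - z j‖) hCne
      have hmem : ∀ k ∈ C, k ≠ j ∧ k ∈ A ∧ f k = c := by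
        intro k hk
        simp only [hC, Finset.mem_filter, Finset.mem_erase, Set.mem_toFinset] at hk
        exact ⟨hk.1.1, hk.1.2, hk.2⟩
      obtain ⟨hmj, hmA, hmc⟩ := hmem m hm
      have h1 := hcnt m hmA
      have h2 : (C.erase m).card ≤
          {k : Fin n | k ≠ m ∧ dist (z m) (z k) < dist (z m) (z j)}.ncard := by
        rw [← Set.ncard_coe_finset]
        refine Set.ncard_le_ncard ?_ (Set.toFinite _)
        intro k hk
        have hk' := Finset.mem_erase.mp (Finset.mem_coe.mp hk)
        obtain ⟨hkj, hkA, hkc⟩ := hmem k hk'.2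
        refine ⟨hk'.1, ?_⟩
        have hum := (hf m hmj).2
        have huk := (hf k hkj).2
        rw [hmc] at hum
        rw [hkc] at huk
        have hd := dist_triangle_right (u m) (u k) c
        have := aux_geom (z m - z j) (z k - z j) (hne k hkj) (hmax k hk'.2)
          (by rw [← dist_eq_norm]; change dist (u m) (u k) < 1; linarith)
        rw [dist_eq_norm, dist_eq_norm]
        simpa using this
      rw [Finset.card_erase_of_mem hm] at h2
      omega
  rw [Set.ncard_eq_toFinset_card']
  have := Finset.pred_card_le_card_erase (s := A.toFinset) (a := j)
  have h3 : A.toFinset.card ≤ x * t.card + 1 := by omega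
  refine h3.trans ?_
  nlinarith
end

section
/- Let Z = (z_1, …, z_n) be a non-overlapping configuration of n entities of radius ρ ≥ 0 in ℝ^d, let 1 ≤ x ≤ n−1 be an integer, and let E be any subset of the entities. Then there exists a subset I ⊆ E with x·|I| ≥ |E| such that for all distinct entities e_i, e_j ∈ I one has ‖z_i − z_j‖ ≥ max{r_i(x), r_j(x)} + ρ. -/
open Metric Set

/-- Fewer than `x` entities are strictly closer than the `x`-separation. -/
theorem few_close {d n : ℕ} (ρ : ℝ)
    (z : Fin n → EuclideanSpace ℝ (Fin d))
    (hsep : ∀ i j : Fin n, i ≠ j → 2 * ρ ≤ dist (z i) (z j))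
    (x : ℕ) (hx1 : 1 ≤ x) (i : Fin n) :
    (Finset.univ.filter (fun j : Fin n => j ≠ i ∧
      dist (z i) (z j) - 2 * ρ < xSep ρ z x i)).card < x := by
  by_contra hcon
  push Not at hcon
  set S := Finset.univ.filter (fun j : Fin n => j ≠ i ∧
      dist (z i) (z j) - 2 * ρ < xSep ρ z x i) with hS
  have hne : S.Nonempty := Finset.card_pos.mp (by omega)
  obtain ⟨m, hm, hmax⟩ := S.exists_max_image (fun j => dist (z i) (z j) - 2 * ρ) hne
  have hm2 := (Finset.mem_filter.mp hm).2.2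
  have hbdd : BddBelow {r : ℝ | x ≤ {j : Fin n | j ≠ i ∧ dist (z i) (z j) - 2 * ρ ≤ r}.ncard} := by
    refine ⟨0, fun r hr => ?_⟩
    have hr' : x ≤ {j : Fin n | j ≠ i ∧ dist (z i) (z j) - 2 * ρ ≤ r}.ncard := hr
    obtain ⟨j, hj1, hj2⟩ := Set.nonempty_of_ncard_ne_zero
      (s := {j : Fin n | j ≠ i ∧ dist (z i) (z j) - 2 * ρ ≤ r}) (by omega)
    have := hsep i j (Ne.symm hj1)
    linarith
  have hle : xSep ρ z x i ≤ dist (z i) (z m) - 2 * ρ := by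
    refine csInf_le hbdd ?_
    show x ≤ Set.ncard _
    refine hcon.trans ?_
    rw [← Set.ncard_coe_finset]
    refine Set.ncard_le_ncard ?_ (Set.toFinite _)
    intro j hj
    have hj' : j ∈ S := hj
    exact ⟨(Finset.mem_filter.mp hj').2.1, hmax j hj'⟩
  linarith

theorem stmt2 (d n : ℕ) (ρ : ℝ) (hρ : 0 ≤ ρ)
    (z : Fin n → EuclideanSpace ℝ (Fin d))
    (hsep : ∀ i j : Fin n, i ≠ j → 2 * ρ ≤ dist (z i) (z j))
    (x : ℕ) (hx1 : 1 ≤ x) (hxn : x ≤ n - 1)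
    (E : Finset (Fin n)) :
    ∃ I ⊆ E, E.card ≤ x * I.card ∧
      ∀ i ∈ I, ∀ j ∈ I, i ≠ j →
        max (ρ + xSep ρ z x i) (ρ + xSep ρ z x j) + ρ ≤ dist (z i) (z j) := by
  induction E using Finset.strongInduction with
  | H E ih =>
    rcases E.eq_empty_or_nonempty with rfl | hne
    · exact ⟨∅, by simp⟩
    obtain ⟨i, hi, hmax⟩ := E.exists_max_image (fun j => xSep ρ z x j) hne
    set F := E.filter (fun j => j ≠ i ∧ xSep ρ z x i ≤ dist (z i) (z j) - 2 * ρ) with hF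
    have hFE : F ⊆ E := Finset.filter_subset _ _
    have hiF : i ∉ F := by simp [hF]
    obtain ⟨I, hIF, hc, hI⟩ := ih F ((Finset.ssubset_iff_of_subset hFE).2 ⟨i, hi, hiF⟩)
    have hiI : i ∉ I := fun h => hiF (hIF h)
    have key : ∀ j ∈ I, max (xSep ρ z x i) (xSep ρ z x j) ≤ dist (z i) (z j) - 2 * ρ := by
      intro j hj
      have h := (Finset.mem_filter.mp (hIF hj))
      exact max_le h.2.2 ((hmax j h.1).trans h.2.2)
    refine ⟨insert i I, Finset.insert_subset hi (hIF.trans hFE), ?_, ?_⟩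
    · rw [Finset.card_insert_of_notMem hiI]
      have hfew := few_close ρ z hsep x hx1 i
      set S := Finset.univ.filter (fun j : Fin n => j ≠ i ∧
        dist (z i) (z j) - 2 * ρ < xSep ρ z x i) with hS
      have hsub : E ⊆ F ∪ insert i S := by
        intro j hj
        by_cases hji : j = i
        · simp [hji]
        · rcases le_or_gt (xSep ρ z x i) (dist (z i) (z j) - 2 * ρ) with h | h
          · exact Finset.mem_union_left _ (Finset.mem_filter.mpr ⟨hj, hji, h⟩)
          · exact Finset.mem_union_right _ (Finset.mem_insert_of_mem
              (Finset.mem_filter.mpr ⟨Finset.mem_univ _, hji, h⟩))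
      have h1 := Finset.card_le_card hsub
      have h2 := Finset.card_union_le F (insert i S)
      have h3 := Finset.card_insert_le i S
      rw [mul_add, mul_one]
      omega
    · intro a ha b hb hab
      rcases Finset.mem_insert.mp ha with rfl | ha'
      · rcases Finset.mem_insert.mp hb with rfl | hb'
        · exact absurd rfl hab
        · have h := max_le_iff.mp (key b hb')
          have := max_le (a := ρ + xSep ρ z x a) (b := ρ + xSep ρ z x b)
            (c := dist (z a) (z b) - ρ) (by linarith [h.1]) (by linarith [h.2])
          linarith
      · rcases Finset.mem_insert.mp hb with rfl | hb'
        · have h := max_le_iff.mp (key a ha')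
          rw [dist_comm]
          have := max_le (a := ρ + xSep ρ z x a) (b := ρ + xSep ρ z x b)
            (c := dist (z b) (z a) - ρ) (by linarith [h.2]) (by linarith [h.1])
          linarith
        · exact hI a ha' b hb' hab
end

section
/- Let Z = (z_1, …, z_n) be any configuration of n entities of radius ρ ≥ 0 in ℝ^d and let 1 ≤ x ≤ n−1 be an integer. Then for all indices i ≠ j, σ_j(x) ≤ ‖z_i − z_j‖ + σ_i(x); that is, the x-separation is 1-Lipschitz as a function of the entity's center. -/
open Metric Set

theorem stmt3 (d n : ℕ) (ρ : ℝ) (hρ : 0 ≤ ρ)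
    (z : Fin n → EuclideanSpace ℝ (Fin d))
    (x : ℕ) (hx1 : 1 ≤ x) (hxn : x ≤ n - 1) :
    ∀ i j : Fin n, i ≠ j → xSep ρ z x j ≤ dist (z i) (z j) + xSep ρ z x i := by
  intro i j hij
  have hne : {r : ℝ | x ≤ {k : Fin n | k ≠ i ∧ dist (z i) (z k) - 2 * ρ ≤ r}.ncard}.Nonempty := by
    refine ⟨∑ k, dist (z i) (z k), ?_⟩
    have h : {k : Fin n | k ≠ i ∧ dist (z i) (z k) - 2 * ρ ≤ ∑ k, dist (z i) (z k)}
        = ({i} : Set (Fin n))ᶜ := by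
      ext k
      have := Finset.single_le_sum (f := fun k => dist (z i) (z k)) (s := Finset.univ)
        (fun _ _ => dist_nonneg) (Finset.mem_univ k)
      simp only [mem_setOf_eq, mem_compl_iff, mem_singleton_iff]
      constructor
      · exact fun h => h.1
      · intro h
        refine ⟨h, ?_⟩
        linarith
    rw [mem_setOf_eq, h, Set.ncard_compl]
    simpa using hxn
  have hbdd : BddBelow {r : ℝ | x ≤ {k : Fin n | k ≠ j ∧ dist (z j) (z k) - 2 * ρ ≤ r}.ncard} := by
    refine ⟨-2 * ρ, ?_⟩
    intro r hr
    rw [mem_setOf_eq] at hr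
    obtain ⟨k, -, hk⟩ := Set.nonempty_of_ncard_ne_zero (by omega :
      {k : Fin n | k ≠ j ∧ dist (z j) (z k) - 2 * ρ ≤ r}.ncard ≠ 0)
    have := dist_nonneg (x := z j) (y := z k)
    linarith
  rw [← sub_le_iff_le_add']
  refine le_csInf hne ?_
  intro r hr
  rw [sub_le_iff_le_add']
  refine csInf_le hbdd ?_
  rw [mem_setOf_eq] at hr ⊢
  refine hr.trans (Set.ncard_le_ncard_of_injOn (Equiv.swap i j) ?_
    (Equiv.swap i j).injective.injOn (Set.toFinite _))
  rintro k ⟨hki, hk⟩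
  by_cases hkj : k = j
  · subst hkj
    rw [Equiv.swap_apply_right]
    refine ⟨hij, ?_⟩
    have := dist_nonneg (x := z i) (y := z k)
    rw [dist_comm (z k)]
    linarith
  · rw [Equiv.swap_apply_of_ne_of_ne hki hkj]
    refine ⟨hkj, ?_⟩
    have := dist_triangle (z j) (z i) (z k)
    rw [dist_comm (z j) (z i)] at this
    linarith
end

section
/- Let Z = (z_1, …, z_n) be a non-overlapping configuration of n entities of radius ρ ≥ 0 in ℝ^d and let 1 ≤ x ≤ n−1 be an integer. Then σ_i(x) ≥ c_{d,x}·ρ for every index i. -/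
open Metric Set

/-- `sepConst d x` is `c_{d,x}`: the infimum of all `c ≥ 0` for which there exist `x` closed
unit balls in `ℝ^d` with pairwise disjoint interiors, one of them distinguished, such that
every one of the `x` balls has its center at distance at most `2 + c` from the center of the
distinguished ball. -/
noncomputable def sepConst (d x : ℕ) : ℝ :=
  sInf {c : ℝ | 0 ≤ c ∧ ∃ z : Fin x → EuclideanSpace ℝ (Fin d),
    (∀ i j : Fin x, i ≠ j →
      Disjoint (interior (closedBall (z i) 1)) (interior (closedBall (z j) 1))) ∧
    ∃ i0 : Fin x, ∀ j : Fin x, dist (z j) (z i0) ≤ 2 + c}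

theorem stmt5 (d n : ℕ) (hd : 1 ≤ d) (ρ : ℝ) (hρ : 0 ≤ ρ)
    (z : Fin n → EuclideanSpace ℝ (Fin d))
    (hsep : ∀ i j : Fin n, i ≠ j → 2 * ρ ≤ dist (z i) (z j))
    (x : ℕ) (hx1 : 1 ≤ x) (hxn : x ≤ n - 1) :
    ∀ i : Fin n, sepConst d x * ρ ≤ xSep ρ z x i := by
  intro i
  have hcard : ({j : Fin n | j ≠ i} : Set (Fin n)).ncard = n - 1 := by
    have h : ({j : Fin n | j ≠ i} : Set (Fin n)) = ((Finset.univ.erase i : Finset (Fin n)) : Set (Fin n)) := by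
      ext j; simp
    rw [h, Set.ncard_coe_finset, Finset.card_erase_of_mem (Finset.mem_univ i), Finset.card_univ,
      Fintype.card_fin]
  unfold xSep
  apply le_csInf
  · refine ⟨∑ j, dist (z i) (z j), ?_⟩
    have h : {j : Fin n | j ≠ i ∧ dist (z i) (z j) - 2 * ρ ≤ ∑ j, dist (z i) (z j)}
        = {j : Fin n | j ≠ i} := by
      ext j
      simp only [Set.mem_ofPred_eq, and_iff_left_iff_imp]
      intro _
      have := Finset.single_le_sum (f := fun j => dist (z i) (z j))
        (fun k _ => dist_nonneg) (Finset.mem_univ j)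
      linarith
    show x ≤ _
    rw [h, hcard]
    exact hxn
  · intro r hr
    have hr' : x ≤ {j : Fin n | j ≠ i ∧ dist (z i) (z j) - 2 * ρ ≤ r}.ncard := hr
    obtain ⟨T, hTS, hT⟩ := Set.exists_subset_card_eq hr'
    have hTc : Nat.card T = x := hT
    let e : Fin x ≃ T := (Finite.equivFinOfCardEq hTc).symm
    let k0 : Fin x := ⟨0, hx1⟩
    have hmem : ∀ k, (e k : Fin n) ≠ i ∧ dist (z i) (z (e k)) - 2 * ρ ≤ r :=
      fun k => hTS (e k).2
    have hr0 : 0 ≤ r := by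
      have h1 := hmem k0
      have h2 := hsep i (e k0) h1.1.symm
      linarith [h1.2]
    rcases hρ.eq_or_lt with h0 | hpos
    · rw [← h0, mul_zero]; exact hr0
    rw [← le_div_iff₀ hpos]
    unfold sepConst
    apply csInf_le ⟨0, fun c hc => hc.1⟩
    let g : Fin x → Fin n := fun k => if k = k0 then i else e k
    have hg0 : g k0 = i := by simp [g]
    have hg1 : ∀ k, k ≠ k0 → g k = e k := fun k hk => by simp [g, hk]
    have hinj : Function.Injective g := by
      intro a b hab
      by_cases ha : a = k0 <;> by_cases hb : b = k0
      · rw [ha, hb]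
      · rw [ha, hg0, hg1 b hb] at hab
        exact absurd hab.symm (hmem b).1
      · rw [hb, hg0, hg1 a ha] at hab
        exact absurd hab (hmem a).1
      · rw [hg1 a ha, hg1 b hb] at hab
        exact e.injective (Subtype.ext hab)
    have hdist : ∀ a b, dist (ρ⁻¹ • z a) (ρ⁻¹ • z b) = dist (z a) (z b) / ρ := by
      intro a b
      rw [dist_smul₀, Real.norm_of_nonneg (inv_nonneg.2 hρ), div_eq_inv_mul]
    refine ⟨div_nonneg hr0 hρ, fun k => ρ⁻¹ • z (g k), ?_, k0, ?_⟩
    · intro a b hab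
      rw [interior_closedBall _ one_ne_zero, interior_closedBall _ one_ne_zero]
      apply ball_disjoint_ball
      rw [hdist, le_div_iff₀ hpos]
      have := hsep _ _ (hinj.ne hab)
      linarith
    · intro k
      have h2 : 2 + r / ρ = (2 * ρ + r) / ρ := by field_simp
      rw [hdist, hg0, h2]
      apply div_le_div_of_nonneg_right _ hρ
      by_cases hk : k = k0
      · rw [hk, hg0, dist_self]; positivity
      · rw [hg1 k hk, dist_comm]
        linarith [(hmem k).2]
end

section
/- Let Z = (z_1, …, z_n) be a configuration of n entities of radius ρ ≥ 0 in ℝ^d, let 1 ≤ x ≤ n−1 be an integer, let i ≠ j be indices, and set s := ‖z_i − z_j‖ − 2ρ. If s ≥ σ_i(x) and ρ ≤ ((1−λ)/λ)·s for some real 0 < λ ≤ 1, then σ_i(x) + σ_j(x) ≤ ((λ+2)/λ)·s; equivalently, (λ/(λ+2))·(σ_i(x) + σ_j(x)) ≤ s. -/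
open Metric Set

theorem stmt6 (d n : ℕ) (ρ : ℝ) (hρ : 0 ≤ ρ)
    (z : Fin n → EuclideanSpace ℝ (Fin d))
    (x : ℕ) (hx1 : 1 ≤ x) (hxn : x ≤ n - 1)
    (i j : Fin n) (hij : i ≠ j)
    (lam : ℝ) (hlam0 : 0 < lam) (hlam1 : lam ≤ 1)
    (hs : xSep ρ z x i ≤ dist (z i) (z j) - 2 * ρ)
    (hρs : ρ ≤ ((1 - lam) / lam) * (dist (z i) (z j) - 2 * ρ)) :
    xSep ρ z x i + xSep ρ z x j ≤
      ((lam + 2) / lam) * (dist (z i) (z j) - 2 * ρ) := by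
  have key : xSep ρ z x j - (dist (z i) (z j) - 2 * ρ) - 2 * ρ ≤ xSep ρ z x i := by
    refine le_csInf ?_ ?_
    · refine ⟨(∑ k, dist (z i) (z k)) - 2 * ρ, ?_⟩
      have h : {k : Fin n | k ≠ i ∧ dist (z i) (z k) - 2 * ρ ≤
          (∑ k, dist (z i) (z k)) - 2 * ρ} = ({i} : Set (Fin n))ᶜ := by
        ext k
        have := Finset.single_le_sum (f := fun k => dist (z i) (z k))
          (fun k _ => dist_nonneg) (Finset.mem_univ k)
        simp only [Set.mem_setOf_eq, Set.mem_compl_iff, Set.mem_singleton_iff]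
        exact ⟨fun h => h.1, fun h => ⟨h, by linarith⟩⟩
      rw [Set.mem_setOf_eq, h, Set.ncard_compl]
      simpa using hxn
    · intro r hr
      rw [Set.mem_setOf_eq] at hr
      have hb : BddBelow {r : ℝ | x ≤ {k : Fin n | k ≠ j ∧
          dist (z j) (z k) - 2 * ρ ≤ r}.ncard} := by
        refine ⟨-2 * ρ, fun t ht => ?_⟩
        rw [Set.mem_setOf_eq] at ht
        obtain ⟨k, hk⟩ := Set.nonempty_of_ncard_ne_zero (by omega :
          {k : Fin n | k ≠ j ∧ dist (z j) (z k) - 2 * ρ ≤ t}.ncard ≠ 0)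
        have := hk.2
        have := dist_nonneg (x := z j) (y := z k)
        linarith
      have h2 : xSep ρ z x j ≤ r + dist (z i) (z j) := by
        refine csInf_le hb ?_
        rw [Set.mem_setOf_eq]
        refine hr.trans (Set.ncard_le_ncard_of_injOn (Equiv.swap i j) ?_
          (Equiv.swap i j).injective.injOn (Set.toFinite _))
        rintro k ⟨hk, hkr⟩
        have h0 := dist_nonneg (x := z i) (y := z k)
        by_cases hkj : k = j
        · subst hkj
          rw [Equiv.swap_apply_right]
          refine ⟨hij, ?_⟩
          rw [dist_comm]
          linarith
        · rw [Equiv.swap_apply_of_ne_of_ne hk hkj]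
          refine ⟨hkj, ?_⟩
          have := dist_triangle (z j) (z i) (z k)
          rw [dist_comm (z j) (z i)] at this
          linarith
      linarith
  have e1 : (1 - lam) / lam = 1 / lam - 1 := by field_simp
  have e2 : (lam + 2) / lam = 1 + 2 * (1 / lam) := by field_simp
  rw [e1] at hρs
  rw [e2]
  nlinarith
end

section
/- For every integer d ≥ 1 there exists a constant K = K(d) > 0 with the following property. Let Z = (z_1, …, z_n) be a stationary non-overlapping configuration of n entities of radius ρ ≥ 0 in ℝ^d with pairwise distinct centers, let 1 ≤ x < y ≤ n−1 be integers, assume σ_i(y) > 0 for all i, and set H := Σ_{i=1}^n 1/r_i(y). Let T be a bounded time interval of length |T| with |T|·H ≥ 2n. Then every query schedule whose uncertainty ply is at most x at every time of T makes at least ((y − x + 1)/(K·y))·|T|·H queries during T. -/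
open Metric Set
open scoped ENNReal

open Classical in
/-- The uncertainty region at time `t` of a stationary entity of radius `ρ` centered at `z`
with query-time set `Q`: the closed ball about `z` of radius `ρ + (t - p(t))` where `p(t)` is
the last query time at or before `t`, and all of space if there is no query time before `t`. -/
noncomputable def uRegion {d : ℕ} (ρ : ℝ) (z : EuclideanSpace ℝ (Fin d))
    (Q : Set ℝ) (t : ℝ) : Set (EuclideanSpace ℝ (Fin d)) :=
  if (Q ∩ Set.Iic t).Nonempty then
    closedBall z (ρ + (t - sSup (Q ∩ Set.Iic t)))
  else Set.univ

open Filter Topology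

lemma xSep_lt_card {d n : ℕ} (ρ : ℝ) (z : Fin n → EuclideanSpace ℝ (Fin d))
    (y : ℕ) (hy : 1 ≤ y) (i : Fin n) :
    {j : Fin n | j ≠ i ∧ dist (z i) (z j) - 2 * ρ < xSep ρ z y i}.ncard < y := by
  by_contra! h
  have hev : ∀ᶠ r in 𝓝[<] (xSep ρ z y i), ∀ j : Fin n,
      dist (z i) (z j) - 2 * ρ < xSep ρ z y i → dist (z i) (z j) - 2 * ρ ≤ r := by
    rw [eventually_all]
    intro j
    by_cases hj : dist (z i) (z j) - 2 * ρ < xSep ρ z y i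
    · have := Ioo_mem_nhdsLT hj
      filter_upwards [this] with r hr _ using hr.1.le
    · exact Eventually.of_forall fun r h => absurd h hj
  obtain ⟨r, hr, hrs⟩ := (hev.and self_mem_nhdsWithin).exists
  have hmem : r ∈ {r : ℝ | y ≤ {j : Fin n | j ≠ i ∧ dist (z i) (z j) - 2 * ρ ≤ r}.ncard} := by
    refine h.trans (Set.ncard_le_ncard ?_ (Set.toFinite _))
    rintro j ⟨h1, h2⟩
    exact ⟨h1, hr j h2⟩
  have hb : BddBelow {r : ℝ | y ≤ {j : Fin n | j ≠ i ∧ dist (z i) (z j) - 2 * ρ ≤ r}.ncard} := by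
    refine ⟨- (2 * ρ), ?_⟩
    intro r hr
    have : 0 < {j : Fin n | j ≠ i ∧ dist (z i) (z j) - 2 * ρ ≤ r}.ncard := lt_of_lt_of_le hy hr
    obtain ⟨j, hj⟩ := (Set.ncard_pos (Set.toFinite _)).1 this
    have := hj.2
    have := dist_nonneg (x := z i) (y := z j)
    linarith
  have : xSep ρ z y i ≤ r := csInf_le hb hmem
  exact absurd hrs (not_lt.2 this)

lemma xSep_le_card {d n : ℕ} (ρ : ℝ) (z : Fin n → EuclideanSpace ℝ (Fin d))
    (y : ℕ) (hyn : y ≤ n - 1) (i : Fin n) :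
    y ≤ {j : Fin n | j ≠ i ∧ dist (z i) (z j) - 2 * ρ ≤ xSep ρ z y i}.ncard := by
  have hev : ∀ᶠ r in 𝓝[≥] (xSep ρ z y i), ∀ j : Fin n,
      dist (z i) (z j) - 2 * ρ ≤ r → dist (z i) (z j) - 2 * ρ ≤ xSep ρ z y i := by
    rw [eventually_all]
    intro j
    by_cases hj : xSep ρ z y i < dist (z i) (z j) - 2 * ρ
    · have := Ico_mem_nhdsGE hj
      filter_upwards [this] with r hr h using absurd hr.2 (not_lt.2 h)
    · exact Eventually.of_forall fun r h => not_lt.1 hj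
  obtain ⟨u, hu, hsub⟩ := mem_nhdsGE_iff_exists_Ico_subset.1 hev
  have hne : {r : ℝ | y ≤ {j : Fin n | j ≠ i ∧ dist (z i) (z j) - 2 * ρ ≤ r}.ncard}.Nonempty := by
    refine ⟨∑ j, dist (z i) (z j) - 2 * ρ, ?_⟩
    have : {j : Fin n | j ≠ i ∧ dist (z i) (z j) - 2 * ρ ≤ ∑ j, dist (z i) (z j) - 2 * ρ}
        = ((Finset.univ.erase i : Finset (Fin n)) : Set (Fin n)) := by
      ext j
      have := Finset.single_le_sum (f := fun j => dist (z i) (z j))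
        (fun j _ => dist_nonneg) (Finset.mem_univ j)
      simp only [Set.mem_ofPred_eq, Finset.coe_erase, Finset.coe_univ, Set.mem_sdiff,
        Set.mem_univ, true_and, Set.mem_singleton_iff]
      constructor
      · exact fun h => h.1
      · intro h
        refine ⟨h, ?_⟩
        linarith
    rw [Set.mem_ofPred_eq, this, Set.ncard_coe_finset, Finset.card_erase_of_mem (Finset.mem_univ _)]
    simpa using hyn
  by_contra! h
  have hle : u ≤ xSep ρ z y i := by
    refine le_csInf hne ?_
    intro r hr
    by_contra! hru
    have hrs : xSep ρ z y i ≤ r ∨ r < xSep ρ z y i := le_or_gt _ _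
    have hs : {j : Fin n | j ≠ i ∧ dist (z i) (z j) - 2 * ρ ≤ r} ⊆
        {j : Fin n | j ≠ i ∧ dist (z i) (z j) - 2 * ρ ≤ xSep ρ z y i} := by
      rintro j ⟨h1, h2⟩
      refine ⟨h1, ?_⟩
      rcases hrs with hrs | hrs
      · exact hsub ⟨hrs, hru⟩ j h2
      · exact h2.trans hrs.le
    have := Set.ncard_le_ncard hs (Set.toFinite _)
    have hr' : y ≤ {j : Fin n | j ≠ i ∧ dist (z i) (z j) - 2 * ρ ≤ r}.ncard := hr
    omega
  exact absurd hu (not_lt.2 hle)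

lemma cone_lt {E : Type*} [NormedAddCommGroup E] [NormedSpace ℝ E] (v w : E) (hv : v ≠ 0)
    (hvw : ‖v‖ ≤ ‖w‖) (h : ‖(‖w‖⁻¹ • w) - (‖v‖⁻¹ • v)‖ < 1) : ‖w - v‖ < ‖w‖ := by
  have hv0 : 0 < ‖v‖ := norm_pos_iff.2 hv
  have hw0 : 0 < ‖w‖ := hv0.trans_le hvw
  have e : w - v = (‖w‖ - ‖v‖) • (‖w‖⁻¹ • w) + ‖v‖ • ((‖w‖⁻¹ • w) - (‖v‖⁻¹ • v)) := by
    rw [smul_sub, sub_smul, smul_smul ‖v‖ ‖v‖⁻¹, smul_smul ‖w‖ ‖w‖⁻¹, mul_inv_cancel₀ hv0.ne',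
      mul_inv_cancel₀ hw0.ne', one_smul, one_smul]
    module
  have h1 : ‖(‖w‖ - ‖v‖) • (‖w‖⁻¹ • w)‖ = ‖w‖ - ‖v‖ := by
    rw [norm_smul, norm_smul, norm_inv, norm_norm, inv_mul_cancel₀ hw0.ne', mul_one,
      Real.norm_of_nonneg (by linarith)]
  have h2 : ‖‖v‖ • ((‖w‖⁻¹ • w) - (‖v‖⁻¹ • v))‖ < ‖v‖ := by
    rw [norm_smul, norm_norm]
    nlinarith
  have h3 := norm_add_le ((‖w‖ - ‖v‖) • (‖w‖⁻¹ • w)) (‖v‖ • ((‖w‖⁻¹ • w) - (‖v‖⁻¹ • v)))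
  rw [← e] at h3
  linarith

lemma indegree {d n : ℕ} (S : Finset (EuclideanSpace ℝ (Fin d)))
    (hS : ∀ u : EuclideanSpace ℝ (Fin d), ‖u‖ = 1 → ∃ c ∈ S, dist u c < 1 / 2)
    (z : Fin n → EuclideanSpace ℝ (Fin d)) (hz : Function.Injective z) (y : ℕ) (hy : 1 ≤ y)
    (D : Fin n → ℝ) (hD : ∀ i, {j : Fin n | j ≠ i ∧ dist (z i) (z j) < D i}.ncard < y)
    (j : Fin n) :
    (Finset.univ.filter (fun i => dist (z i) (z j) ≤ D i)).card ≤ (S.card + 1) * y := by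
  classical
  set dir : Fin n → EuclideanSpace ℝ (Fin d) := fun i => ‖z i - z j‖⁻¹ • (z i - z j) with hdir
  set I : EuclideanSpace ℝ (Fin d) → Finset (Fin n) := fun c =>
    Finset.univ.filter (fun i => i ≠ j ∧ dist (z i) (z j) ≤ D i ∧ dist (dir i) c < 1 / 2) with hI
  have hcard : ∀ c, (I c).card ≤ y := by
    intro c
    rcases (I c).eq_empty_or_nonempty with h0 | h0
    · rw [h0]; simp
    obtain ⟨i, hi, hmax⟩ := Finset.exists_max_image (I c) (fun i => ‖z i - z j‖) h0
    have hi' := hi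
    simp only [hI, Finset.mem_filter, Finset.mem_univ, true_and] at hi'
    have hsub : ((I c).erase i : Set (Fin n)) ⊆ {k : Fin n | k ≠ i ∧ dist (z i) (z k) < D i} := by
      intro k hk
      simp only [Finset.coe_erase, Set.mem_sdiff, Finset.mem_coe, Set.mem_singleton_iff] at hk
      refine ⟨hk.2, ?_⟩
      have hk' := hk.1
      simp only [hI, Finset.mem_filter, Finset.mem_univ, true_and] at hk'
      have hlt := cone_lt (z k - z j) (z i - z j)
        (sub_ne_zero.2 (fun h => hk'.1 (hz h))) (hmax k hk.1) (by
          have := dist_triangle_right (dir i) (dir k) c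
          rw [dist_eq_norm] at this
          simp only [hdir] at this hi' hk' ⊢
          linarith [hi'.2.2, hk'.2.2])
      rw [sub_sub_sub_cancel_right, ← dist_eq_norm, ← dist_eq_norm] at hlt
      exact hlt.trans_le hi'.2.1
    have h1 := Set.ncard_le_ncard hsub (Set.toFinite _)
    have h2 := hD i
    rw [Set.ncard_coe_finset, Finset.card_erase_of_mem hi] at h1
    omega
  have hcov : Finset.univ.filter (fun i => dist (z i) (z j) ≤ D i) ⊆ {j} ∪ S.biUnion I := by
    intro i hi
    rw [Finset.mem_union]
    by_cases hij : i = j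
    · left; simp [hij]
    right
    simp only [Finset.mem_filter, Finset.mem_univ, true_and] at hi
    have hne : z i - z j ≠ 0 := sub_ne_zero.2 (fun h => hij (hz h))
    obtain ⟨c, hc, hdc⟩ := hS (dir i) (by
      simp only [hdir]
      rw [norm_smul, norm_inv, norm_norm, inv_mul_cancel₀ (norm_ne_zero_iff.2 hne)])
    rw [Finset.mem_biUnion]
    exact ⟨c, hc, by simp only [hI, Finset.mem_filter, Finset.mem_univ, true_and]; exact ⟨hij, hi, hdc⟩⟩
  calc _ ≤ _ := Finset.card_le_card hcov
    _ ≤ _ := Finset.card_union_le _ _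
    _ ≤ 1 + S.card * y := by
        gcongr
        · simp
        · exact Finset.card_biUnion_le_card_mul _ _ _ (fun c _ => hcard c)
    _ ≤ _ := by nlinarith

lemma windows_le {Q : Set ℝ} {a b r : ℝ} (hr : 0 < r) (m : ℕ) (hm : a + m * r ≤ b)
    (hfin : (Q ∩ Set.Icc a b).Finite) (W : Finset ℕ) (hW : W ⊆ Finset.range m)
    (hq : ∀ k ∈ W, ∃ s ∈ Q, a + k * r < s ∧ s ≤ a + (k + 1) * r) :
    W.card ≤ (Q ∩ Set.Icc a b).ncard := by
  choose! f hf using hq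
  rw [← Set.ncard_coe_finset]
  refine Set.ncard_le_ncard_of_injOn f ?_ ?_ hfin
  · intro k hk
    obtain ⟨h1, h2, h3⟩ := hf k hk
    have hkm : k + 1 ≤ m := Finset.mem_range.1 (hW hk)
    have hkm' : (k : ℝ) + 1 ≤ m := by exact_mod_cast hkm
    have hk0 : (0 : ℝ) ≤ k := Nat.cast_nonneg _
    refine ⟨h1, ?_, ?_⟩
    · nlinarith
    · nlinarith
  · have key : ∀ k ∈ W, ∀ l ∈ W, f k = f l → ¬ k < l := by
      intro k hk l hl h hkl
      obtain ⟨_, _, h3⟩ := hf k hk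
      obtain ⟨_, h2, _⟩ := hf l hl
      have : (k : ℝ) + 1 ≤ l := by exact_mod_cast hkl
      nlinarith
    intro k hk l hl h
    have h1 := key k hk l hl h
    have h2 := key l hl k hk h.symm
    omega

lemma recent_query {d : ℕ} {ρ : ℝ} {w q : EuclideanSpace ℝ (Fin d)} {Q : Set ℝ} {t r : ℝ}
    (hdist : dist q w ≤ ρ + r) (h : q ∉ uRegion ρ w Q t) : ∃ s ∈ Q, t - r < s ∧ s ≤ t := by
  unfold uRegion at h
  split_ifs at h with hne
  · rw [mem_closedBall, not_le] at h
    obtain ⟨s, hs, hlt⟩ := exists_lt_of_lt_csSup hne (show t - r < sSup (Q ∩ Set.Iic t) by linarith)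
    exact ⟨s, hs.1, hlt, hs.2⟩
  · exact absurd (Set.mem_univ _) h

lemma local_count {d n : ℕ} (ρ : ℝ) (z : Fin n → EuclideanSpace ℝ (Fin d)) (x y : ℕ)
    (a b : ℝ) (Q : Fin n → Set ℝ) (hxy : x < y) (hyn : y ≤ n - 1) (hρ : 0 ≤ ρ)
    (i : Fin n) (hs : 0 < xSep ρ z y i) (hab : a ≤ b)
    (hfin : ∀ j, (Q j ∩ Set.Icc a b).Finite)
    (hply : ∀ t ∈ Set.Icc a b, ∀ q : EuclideanSpace ℝ (Fin d),
          {i : Fin n | q ∈ uRegion ρ (z i) (Q i) t}.ncard ≤ x) :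
    ((b - a) * (1 / (ρ + xSep ρ z y i)) - 1) * ((y : ℝ) - x + 1) ≤
      ((∑ j ∈ Finset.univ.filter (fun j => dist (z i) (z j) ≤ xSep ρ z y i + 2 * ρ),
        (Q j ∩ Set.Icc a b).ncard : ℕ) : ℝ) := by
  classical
  set r := ρ + xSep ρ z y i with hr
  have hr0 : 0 < r := by linarith
  set m := ⌊(b - a) / r⌋₊ with hm
  set N := Finset.univ.filter (fun j => dist (z i) (z j) ≤ xSep ρ z y i + 2 * ρ) with hN
  have hmle : (m : ℝ) * r ≤ b - a := by
    have := Nat.floor_le (div_nonneg (sub_nonneg.2 hab) hr0.le)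
    rwa [le_div_iff₀ hr0] at this
  have hmgt : (b - a) * (1 / r) - 1 ≤ m := by
    have := Nat.lt_floor_add_one ((b - a) / r)
    rw [mul_one_div]; linarith
  have hNcard : y + 1 ≤ N.card := by
    have h1 := xSep_le_card ρ z y hyn i
    have hsub : {j : Fin n | j ≠ i ∧ dist (z i) (z j) - 2 * ρ ≤ xSep ρ z y i} ⊆
        ((N.erase i : Finset (Fin n)) : Set (Fin n)) := by
      rintro j ⟨h1, h2⟩
      simp only [Finset.mem_coe, Finset.mem_erase, hN, Finset.mem_filter, Finset.mem_univ, true_and]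
      exact ⟨h1, by linarith⟩
    have h2 := Set.ncard_le_ncard hsub (Set.toFinite _)
    have hi : i ∈ N := by
      simp only [hN, Finset.mem_filter, Finset.mem_univ, true_and, dist_self]; linarith
    rw [Set.ncard_coe_finset, Finset.card_erase_of_mem hi] at h2
    omega
  let P : Fin n → ℕ → Prop := fun j k => ∃ s ∈ Q j, a + k * r < s ∧ s ≤ a + (k + 1) * r
  have hA : ∀ k ∈ Finset.range m, y + 1 - x ≤ (N.filter (fun j => P j k)).card := by
    intro k hk
    have hkm : (k : ℝ) + 1 ≤ m := by exact_mod_cast Finset.mem_range.1 hk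
    have hk0 : (0 : ℝ) ≤ k := Nat.cast_nonneg _
    have ht : a + (k + 1) * r ∈ Set.Icc a b := ⟨by nlinarith, by nlinarith⟩
    have hp := hply _ ht (z i)
    have hc := Finset.card_filter_add_card_filter_not (s := N) (fun j => P j k)
    have hsub : ((N.filter (fun j => ¬ P j k) : Finset (Fin n)) : Set (Fin n)) ⊆
        {j | z i ∈ uRegion ρ (z j) (Q j) (a + (k + 1) * r)} := by
      intro j hj
      simp only [Finset.mem_coe, hN, Finset.mem_filter, Finset.mem_univ, true_and] at hj
      by_contra hcon
      apply hj.2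
      obtain ⟨s, h1, h2, h3⟩ := recent_query (r := r) (by linarith [hj.1]) hcon
      exact ⟨s, h1, by linarith, h3⟩
    have h2 := Set.ncard_le_ncard hsub (Set.toFinite _)
    rw [Set.ncard_coe_finset] at h2
    omega
  have hB : ∀ j ∈ N, ((Finset.range m).filter (fun k => P j k)).card ≤ (Q j ∩ Set.Icc a b).ncard := by
    intro j _
    refine windows_le hr0 m (by linarith) (hfin j) _ (Finset.filter_subset _ _) ?_
    intro k hk
    exact (Finset.mem_filter.1 hk).2
  have hnat : m * (y + 1 - x) ≤ ∑ j ∈ N, (Q j ∩ Set.Icc a b).ncard := by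
    calc m * (y + 1 - x) = ∑ k ∈ Finset.range m, (y + 1 - x) := by simp
      _ ≤ ∑ k ∈ Finset.range m, (N.filter (fun j => P j k)).card := Finset.sum_le_sum hA
      _ = ∑ j ∈ N, ((Finset.range m).filter (fun k => P j k)).card := by
          simp only [Finset.card_filter]
          exact Finset.sum_comm
      _ ≤ _ := Finset.sum_le_sum hB
  have hcast : ((y + 1 - x : ℕ) : ℝ) = (y : ℝ) - x + 1 := by
    rw [Nat.cast_sub (by omega)]; push_cast; ring
  have hnat' : (m : ℝ) * ((y : ℝ) - x + 1) ≤ ((∑ j ∈ N, (Q j ∩ Set.Icc a b).ncard : ℕ) : ℝ) := by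
    rw [← hcast]; exact_mod_cast hnat
  have hpos : 0 ≤ (y : ℝ) - x + 1 := by rw [← hcast]; positivity
  exact (mul_le_mul_of_nonneg_right hmgt hpos).trans hnat'

theorem stmt9 (d : ℕ) (hd : 1 ≤ d) :
    ∃ K : ℝ, 0 < K ∧
      ∀ (n : ℕ) (ρ : ℝ) (z : Fin n → EuclideanSpace ℝ (Fin d)) (x y : ℕ)
        (a b : ℝ) (Q : Fin n → Set ℝ),
        0 ≤ ρ →
        Function.Injective z →
        (∀ i j : Fin n, i ≠ j → 2 * ρ ≤ dist (z i) (z j)) →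
        1 ≤ x → x < y → y ≤ n - 1 →
        (∀ i : Fin n, 0 < xSep ρ z y i) →
        a ≤ b →
        2 * (n : ℝ) ≤ (b - a) * ∑ i : Fin n, 1 / (ρ + xSep ρ z y i) →
        (∀ t ∈ Set.Icc a b, ∀ q : EuclideanSpace ℝ (Fin d),
          {i : Fin n | q ∈ uRegion ρ (z i) (Q i) t}.ncard ≤ x) →
        ENNReal.ofReal
            ((((y : ℝ) - (x : ℝ) + 1) / (K * (y : ℝ))) *
              ((b - a) * ∑ i : Fin n, 1 / (ρ + xSep ρ z y i)))
          ≤ ∑ i : Fin n, ((Q i ∩ Set.Icc a b).encard : ℝ≥0∞) := by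
  classical
  obtain ⟨S, hS⟩ : ∃ S : Finset (EuclideanSpace ℝ (Fin d)),
      ∀ u : EuclideanSpace ℝ (Fin d), ‖u‖ = 1 → ∃ c ∈ S, dist u c < 1 / 2 := by
    obtain ⟨t, _, ht, hcov⟩ := finite_cover_balls_of_compact
      (isCompact_sphere (0 : EuclideanSpace ℝ (Fin d)) 1) (e := 1 / 2) (by norm_num)
    refine ⟨ht.toFinset, fun u hu => ?_⟩
    have := hcov (show u ∈ sphere 0 1 by simpa using hu)
    simp only [Set.mem_iUnion, mem_ball] at this
    obtain ⟨c, hc, h⟩ := this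
    exact ⟨c, by simpa using hc, h⟩
  refine ⟨2 * (S.card + 1), by positivity, ?_⟩
  intro n ρ z x y a b Q hρ hz hnon hx hxy hyn hsep hab hlen hply
  by_cases hfin : ∀ j, (Q j ∩ Set.Icc a b).Finite
  swap
  · push Not at hfin
    obtain ⟨j, hj⟩ := hfin
    have hj' : ((Q j ∩ Set.Icc a b).encard : ℝ≥0∞) = ⊤ := by
      rw [Set.Infinite.encard_eq hj]; rfl
    have := Finset.single_le_sum (f := fun i => ((Q i ∩ Set.Icc a b).encard : ℝ≥0∞))
      (fun i _ => zero_le) (Finset.mem_univ j)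
    simp only [hj'] at this
    exact le_top.trans this
  have hloc := fun i => local_count ρ z x y a b Q hxy hyn hρ i (hsep i) hab hfin hply
  have hin := indegree S hS z hz y (by omega) (fun i => xSep ρ z y i + 2 * ρ) (by
    intro i
    have := xSep_lt_card ρ z y (by omega) i
    simpa only [sub_lt_iff_lt_add] using this)
  have hdouble : ∑ i, ∑ j ∈ Finset.univ.filter (fun j => dist (z i) (z j) ≤ xSep ρ z y i + 2 * ρ),
        (Q j ∩ Set.Icc a b).ncard ≤ (S.card + 1) * y * ∑ j, (Q j ∩ Set.Icc a b).ncard := by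
    calc _ = ∑ j, ∑ i ∈ Finset.univ.filter (fun i => dist (z i) (z j) ≤ xSep ρ z y i + 2 * ρ),
        (Q j ∩ Set.Icc a b).ncard := by
          simp only [Finset.sum_filter]
          exact Finset.sum_comm
      _ ≤ ∑ j, (S.card + 1) * y * (Q j ∩ Set.Icc a b).ncard := by
          refine Finset.sum_le_sum fun j _ => ?_
          rw [Finset.sum_const, smul_eq_mul]
          exact Nat.mul_le_mul_right _ (hin j)
      _ = _ := by rw [Finset.mul_sum]
  have hsum := Finset.sum_le_sum (s := Finset.univ) (fun i _ => hloc i)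
  rw [← Finset.sum_mul, Finset.sum_sub_distrib, ← Finset.mul_sum, ← Nat.cast_sum] at hsum
  simp only [Finset.sum_const, Finset.card_univ, Fintype.card_fin, nsmul_eq_mul, mul_one] at hsum
  have hdouble' := (Nat.cast_le (α := ℝ)).2 hdouble
  have hrhs : ∑ i : Fin n, ((Q i ∩ Set.Icc a b).encard : ℝ≥0∞) =
      ENNReal.ofReal ((∑ j, (Q j ∩ Set.Icc a b).ncard : ℕ) : ℝ) := by
    rw [ENNReal.ofReal_natCast, Nat.cast_sum]
    refine Finset.sum_congr rfl fun j _ => ?_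
    rw [← (hfin j).cast_ncard_eq]
    rfl
  rw [hrhs]
  apply ENNReal.ofReal_le_ofReal
  set H := ∑ i : Fin n, 1 / (ρ + xSep ρ z y i)
  set C := ∑ j, (Q j ∩ Set.Icc a b).ncard
  have hy0 : (0 : ℝ) < y := by exact_mod_cast (by omega : 0 < y)
  have hxy' : (x : ℝ) < y := by exact_mod_cast hxy
  have hw : 0 ≤ (y : ℝ) - x + 1 := by linarith
  rw [div_mul_eq_mul_div, div_le_iff₀ (by positivity)]
  have h1 := hsum.trans hdouble'
  push_cast at h1
  have h2 : ((b - a) * H / 2) * ((y : ℝ) - x + 1) ≤ ((b - a) * H - n) * ((y : ℝ) - x + 1) :=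
    mul_le_mul_of_nonneg_right (by linarith) hw
  have h3 := h2.trans h1
  push_cast
  linarith
end

section
/- Let Z = (z_1, …, z_n) be a stationary non-overlapping configuration of n entities of radius ρ ≥ 0 in ℝ^d, let 1 ≤ x < y ≤ n−1 be integers, fix an index i, and let E_i be the set of entities e_j with j ≠ i whose closed ball intersects B_i(y); then |E_i| ≥ y. Moreover, for any query schedule and any interval (a, a+L] with L ≥ r_i(y): if at most y − x of the members of E_i have a query time in (a, a+L], then the point z_i belongs to at least x + 1 of the uncertainty regions u_j(a+L); in particular the uncertainty ply at time a + L is at least x + 1. -/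
open Metric Set

theorem xSep_spec {d n : ℕ} (ρ : ℝ) (z : Fin n → EuclideanSpace ℝ (Fin d))
    (hsep : ∀ i j : Fin n, i ≠ j → 2 * ρ ≤ dist (z i) (z j))
    (y : ℕ) (hy : 1 ≤ y) (hyn : y ≤ n - 1) (i : Fin n) :
    0 ≤ xSep ρ z y i ∧
      y ≤ {j : Fin n | j ≠ i ∧ dist (z i) (z j) - 2 * ρ ≤ xSep ρ z y i}.ncard := by
  set S : Set ℝ := {r : ℝ | y ≤ {j : Fin n | j ≠ i ∧ dist (z i) (z j) - 2 * ρ ≤ r}.ncard} with hS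
  have hσ : xSep ρ z y i = sInf S := rfl
  have hlb : ∀ r ∈ S, 0 ≤ r := by
    intro r hr
    have hr' : y ≤ {j : Fin n | j ≠ i ∧ dist (z i) (z j) - 2 * ρ ≤ r}.ncard := hr
    obtain ⟨j, hj, hjr⟩ := Set.nonempty_of_ncard_ne_zero (by omega :
      {j : Fin n | j ≠ i ∧ dist (z i) (z j) - 2 * ρ ≤ r}.ncard ≠ 0)
    have := hsep i j (Ne.symm hj)
    linarith
  have hne : S.Nonempty := by
    refine ⟨∑ j, |dist (z i) (z j) - 2 * ρ|, ?_⟩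
    have : {j : Fin n | j ≠ i ∧ dist (z i) (z j) - 2 * ρ ≤ ∑ j, |dist (z i) (z j) - 2 * ρ|}
        = {i}ᶜ := by
      ext j
      simp only [Set.mem_setOf_eq, Set.mem_compl_iff, Set.mem_singleton_iff, ne_eq,
        and_iff_left_iff_imp]
      intro _
      exact (le_abs_self _).trans (Finset.single_le_sum
        (f := fun j => |dist (z i) (z j) - 2 * ρ|) (fun _ _ => abs_nonneg _) (Finset.mem_univ j))
    show y ≤ Set.ncard _
    rw [this, Set.ncard_compl]
    simpa using hyn
  refine ⟨by rw [hσ]; exact le_csInf hne hlb, ?_⟩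
  rw [hσ]
  have hfr := mem_closure_iff_frequently.1 (csInf_mem_closure hne ⟨0, hlb⟩)
  have hev : ∀ᶠ r in nhds (sInf S), ∀ j : Fin n,
      dist (z i) (z j) - 2 * ρ ≤ r → dist (z i) (z j) - 2 * ρ ≤ sInf S := by
    rw [Filter.eventually_all]
    intro j
    by_cases h : dist (z i) (z j) - 2 * ρ ≤ sInf S
    · exact Filter.Eventually.of_forall fun _ _ => h
    · filter_upwards [eventually_lt_nhds (not_le.1 h)] with r hr hr'
      exact absurd hr' (not_le.2 hr)
  obtain ⟨r, hr, hr2⟩ := (hfr.and_eventually hev).exists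
  exact le_trans hr (Set.ncard_le_ncard (fun j hj => ⟨hj.1, hr2 j hj.2⟩) (Set.toFinite _))

theorem stmt10 (d n : ℕ) (hd : 1 ≤ d) (ρ : ℝ) (hρ : 0 ≤ ρ)
    (z : Fin n → EuclideanSpace ℝ (Fin d))
    (hsep : ∀ i j : Fin n, i ≠ j → 2 * ρ ≤ dist (z i) (z j))
    (x y : ℕ) (hx1 : 1 ≤ x) (hxy : x < y) (hyn : y ≤ n - 1)
    (i : Fin n) :
    y ≤ {j : Fin n | j ≠ i ∧
        (closedBall (z j) ρ ∩ closedBall (z i) (ρ + xSep ρ z y i)).Nonempty}.ncard ∧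
    ∀ (Q : Fin n → Set ℝ) (a L : ℝ), ρ + xSep ρ z y i ≤ L →
      {j : Fin n | (j ≠ i ∧
          (closedBall (z j) ρ ∩ closedBall (z i) (ρ + xSep ρ z y i)).Nonempty) ∧
          (Q j ∩ Set.Ioc a (a + L)).Nonempty}.ncard ≤ y - x →
      x + 1 ≤ {j : Fin n | z i ∈ uRegion ρ (z j) (Q j) (a + L)}.ncard := by
  obtain ⟨h0, hc⟩ := xSep_spec ρ z hsep y (by omega) hyn i
  set σ := xSep ρ z y i with hσ
  have hE : y ≤ {j : Fin n | j ≠ i ∧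
        (closedBall (z j) ρ ∩ closedBall (z i) (ρ + σ)).Nonempty}.ncard := by
    refine hc.trans (Set.ncard_le_ncard ?_ (Set.toFinite _))
    rintro j ⟨hj, hd⟩
    refine ⟨hj, ?_⟩
    obtain ⟨p, hp1, hp2⟩ := exists_dist_le_le (x := z i) (z := z j) (δ := ρ + σ) (ε := ρ)
      (by linarith) hρ (by linarith)
    exact ⟨p, mem_closedBall.2 hp2, mem_closedBall'.2 hp1⟩
  refine ⟨hE, ?_⟩
  intro Q a L hL hq
  set E : Set (Fin n) := {j : Fin n | j ≠ i ∧
        (closedBall (z j) ρ ∩ closedBall (z i) (ρ + σ)).Nonempty} with hEdef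
  set F : Set (Fin n) := {j : Fin n | (j ≠ i ∧
          (closedBall (z j) ρ ∩ closedBall (z i) (ρ + σ)).Nonempty) ∧
          (Q j ∩ Set.Ioc a (a + L)).Nonempty} with hF
  have h1 : E.ncard ≤ (E \ F).ncard + F.ncard :=
    Set.ncard_le_ncard_diff_add_ncard E F (Set.toFinite _)
  have hi : i ∉ E \ F := fun h => h.1.1 rfl
  have h2 : (insert i (E \ F)).ncard = (E \ F).ncard + 1 :=
    Set.ncard_insert_of_notMem hi (Set.toFinite _)
  have h3 : insert i (E \ F) ⊆ {j : Fin n | z i ∈ uRegion ρ (z j) (Q j) (a + L)} := by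
    intro j hj
    show z i ∈ uRegion ρ (z j) (Q j) (a + L)
    unfold uRegion
    split_ifs with hn
    swap
    · trivial
    rw [mem_closedBall]
    rcases hj with rfl | ⟨hjE, hjF⟩
    · rw [dist_self]
      have : sSup (Q j ∩ Set.Iic (a + L)) ≤ a + L := csSup_le hn fun s hs => hs.2
      linarith
    · have : sSup (Q j ∩ Set.Iic (a + L)) ≤ a := by
        refine csSup_le hn fun s hs => ?_
        by_contra hlt
        exact hjF ⟨hjE, s, hs.1, not_le.1 hlt, hs.2⟩
      obtain ⟨p, hp1, hp2⟩ := hjE.2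
      rw [mem_closedBall] at hp1
      rw [mem_closedBall'] at hp2
      have := dist_triangle (z i) p (z j)
      linarith
  have h4 := Set.ncard_le_ncard h3 (Set.toFinite _)
  omega
end

section
/- For every integer d ≥ 1 there exists a constant K = K(d) > 0 with the following property. Let n entities of radius ρ ≥ 0 move in ℝ^d along 1-Lipschitz trajectories ζ_1, …, ζ_n that are non-overlapping at all times, let 1 ≤ x < y ≤ n−1 be integers, and assume σ_i(y,t) > 0 for all i and all t. Let T = [a, b] be a nondegenerate compact time interval, set H(T) := Σ_{i=1}^n ∫_T dt / r_i(y,t), and assume H(T) ≥ 505·n. Let T⁺ := [a, b + (b−a)/2^55]. Then every query schedule whose uncertainty ply is at most x at every time of T⁺ makes at least ((y − x + 1)/(K·y))·H(T) queries during T⁺. -/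
open Metric Set
open scoped ENNReal

open Classical in
/-- The uncertainty region at time `t` of a mobile entity of radius `ρ` with trajectory `ζ`
and query-time set `Q`: the closed ball about `ζ (p t)` of radius `ρ + (t - p t)` where `p t`
is the last query time at or before `t`, and all of space if there is no query before `t`. -/
noncomputable def uRegionM {d : ℕ} (ρ : ℝ) (ζ : ℝ → EuclideanSpace ℝ (Fin d))
    (Q : Set ℝ) (t : ℝ) : Set (EuclideanSpace ℝ (Fin d)) :=
  if (Q ∩ Set.Iic t).Nonempty then
    closedBall (ζ (sSup (Q ∩ Set.Iic t))) (ρ + (t - sSup (Q ∩ Set.Iic t)))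
  else Set.univ

namespace PlyBound

/-- Abstract properties of the `y`-radius function `r`. -/
structure Rad {d n : ℕ} (ζ : Fin n → ℝ → EuclideanSpace ℝ (Fin d)) (ρ : ℝ) (y : ℕ)
    (r : Fin n → ℝ → ℝ) : Prop where
  rho : 0 ≤ ρ
  lip : ∀ i s t, dist (ζ i s) (ζ i t) ≤ |s - t|
  gt : ∀ i t, ρ < r i t
  near : ∀ i t, ∃ N : Finset (Fin n), y + 1 ≤ N.card ∧
    ∀ j ∈ N, dist (ζ i t) (ζ j t) ≤ ρ + r i t
  le : ∀ i t D, ∀ S : Finset (Fin n), y + 1 ≤ S.card →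
    (∀ j ∈ S, dist (ζ i t) (ζ j t) ≤ D) → r i t ≤ D - ρ

lemma xSep_isLeast {d n : ℕ} (ρ : ℝ) (z : Fin n → EuclideanSpace ℝ (Fin d))
    (y : ℕ) (i : Fin n) (hy : 1 ≤ y) (hn : y ≤ n - 1) :
    IsLeast {r : ℝ | y ≤ {j : Fin n | j ≠ i ∧ dist (z i) (z j) - 2 * ρ ≤ r}.ncard}
      (xSep ρ z y i) := by
  classical
  set S := {r : ℝ | y ≤ {j : Fin n | j ≠ i ∧ dist (z i) (z j) - 2 * ρ ≤ r}.ncard} with hS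
  set V : Finset ℝ := Finset.univ.image (fun j => dist (z i) (z j) - 2 * ρ) with hV
  have key : ∀ r ∈ S, ∃ v ∈ V.filter (· ∈ S), v ≤ r := by
    intro r hr
    have hr' : y ≤ {j : Fin n | j ≠ i ∧ dist (z i) (z j) - 2 * ρ ≤ r}.ncard := hr
    have hne : {j : Fin n | j ≠ i ∧ dist (z i) (z j) - 2 * ρ ≤ r}.Nonempty := by
      rw [← Set.ncard_pos]; omega
    obtain ⟨j, hj, hmax⟩ := Set.exists_max_image _ (fun j => dist (z i) (z j) - 2 * ρ)
      (Set.toFinite _) hne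
    refine ⟨dist (z i) (z j) - 2 * ρ, ?_, hj.2⟩
    rw [Finset.mem_filter]
    refine ⟨Finset.mem_image_of_mem _ (Finset.mem_univ j), ?_⟩
    refine le_trans hr' (Set.ncard_le_ncard ?_ (Set.toFinite _))
    intro k hk
    exact ⟨hk.1, hmax k hk⟩
  have hSne : S.Nonempty := by
    have hfin : (Set.range fun j => dist (z i) (z j) - 2 * ρ).Finite := Set.finite_range _
    obtain ⟨M, hM⟩ := hfin.bddAbove
    refine ⟨M, ?_⟩
    have : {j : Fin n | j ≠ i ∧ dist (z i) (z j) - 2 * ρ ≤ M} = ({i}ᶜ : Set (Fin n)) := by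
      ext j
      simp only [Set.mem_ofPred_eq, Set.mem_compl_iff, Set.mem_singleton_iff]
      exact ⟨fun h => h.1, fun h => ⟨h, hM ⟨j, rfl⟩⟩⟩
    rw [hS, Set.mem_ofPred_eq, this, Set.ncard_compl]
    simpa using hn
  obtain ⟨r0, hr0⟩ := hSne
  obtain ⟨v0, hv0, -⟩ := key r0 hr0
  obtain ⟨v, hv, hmin⟩ := Finset.exists_min_image (V.filter (· ∈ S)) id ⟨v0, hv0⟩
  have hL : IsLeast S v := by
    refine ⟨(Finset.mem_filter.1 hv).2, fun r hr => ?_⟩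
    obtain ⟨u, hu, hur⟩ := key r hr
    exact le_trans (hmin u hu) hur
  have : xSep ρ z y i = v := hL.csInf_eq
  rw [this]; exact hL

lemma rad_of {d n : ℕ} (ζ : Fin n → ℝ → EuclideanSpace ℝ (Fin d)) (ρ : ℝ) (y : ℕ)
    (hρ : 0 ≤ ρ) (hl : ∀ i : Fin n, LipschitzWith 1 (ζ i)) (hy : 1 ≤ y) (hn : y ≤ n - 1)
    (hpos : ∀ (i : Fin n) (t : ℝ), 0 < xSep ρ (fun j => ζ j t) y i) :
    Rad ζ ρ y (fun i t => ρ + xSep ρ (fun j => ζ j t) y i) := by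
  classical
  refine ⟨hρ, ?_, ?_, ?_, ?_⟩
  · intro i s t
    have := (hl i).dist_le_mul s t
    simpa [Real.dist_eq] using this
  · intro i t; have := hpos i t; linarith
  · intro i t
    have h := (xSep_isLeast ρ (fun j => ζ j t) y i hy hn).1
    rw [Set.mem_ofPred_eq, Set.ncard_eq_toFinset_card'] at h
    refine ⟨insert i ({j : Fin n | j ≠ i ∧ dist (ζ i t) (ζ j t) - 2 * ρ ≤
      xSep ρ (fun j => ζ j t) y i}.toFinset), ?_, ?_⟩
    · rw [Finset.card_insert_of_notMem (by simp)]; omega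
    · intro j hj
      rw [Finset.mem_insert] at hj
      rcases hj with rfl | hj
      · have := hpos j t; simp only [dist_self]; linarith
      · simp at hj; linarith [hj.2]
  · intro i t D S hS hD
    have h := (xSep_isLeast ρ (fun j => ζ j t) y i hy hn).2
    have : xSep ρ (fun j => ζ j t) y i ≤ D - 2 * ρ := by
      apply h
      rw [Set.mem_ofPred_eq]
      have h1 : y ≤ (S.erase i).card := by
        have := Finset.pred_card_le_card_erase (s := S) (a := i); omega
      rw [← Set.ncard_coe_finset] at h1
      refine le_trans h1 (Set.ncard_le_ncard ?_ (Set.toFinite _))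
      intro j hj
      simp at hj
      exact ⟨hj.2, by linarith [hD j hj.1]⟩
    linarith

namespace Rad

variable {d n : ℕ} {ζ : Fin n → ℝ → EuclideanSpace ℝ (Fin d)} {ρ : ℝ} {y : ℕ}
    {r : Fin n → ℝ → ℝ}

lemma pos (h : Rad ζ ρ y r) (i t) : 0 < r i t := lt_of_le_of_lt h.rho (h.gt i t)

lemma rlip (h : Rad ζ ρ y r) (i s t) : r i s ≤ r i t + 2 * |s - t| := by
  obtain ⟨N, hN, hd⟩ := h.near i t
  have := h.le i s (ρ + r i t + 2 * |s - t|) N hN (fun j hj => by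
    have h1 := hd j hj
    have h2 := h.lip i s t
    have h3 := h.lip j t s
    rw [abs_sub_comm] at h3
    have h4 := dist_triangle4 (ζ i s) (ζ i t) (ζ j t) (ζ j s)
    linarith)
  linarith

lemma cont (h : Rad ζ ρ y r) (i) : Continuous (r i) := by
  have : LipschitzWith 2 (r i) := by
    apply LipschitzWith.of_dist_le_mul
    intro s t
    rw [Real.dist_eq, Real.dist_eq, abs_le]
    have h1 := h.rlip i s t
    have h2 := h.rlip i t s
    rw [abs_sub_comm t s] at h2
    constructor <;> simp <;> linarith
  exact this.continuous

/-- Queried neighbours. -/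
lemma queried (h : Rad ζ ρ y r) {x : ℕ} {Q : Fin n → Set ℝ} {i : Fin n} {t : ℝ}
    (hply : ∀ q : EuclideanSpace ℝ (Fin d),
      {j : Fin n | q ∈ uRegionM ρ (ζ j) (Q j) (t + r i t)}.ncard ≤ x) :
    ∃ M : Finset (Fin n), y + 1 - x ≤ M.card ∧
      (∀ j ∈ M, dist (ζ i t) (ζ j t) ≤ 2 * r i t) ∧
      ∀ j ∈ M, ∃ τ ∈ Q j, t < τ ∧ τ ≤ t + r i t := by
  classical
  obtain ⟨N, hN, hd⟩ := h.near i t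
  refine ⟨N.filter (fun j => ∃ τ ∈ Q j, t < τ ∧ τ ≤ t + r i t), ?_, ?_, ?_⟩
  · have h1 := Finset.card_filter_add_card_filter_not (s := N)
      (fun j => ∃ τ ∈ Q j, t < τ ∧ τ ≤ t + r i t)
    have h2 : (N.filter (fun j => ¬ ∃ τ ∈ Q j, t < τ ∧ τ ≤ t + r i t)).card ≤ x := by
      rw [← Set.ncard_coe_finset]
      refine le_trans (Set.ncard_le_ncard ?_ (Set.toFinite _)) (hply (ζ i t))
      intro j hj
      simp only [Finset.coe_filter, Set.mem_ofPred_eq, not_exists, not_and, not_le] at hj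
      obtain ⟨hjN, hjQ⟩ := hj
      rw [Set.mem_ofPred_eq, uRegionM]
      split_ifs with hne
      · have hp : sSup (Q j ∩ Set.Iic (t + r i t)) ≤ t := by
          apply csSup_le hne
          rintro τ ⟨hτ, hτ2⟩
          by_contra hc
          have h3 := hjQ τ hτ (not_le.1 hc)
          rw [Set.mem_Iic] at hτ2
          linarith
        set p := sSup (Q j ∩ Set.Iic (t + r i t))
        rw [mem_closedBall]
        have h3 := hd j hjN
        have h4 := h.lip j t p
        rw [abs_of_nonneg (by linarith)] at h4
        have := dist_triangle (ζ i t) (ζ j t) (ζ j p)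
        linarith
      · trivial
    omega
  · intro j hj
    have := hd j (Finset.mem_filter.1 hj).1
    linarith [h.gt i t]
  · intro j hj
    exact (Finset.mem_filter.1 hj).2

end Rad

open Classical in
/-- Weighted number of queries in a space-time box. -/
noncomputable def bw {d n : ℕ} (ζ : Fin n → ℝ → EuclideanSpace ℝ (Fin d))
    (r : Fin n → ℝ → ℝ) (P : Finset (Σ _ : Fin n, ℝ)) (p : EuclideanSpace ℝ (Fin d))
    (D s e : ℝ) : ℝ :=
  ∑ z ∈ P.filter (fun z => s < z.2 ∧ z.2 ≤ e ∧ dist (ζ z.1 z.2) p ≤ D),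
    (r z.1 z.2) ^ (1 / 8 : ℝ)

section
variable {d n : ℕ} {ζ : Fin n → ℝ → EuclideanSpace ℝ (Fin d)} {ρ : ℝ} {y : ℕ}
    {r : Fin n → ℝ → ℝ} {P : Finset (Σ _ : Fin n, ℝ)}

lemma bw_nonneg (h : Rad ζ ρ y r) (p D s e) : 0 ≤ bw ζ r P p D s e :=
  Finset.sum_nonneg fun z _ => Real.rpow_nonneg (h.pos _ _).le _

lemma bw_mono (h : Rad ζ ρ y r) {p1 D1 s1 e1 p D s e}
    (hs1 : s ≤ s1) (he1 : e1 ≤ e) (hD1 : dist p1 p + D1 ≤ D) :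
    bw ζ r P p1 D1 s1 e1 ≤ bw ζ r P p D s e := by
  classical
  unfold bw
  apply Finset.sum_le_sum_of_subset_of_nonneg
  · intro z hz
    rw [Finset.mem_filter] at hz ⊢
    obtain ⟨hP, h1, h2, h3⟩ := hz
    exact ⟨hP, by linarith, by linarith, by linarith [dist_triangle (ζ z.1 z.2) p1 p]⟩
  · intro z _ _
    exact Real.rpow_nonneg (h.pos _ _).le _

lemma bw_add (h : Rad ζ ρ y r) {p1 D1 s1 e1 p2 D2 s2 e2 p D s e}
    (hs1 : s ≤ s1) (h12 : e1 ≤ s2) (he2 : e2 ≤ e) (he1 : e1 ≤ e) (hs2 : s ≤ s2)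
    (hD1 : dist p1 p + D1 ≤ D) (hD2 : dist p2 p + D2 ≤ D) :
    bw ζ r P p1 D1 s1 e1 + bw ζ r P p2 D2 s2 e2 ≤ bw ζ r P p D s e := by
  classical
  unfold bw
  rw [← Finset.sum_union]
  · apply Finset.sum_le_sum_of_subset_of_nonneg
    · intro z hz
      rw [Finset.mem_union, Finset.mem_filter, Finset.mem_filter] at hz
      rw [Finset.mem_filter]
      rcases hz with ⟨hP, h1, h2, h3⟩ | ⟨hP, h1, h2, h3⟩
      · exact ⟨hP, by linarith, by linarith, by linarith [dist_triangle (ζ z.1 z.2) p1 p]⟩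
      · exact ⟨hP, by linarith, by linarith, by linarith [dist_triangle (ζ z.1 z.2) p2 p]⟩
    · intro z _ _
      exact Real.rpow_nonneg (h.pos _ _).le _
  · rw [Finset.disjoint_left]
    intro z h1 h2
    rw [Finset.mem_filter] at h1 h2
    linarith [h1.2.2.1, h2.2.1]

lemma rpow_const : ((1 / 256 : ℝ)) ^ (1 / 8 : ℝ) = 1 / 2 := by
  rw [show (1 / 256 : ℝ) = (1 / 2) ^ (8 : ℝ) by norm_num, ← Real.rpow_mul (by norm_num)]
  norm_num

lemma rpow_const2 : (3 : ℝ) ≤ ((7 / 256 : ℝ)) ^ (1 / 8 - 1 : ℝ) := by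
  have h1 : ((1 / 16 : ℝ)) ^ (1 / 8 - 1 : ℝ) ≤ ((7 / 256 : ℝ)) ^ (1 / 8 - 1 : ℝ) :=
    Real.rpow_le_rpow_of_nonpos (by norm_num) (by norm_num) (by norm_num)
  have h2 : ((1 / 16 : ℝ)) ^ (-(1 / 2) : ℝ) ≤ ((1 / 16 : ℝ)) ^ (1 / 8 - 1 : ℝ) :=
    Real.rpow_le_rpow_of_exponent_ge (by norm_num) (by norm_num) (by norm_num)
  have h3 : ((1 / 16 : ℝ)) ^ (-(1 / 2) : ℝ) = 4 := by
    rw [show (1 / 16 : ℝ) = 4 ^ (-2 : ℝ) by norm_num [Real.rpow_neg], ← Real.rpow_mul (by norm_num)]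
    norm_num
  linarith

/-- Greedy chaining of windows. -/
lemma chain (h : Rad ζ ρ y r) {c R m : ℝ} (hm : 0 < m) (hR : 0 < R) (hc : 0 ≤ c)
    {j : Fin n} {p : EuclideanSpace ℝ (Fin d)} {D τ : ℝ}
    (hmin : ∀ s, τ ≤ s → s ≤ τ + R → m ≤ r j s)
    (hsmall : ∀ s, τ ≤ s → s ≤ τ + R → r j s ≤ 7 / 256 * R)
    (hwin : ∀ s, τ ≤ s → s ≤ τ + R →
      c * r j s ^ (1 / 8 : ℝ) ≤ bw ζ r P (ζ j s) (6 * r j s) s (s + 3 * r j s))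
    (hD : ∀ s, τ ≤ s → s ≤ τ + R → dist (ζ j s) p + 6 * r j s ≤ D) (N : ℕ) :
    ∃ e, τ ≤ e ∧ e ≤ τ + 2 * R ∧ (e ≤ τ + R → τ + N * m ≤ e) ∧
      c / 3 * (7 / 256 * R) ^ (1 / 8 - 1 : ℝ) * (e - τ) ≤ bw ζ r P p D τ e := by
  induction N with
  | zero =>
    refine ⟨τ, le_rfl, by linarith, by simp, ?_⟩
    simpa using bw_nonneg h _ _ _ _
  | succ N ih =>
    obtain ⟨e, h1, h2, h3, h4⟩ := ih
    by_cases he : e ≤ τ + R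
    · have h5 := h3 he
      have hr := h.pos j e
      refine ⟨e + 3 * r j e, by linarith, by linarith [hsmall e h1 he], ?_, ?_⟩
      · intro _
        push_cast
        linarith [hmin e h1 he]
      · have hw := hwin e h1 he
        have hadd := bw_add (P := P) h (p1 := p) (D1 := D) (s1 := τ) (e1 := e) (p2 := ζ j e)
          (D2 := 6 * r j e) (s2 := e) (e2 := e + 3 * r j e) (p := p) (D := D) (s := τ)
          (e := e + 3 * r j e) le_rfl le_rfl le_rfl (by linarith) h1 (by simp) (hD e h1 he)
        have hp : (7 / 256 * R) ^ (1 / 8 - 1 : ℝ) * r j e ≤ r j e ^ (1 / 8 : ℝ) := by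
          have hq : (7 / 256 * R) ^ (1 / 8 - 1 : ℝ) ≤ r j e ^ (1 / 8 - 1 : ℝ) :=
            Real.rpow_le_rpow_of_nonpos hr (hsmall e h1 he) (by norm_num)
          calc _ ≤ r j e ^ (1 / 8 - 1 : ℝ) * r j e := by gcongr
            _ = r j e ^ (1 / 8 : ℝ) := by
              rw [← Real.rpow_add_one hr.ne']; norm_num
        have hp2 := mul_le_mul_of_nonneg_left hp hc
        calc _ = c / 3 * (7 / 256 * R) ^ (1 / 8 - 1 : ℝ) * (e - τ)
              + c * ((7 / 256 * R) ^ (1 / 8 - 1 : ℝ) * r j e) := by ring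
          _ ≤ _ := by linarith
    · exact ⟨e, h1, h2, fun h' => absurd h' he, h4⟩

/-- The box lemma. -/
lemma box (h : Rad ζ ρ y r) {x : ℕ} {Q : Fin n → Set ℝ} {a e m : ℝ} (hm : 0 < m)
    (hply : ∀ t ∈ Set.Icc a e, ∀ q : EuclideanSpace ℝ (Fin d),
      {j : Fin n | q ∈ uRegionM ρ (ζ j) (Q j) t}.ncard ≤ x)
    (hP : ∀ j τ, τ ∈ Q j → a ≤ τ → τ ≤ e → (⟨j, τ⟩ : Σ _ : Fin n, ℝ) ∈ P)
    (hmin : ∀ j, ∀ t ∈ Set.Icc a e, m ≤ r j t) (N : ℕ) :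
    ∀ i t, a ≤ t → t + 3 * r i t ≤ e → r i t < m * 2 ^ N →
      ((y + 1 - x : ℕ) : ℝ) / 2 * r i t ^ (1 / 8 : ℝ) ≤
        bw ζ r P (ζ i t) (6 * r i t) t (t + 3 * r i t) := by
  classical
  induction N with
  | zero =>
    intro i t ha he hr
    have := hmin i t ⟨ha, by linarith [h.pos i t]⟩
    simp at hr; linarith
  | succ N ih =>
    intro i t ha he hr
    have hR := h.pos i t
    obtain ⟨M, hM, hd, hq⟩ := h.queried (hply (t + r i t) ⟨by linarith, by linarith⟩)
    set R := r i t with hRdef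
    set q : ℝ := ((y + 1 - x : ℕ) : ℝ) with hqdef
    have hq0 : 0 ≤ q := Nat.cast_nonneg _
    have ih' : ∀ j s, t ≤ s → s ≤ t + 2 * R → r j s ≤ 7 / 256 * R →
        q / 2 * r j s ^ (1 / 8 : ℝ) ≤ bw ζ r P (ζ j s) (6 * r j s) s (s + 3 * r j s) := by
      intro j s h1 h2 h3
      apply ih j s (by linarith) (by linarith)
      rw [pow_succ] at hr
      linarith
    have hD : ∀ j ∈ M, ∀ s, t ≤ s → s ≤ t + 2 * R → r j s ≤ 7 / 256 * R →
        dist (ζ j s) (ζ i t) + 6 * r j s ≤ 6 * R := by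
      intro j hj s h1 h2 h3
      have h4 := hd j hj
      have h5 := h.lip j t s
      rw [abs_of_nonpos (by linarith)] at h5
      have := dist_triangle (ζ i t) (ζ j t) (ζ j s)
      rw [dist_comm (ζ j s)]
      linarith
    by_cases hcase : ∀ j ∈ M, ∀ s, t ≤ s → s ≤ t + R → 1 / 256 * R ≤ r j s
    · choose! τ hτQ hτ1 hτ2 using hq
      have hsub : M.image (fun j => (⟨j, τ j⟩ : Σ _ : Fin n, ℝ)) ⊆
          P.filter (fun z => t < z.2 ∧ z.2 ≤ t + 3 * R ∧ dist (ζ z.1 z.2) (ζ i t) ≤ 6 * R) := by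
        intro z hz
        rw [Finset.mem_image] at hz
        obtain ⟨j, hj, rfl⟩ := hz
        rw [Finset.mem_filter]
        have h1 := hτ1 j hj
        have h2 := hτ2 j hj
        refine ⟨hP j _ (hτQ j hj) (by linarith) (by linarith), h1, by simp only; linarith, ?_⟩
        have h4 := hd j hj
        have h5 := h.lip j t (τ j)
        rw [abs_of_nonpos (by linarith)] at h5
        have := dist_triangle (ζ i t) (ζ j t) (ζ j (τ j))
        rw [dist_comm]
        simp only
        linarith
      unfold bw
      refine le_trans ?_ (Finset.sum_le_sum_of_subset_of_nonneg hsub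
        (fun z _ _ => Real.rpow_nonneg (h.pos _ _).le _))
      rw [Finset.sum_image (by intro j _ k _ hjk; exact (Sigma.mk.inj hjk).1)]
      have : ∀ j ∈ M, 1 / 2 * R ^ (1 / 8 : ℝ) ≤ r j (τ j) ^ (1 / 8 : ℝ) := by
        intro j hj
        rw [← rpow_const, ← Real.mul_rpow (by norm_num) hR.le]
        exact Real.rpow_le_rpow (by positivity)
          (hcase j hj _ (hτ1 j hj).le (hτ2 j hj)) (by norm_num)
      have h2 := Finset.card_nsmul_le_sum M _ _ this
      rw [nsmul_eq_mul] at h2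
      refine le_trans ?_ h2
      have h3 : q ≤ (M.card : ℝ) := by rw [hqdef]; exact_mod_cast hM
      have h4 : 0 ≤ R ^ (1 / 8 : ℝ) := by positivity
      nlinarith [mul_le_mul_of_nonneg_right h3 h4]
    · push Not at hcase
      obtain ⟨j, hj, τ, hτ1, hτ2, hτr⟩ := hcase
      by_cases hrise : ∃ s, τ ≤ s ∧ s ≤ τ + R ∧ 7 / 256 * R ≤ r j s
      · obtain ⟨s, hs1, hs2, hs3⟩ := hrise
        obtain ⟨u, hu, hur⟩ := intermediate_value_Icc hs1 (h.cont j).continuousOn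
          (show 1 / 256 * R ∈ Set.Icc (r j τ) (r j s) from ⟨hτr.le, by linarith⟩)
        obtain ⟨v, hv, hvr⟩ := intermediate_value_Icc hu.2 (h.cont j).continuousOn
          (show 7 / 256 * R ∈ Set.Icc (r j u) (r j s) from ⟨by linarith, hs3⟩)
        have huv := h.rlip j v u
        rw [abs_of_nonneg (by linarith [hv.1])] at huv
        have hu1 := hu.1
        have hu2 := hu.2
        have hv1 := hv.1
        have hv2 := hv.2
        have w1 := ih' j u (by linarith) (by linarith) (by linarith)
        have w2 := ih' j v (by linarith) (by linarith) (by linarith)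
        have d1 := hD j hj u (by linarith) (by linarith) (by linarith)
        have d2 := hD j hj v (by linarith) (by linarith) (by linarith)
        have hadd := bw_add (P := P) h (s := t) (e := t + 3 * R) (by linarith : t ≤ u)
          (by linarith : u + 3 * r j u ≤ v) (by linarith : v + 3 * r j v ≤ t + 3 * R)
          (by linarith) (by linarith) d1 d2
        have e1 : 1 / 2 * R ^ (1 / 8 : ℝ) = r j u ^ (1 / 8 : ℝ) := by
          rw [hur, Real.mul_rpow (by norm_num) hR.le, rpow_const]
        have e2 : 1 / 2 * R ^ (1 / 8 : ℝ) ≤ r j v ^ (1 / 8 : ℝ) := by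
          rw [e1]
          exact Real.rpow_le_rpow (h.pos _ _).le (by linarith) (by norm_num)
        have e3 := mul_le_mul_of_nonneg_left e2 (by positivity : 0 ≤ q / 2)
        rw [← e1] at w1
        linarith
      · push Not at hrise
        obtain ⟨N', hN'⟩ := exists_nat_gt (R / m)
        rw [div_lt_iff₀ hm] at hN'
        obtain ⟨f, f1, f2, f3, f4⟩ := chain (P := P) h (c := q / 2) hm hR (by positivity) (j := j)
          (p := ζ i t) (D := 6 * R) (τ := τ)
          (fun s h1 h2 => hmin j s ⟨by linarith, by linarith⟩)
          (fun s h1 h2 => (hrise s h1 h2).le)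
          (fun s h1 h2 => ih' j s (by linarith) (by linarith) (hrise s h1 h2).le)
          (fun s h1 h2 => hD j hj s (by linarith) (by linarith) (hrise s h1 h2).le) N'
        have f5 : τ + R ≤ f := by
          by_contra hc
          have := f3 (by linarith)
          linarith
        have hmono := bw_mono (P := P) h hτ1 (by linarith : f ≤ t + 3 * R)
          (by simp : dist (ζ i t) (ζ i t) + 6 * R ≤ 6 * R)
        refine le_trans ?_ (le_trans f4 hmono)
        have g1 : 3 * R ^ (1 / 8 - 1 : ℝ) ≤ (7 / 256 * R) ^ (1 / 8 - 1 : ℝ) := by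
          rw [Real.mul_rpow (by norm_num) hR.le]
          have := rpow_const2
          gcongr
        have g2 : R ^ (1 / 8 : ℝ) = R ^ (1 / 8 - 1 : ℝ) * R := by
          rw [← Real.rpow_add_one hR.ne']; norm_num
        calc q / 2 * R ^ (1 / 8 : ℝ) = q / 2 / 3 * (3 * R ^ (1 / 8 - 1 : ℝ)) * R := by
              rw [g2]; ring
          _ ≤ q / 2 / 3 * (7 / 256 * R) ^ (1 / 8 - 1 : ℝ) * (f - τ) := by
              have : R ≤ f - τ := by linarith
              gcongr

end

/-- Covering constant. -/
lemma cover (d : ℕ) : ∃ Nd : ℕ, ∀ (p : EuclideanSpace ℝ (Fin d)) (R : ℝ), 0 < R →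
    ∃ T : Finset (EuclideanSpace ℝ (Fin d)), T.card ≤ Nd ∧
      ∀ z, dist p z ≤ 12 * R → ∃ c ∈ T, dist z c ≤ R / 3 := by
  classical
  obtain ⟨t, -, htf, ht⟩ := (isCompact_closedBall (0 : EuclideanSpace ℝ (Fin d))
    12).finite_cover_balls (e := 1 / 3) (by norm_num)
  refine ⟨htf.toFinset.card, fun p R hR => ⟨htf.toFinset.image (fun c => p + R • c),
    Finset.card_image_le, fun z hz => ?_⟩⟩
  have h1 : R⁻¹ • (z - p) ∈ closedBall (0 : EuclideanSpace ℝ (Fin d)) 12 := by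
    rw [mem_closedBall, dist_zero_right, norm_smul, norm_inv, Real.norm_of_nonneg hR.le,
      inv_mul_le_iff₀ hR, ← dist_eq_norm, dist_comm]
    linarith
  have h2 := ht h1
  simp only [Set.mem_iUnion] at h2
  obtain ⟨c, hc, hcz⟩ := h2
  refine ⟨p + R • c, Finset.mem_image_of_mem _ (htf.mem_toFinset.2 hc), ?_⟩
  rw [mem_ball, dist_eq_norm] at hcz
  have h3 : z - (p + R • c) = R • (R⁻¹ • (z - p) - c) := by
    rw [smul_sub, smul_smul, mul_inv_cancel₀ hR.ne', one_smul]; abel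
  rw [dist_eq_norm, h3, norm_smul, Real.norm_of_nonneg hR.le]
  have := mul_le_mul_of_nonneg_left hcz.le hR.le
  linarith

section
variable {d n : ℕ} {ζ : Fin n → ℝ → EuclideanSpace ℝ (Fin d)} {ρ : ℝ} {y : ℕ}
    {r : Fin n → ℝ → ℝ} {P : Finset (Σ _ : Fin n, ℝ)}

lemma count (h : Rad ζ ρ y r) {Nd : ℕ}
    (hN : ∀ (p : EuclideanSpace ℝ (Fin d)) (R : ℝ), 0 < R →
      ∃ T : Finset (EuclideanSpace ℝ (Fin d)), T.card ≤ Nd ∧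
        ∀ z, dist p z ≤ 12 * R → ∃ c ∈ T, dist z c ≤ R / 3)
    (p : EuclideanSpace ℝ (Fin d)) (t : ℝ) {R : ℝ} (hR : 0 < R) (I : Finset (Fin n))
    (h1 : ∀ i ∈ I, R ≤ r i t) (h2 : ∀ i ∈ I, dist p (ζ i t) ≤ 12 * R) :
    I.card ≤ Nd * y := by
  classical
  obtain ⟨T, hT, hc⟩ := hN p R hR
  have hsub : I ⊆ T.biUnion (fun c => I.filter (fun i => dist (ζ i t) c ≤ R / 3)) := by
    intro i hi
    obtain ⟨c, hcT, hcd⟩ := hc _ (h2 i hi)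
    exact Finset.mem_biUnion.2 ⟨c, hcT, Finset.mem_filter.2 ⟨hi, hcd⟩⟩
  refine le_trans (Finset.card_le_card hsub) (le_trans
    (Finset.card_biUnion_le_card_mul _ _ y ?_) (Nat.mul_le_mul_right _ hT))
  intro c _
  by_contra hcon
  push Not at hcon
  obtain ⟨i, hi⟩ := Finset.card_pos.1 (lt_of_le_of_lt (Nat.zero_le _) hcon)
  have := h.le i t (2 * R / 3) _ hcon (fun j hj => by
    have a1 := (Finset.mem_filter.1 hi).2
    have a2 := (Finset.mem_filter.1 hj).2
    have := dist_triangle_right (ζ i t) (ζ j t) c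
    linarith)
  linarith [h1 i (Finset.mem_filter.1 hi).1, h.rho]

lemma sum_scales (h : Rad ζ ρ y r) {Nd : ℕ}
    (hN : ∀ (p : EuclideanSpace ℝ (Fin d)) (R : ℝ), 0 < R →
      ∃ T : Finset (EuclideanSpace ℝ (Fin d)), T.card ≤ Nd ∧
        ∀ z, dist p z ≤ 12 * R → ∃ c ∈ T, dist z c ≤ R / 3)
    (p : EuclideanSpace ℝ (Fin d)) (t : ℝ) {m : ℝ} (hm : 0 < m) (I : Finset (Fin n))
    (h1 : ∀ i ∈ I, m ≤ r i t) (h2 : ∀ i ∈ I, dist p (ζ i t) ≤ 6 * r i t) :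
    ∑ i ∈ I, r i t ^ (-(9 / 8) : ℝ) ≤ 2 * (Nd * y) * m ^ (-(9 / 8) : ℝ) := by
  classical
  have hk : ∀ i, ∃ k : ℕ, i ∈ I → (2 : ℝ) ^ k ≤ r i t / m ∧ r i t / m < 2 ^ (k + 1) := by
    intro i
    by_cases hi : i ∈ I
    · obtain ⟨k, hk⟩ := exists_nat_pow_near (x := r i t / m) (y := 2)
        ((one_le_div hm).2 (h1 i hi)) (by norm_num)
      exact ⟨k, fun _ => hk⟩
    · exact ⟨0, fun h => absurd h hi⟩
  choose k hk using hk
  obtain ⟨K, hK⟩ : ∃ K, ∀ i ∈ I, k i ∈ Finset.range K :=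
    ⟨I.sup k + 1, fun i hi => Finset.mem_range.2 (Nat.lt_succ_of_le (Finset.le_sup hi))⟩
  rw [← Finset.sum_fiberwise_of_maps_to hK]
  have hb : ∀ l ∈ Finset.range K, ∑ i ∈ I.filter (fun i => k i = l), r i t ^ (-(9 / 8) : ℝ) ≤
      (Nd * y) * m ^ (-(9 / 8) : ℝ) * (1 / 2) ^ l := by
    intro l _
    have hterm : ∀ i ∈ I.filter (fun i => k i = l),
        r i t ^ (-(9 / 8) : ℝ) ≤ m ^ (-(9 / 8) : ℝ) * (1 / 2) ^ l := by
      intro i hi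
      obtain ⟨hiI, hil⟩ := Finset.mem_filter.1 hi
      have h3 := (hk i hiI).1
      rw [hil, le_div_iff₀ hm] at h3
      have h4 : r i t ^ (-(9 / 8) : ℝ) ≤ (2 ^ l * m) ^ (-(9 / 8) : ℝ) :=
        Real.rpow_le_rpow_of_nonpos (by positivity) h3 (by norm_num)
      rw [Real.mul_rpow (by positivity) hm.le] at h4
      have h5 : ((2 : ℝ) ^ l) ^ (-(9 / 8) : ℝ) ≤ (1 / 2) ^ l := by
        calc ((2 : ℝ) ^ l) ^ (-(9 / 8) : ℝ) ≤ ((2 : ℝ) ^ l) ^ (-1 : ℝ) :=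
              Real.rpow_le_rpow_of_exponent_le (one_le_pow₀ (by norm_num)) (by norm_num)
          _ = (1 / 2) ^ l := by rw [Real.rpow_neg_one]; simp
      have h6 : 0 ≤ m ^ (-(9 / 8) : ℝ) := by positivity
      nlinarith
    have hcard : (I.filter (fun i => k i = l)).card ≤ Nd * y := by
      apply count h hN p t (R := 2 ^ l * m) (by positivity)
      · intro i hi
        obtain ⟨hiI, hil⟩ := Finset.mem_filter.1 hi
        have h3 := (hk i hiI).1
        rwa [hil, le_div_iff₀ hm] at h3
      · intro i hi
        obtain ⟨hiI, hil⟩ := Finset.mem_filter.1 hi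
        have h3 := (hk i hiI).2
        rw [hil, div_lt_iff₀ hm, pow_succ] at h3
        linarith [h2 i hiI]
    have := Finset.sum_le_card_nsmul _ _ _ hterm
    rw [nsmul_eq_mul] at this
    refine le_trans this ?_
    have hc : ((I.filter (fun i => k i = l)).card : ℝ) ≤ Nd * y := by exact_mod_cast hcard
    rw [mul_assoc]
    gcongr
  refine le_trans (Finset.sum_le_sum hb) ?_
  rw [← Finset.mul_sum]
  have hg : ∑ l ∈ Finset.range K, (1 / 2 : ℝ) ^ l ≤ 2 := sum_geometric_two_le K
  have : 0 ≤ (Nd * y : ℝ) * m ^ (-(9 / 8) : ℝ) := by positivity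
  nlinarith

lemma pointwise_z (h : Rad ζ ρ y r) {Nd : ℕ}
    (hN : ∀ (p : EuclideanSpace ℝ (Fin d)) (R : ℝ), 0 < R →
      ∃ T : Finset (EuclideanSpace ℝ (Fin d)), T.card ≤ Nd ∧
        ∀ z, dist p z ≤ 12 * R → ∃ c ∈ T, dist z c ≤ R / 3)
    (j : Fin n) (τ t : ℝ) (I : Finset (Fin n))
    (hI : ∀ i ∈ I, t < τ ∧ τ ≤ t + 3 * r i t ∧ dist (ζ j τ) (ζ i t) ≤ 6 * r i t) :
    (∑ i ∈ I, r i t ^ (-(9 / 8) : ℝ)) * r j τ ^ (1 / 8 : ℝ) ≤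
      2 * (Nd * y) * (1 / 22 : ℝ) ^ (-(9 / 8) : ℝ) *
        (1 / r j τ * (1 + |(t - τ) / r j τ|) ^ (-(9 / 8) : ℝ)) := by
  have hr := h.pos j τ
  have hm : 0 < (r j τ + |t - τ|) / 22 := by positivity
  have := sum_scales h hN (ζ j τ) t hm I ?_ (fun i hi => (hI i hi).2.2)
  · have h8 : 0 ≤ r j τ ^ (1 / 8 : ℝ) := by positivity
    refine le_trans (mul_le_mul_of_nonneg_right this h8) (le_of_eq ?_)
    have e1 : (r j τ + |t - τ|) / 22 = (1 / 22) * (r j τ * (1 + |(t - τ) / r j τ|)) := by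
      rw [abs_div, abs_of_pos hr]; field_simp
    rw [e1, Real.mul_rpow (by norm_num) (by positivity), Real.mul_rpow hr.le (by positivity)]
    have e2 : r j τ ^ (-(9 / 8) : ℝ) * r j τ ^ (1 / 8 : ℝ) = 1 / r j τ := by
      rw [← Real.rpow_add hr, show (-(9 / 8) + 1 / 8 : ℝ) = -1 by norm_num, Real.rpow_neg_one, one_div]
    rw [← e2]; ring
  · intro i hi
    obtain ⟨h1, h2, h3⟩ := hI i hi
    rw [abs_of_neg (by linarith)]
    obtain ⟨N, hNc, hd⟩ := h.near i t
    have := h.le j τ (11 * r i t) N hNc (fun k hk => by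
      have a1 := hd k hk
      have a2 := h.gt i t
      have a3 := h.lip k t τ
      rw [abs_of_neg (by linarith)] at a3
      have a4 := dist_triangle4 (ζ j τ) (ζ i t) (ζ k t) (ζ k τ)
      linarith)
    linarith [h.rho]

lemma pointwise (h : Rad ζ ρ y r) {Nd : ℕ}
    (hN : ∀ (p : EuclideanSpace ℝ (Fin d)) (R : ℝ), 0 < R →
      ∃ T : Finset (EuclideanSpace ℝ (Fin d)), T.card ≤ Nd ∧
        ∀ z, dist p z ≤ 12 * R → ∃ c ∈ T, dist z c ≤ R / 3)
    {a e t q : ℝ} (hq : 0 ≤ q) (ha : a ≤ t) (he : t < e)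
    (hbox : ∀ i t, a ≤ t → t + 3 * r i t ≤ e →
      q / 2 * r i t ^ (1 / 8 : ℝ) ≤ bw ζ r P (ζ i t) (6 * r i t) t (t + 3 * r i t)) :
    q / 2 * ∑ i, (1 / r i t - 3 * (1 / (e - t))) ≤
      ∑ z ∈ P, 2 * (Nd * y) * (1 / 22 : ℝ) ^ (-(9 / 8) : ℝ) *
        (1 / r z.1 z.2 * (1 + |(t - z.2) / r z.1 z.2|) ^ (-(9 / 8) : ℝ)) := by
  classical
  have h1 : ∀ i, q / 2 * (1 / r i t - 3 * (1 / (e - t))) ≤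
      r i t ^ (-(9 / 8) : ℝ) * bw ζ r P (ζ i t) (6 * r i t) t (t + 3 * r i t) := by
    intro i
    have hr := h.pos i t
    have het : 0 < e - t := by linarith
    have hp : 0 ≤ r i t ^ (-(9 / 8) : ℝ) := by positivity
    by_cases hw : t + 3 * r i t ≤ e
    · have h2 := mul_le_mul_of_nonneg_left (hbox i t ha hw) hp
      have e2 : r i t ^ (-(9 / 8) : ℝ) * r i t ^ (1 / 8 : ℝ) = 1 / r i t := by
        rw [← Real.rpow_add hr, show (-(9 / 8) + 1 / 8 : ℝ) = -1 by norm_num, Real.rpow_neg_one, one_div]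
      have h3 : 0 ≤ q / 2 * (3 * (1 / (e - t))) := by positivity
      calc _ ≤ q / 2 * (1 / r i t) := by linarith
        _ = r i t ^ (-(9 / 8) : ℝ) * (q / 2 * r i t ^ (1 / 8 : ℝ)) := by rw [← e2]; ring
        _ ≤ _ := h2
    · push Not at hw
      have h3 : 1 / r i t ≤ 3 * (1 / (e - t)) := by
        rw [mul_one_div, div_le_div_iff₀ hr het]; linarith
      have h4 : q / 2 * (1 / r i t - 3 * (1 / (e - t))) ≤ 0 :=
        mul_nonpos_of_nonneg_of_nonpos (by positivity) (by linarith)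
      exact le_trans h4 (mul_nonneg hp (bw_nonneg h _ _ _ _))
  rw [Finset.mul_sum]
  refine le_trans (Finset.sum_le_sum fun i _ => h1 i) ?_
  unfold bw
  simp_rw [Finset.mul_sum, Finset.sum_filter]
  rw [Finset.sum_comm]
  refine Finset.sum_le_sum fun z _ => ?_
  rw [← Finset.sum_filter, ← Finset.sum_mul]
  exact pointwise_z h hN z.1 z.2 t _ (fun i hi => (Finset.mem_filter.1 hi).2)

end

lemma kernel_integrable {r τ : ℝ} (hr : 0 < r) :
    MeasureTheory.Integrable (fun t : ℝ => 1 / r * (1 + |(t - τ) / r|) ^ (-(9 / 8) : ℝ)) := by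
  have h := integrable_one_add_norm (E := ℝ) (μ := MeasureTheory.volume) (r := 9 / 8)
    (by simp; norm_num)
  exact ((h.comp_div hr.ne').comp_sub_right τ).const_mul (1 / r)

lemma kernel_integral {r τ a b : ℝ} (hr : 0 < r) (hab : a ≤ b) :
    ∫ t in a..b, 1 / r * (1 + |(t - τ) / r|) ^ (-(9 / 8) : ℝ) ≤
      ∫ v : ℝ, (1 + |v|) ^ (-(9 / 8) : ℝ) := by
  rw [intervalIntegral.integral_of_le hab]
  refine le_trans (MeasureTheory.setIntegral_le_integral (kernel_integrable hr)
    (Filter.Eventually.of_forall fun t => by positivity)) (le_of_eq ?_)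
  rw [MeasureTheory.integral_const_mul,
    MeasureTheory.integral_sub_right_eq_self (fun t : ℝ => (1 + |t / r|) ^ (-(9 / 8) : ℝ)) τ,
    MeasureTheory.Measure.integral_comp_div (fun t : ℝ => (1 + |t|) ^ (-(9 / 8) : ℝ)) r,
    abs_of_pos hr, smul_eq_mul, ← mul_assoc, one_div, inv_mul_cancel₀ hr.ne', one_mul]

lemma boundary {a b : ℝ} (hab : a < b) :
    ∫ t in a..b, 3 * (1 / (b + (b - a) / 2 ^ 55 - t)) ≤ 168 := by
  rw [intervalIntegral.integral_const_mul,
    intervalIntegral.integral_comp_sub_left (fun t : ℝ => 1 / t),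
    integral_one_div_of_pos (by linarith) (by linarith)]
  have hba : 0 < b - a := by linarith
  have e1 : (b + (b - a) / 2 ^ 55 - a) / (b + (b - a) / 2 ^ 55 - b) = 2 ^ 55 + 1 := by
    rw [div_eq_iff (by linarith)]; ring
  rw [e1]
  have h1 : Real.log (2 ^ 55 + 1) ≤ Real.log (2 ^ 56) :=
    Real.log_le_log (by norm_num) (by norm_num)
  rw [Real.log_pow] at h1
  have h2 := Real.log_two_lt_d9
  push_cast at h1
  linarith

end PlyBound

theorem stmt11 (d : ℕ) (hd : 1 ≤ d) :
    ∃ K : ℝ, 0 < K ∧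
      ∀ (n : ℕ) (ρ : ℝ) (ζ : Fin n → ℝ → EuclideanSpace ℝ (Fin d)) (x y : ℕ)
        (a b : ℝ) (Q : Fin n → Set ℝ),
        0 ≤ ρ →
        (∀ i : Fin n, LipschitzWith 1 (ζ i)) →
        (∀ (t : ℝ) (i j : Fin n), i ≠ j → 2 * ρ ≤ dist (ζ i t) (ζ j t)) →
        1 ≤ x → x < y → y ≤ n - 1 →
        (∀ (i : Fin n) (t : ℝ), 0 < xSep ρ (fun j => ζ j t) y i) →
        a < b →
        505 * (n : ℝ) ≤
          ∑ i : Fin n, ∫ t in a..b, 1 / (ρ + xSep ρ (fun j => ζ j t) y i) →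
        (∀ t ∈ Set.Icc a (b + (b - a) / 2 ^ 55), ∀ q : EuclideanSpace ℝ (Fin d),
          {i : Fin n | q ∈ uRegionM ρ (ζ i) (Q i) t}.ncard ≤ x) →
        ENNReal.ofReal
            ((((y : ℝ) - (x : ℝ) + 1) / (K * (y : ℝ))) *
              ∑ i : Fin n, ∫ t in a..b, 1 / (ρ + xSep ρ (fun j => ζ j t) y i))
          ≤ ∑ i : Fin n, ((Q i ∩ Set.Icc a (b + (b - a) / 2 ^ 55)).encard : ℝ≥0∞) := by
  obtain ⟨Nd, hN⟩ := PlyBound.cover d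
  set C2 : ℝ := 2 * Nd * (1 / 22 : ℝ) ^ (-(9 / 8) : ℝ) with hC2
  set J : ℝ := ∫ v : ℝ, (1 + |v|) ^ (-(9 / 8) : ℝ) with hJ
  have hC20 : 0 ≤ C2 := by positivity
  have hJ0 : 0 ≤ J := MeasureTheory.integral_nonneg fun v => by positivity
  refine ⟨4 * C2 * J + 1, by positivity, ?_⟩
  intro n ρ ζ x y a b Q hρ hl _ hx hxy hyn hpos hab hH hply
  have h := PlyBound.rad_of ζ ρ y hρ hl (by omega) hyn hpos
  set r : Fin n → ℝ → ℝ := fun i t => ρ + xSep ρ (fun j => ζ j t) y i with hrdef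
  change 505 * (n : ℝ) ≤ ∑ i : Fin n, ∫ t in a..b, 1 / r i t at hH
  change ENNReal.ofReal ((((y : ℝ) - (x : ℝ) + 1) / ((4 * C2 * J + 1) * (y : ℝ))) *
    ∑ i : Fin n, ∫ t in a..b, 1 / r i t) ≤ _
  set H : ℝ := ∑ i : Fin n, ∫ t in a..b, 1 / r i t with hHdef
  have hbd := PlyBound.boundary hab
  set e : ℝ := b + (b - a) / 2 ^ 55 with hedef
  have hbe : b < e := by
    have : 0 < (b - a) / 2 ^ 55 := div_pos (by linarith) (by positivity)
    linarith
  by_cases hfin : ∀ i, (Q i ∩ Set.Icc a e).Finite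
  swap
  · push Not at hfin
    obtain ⟨i, hi⟩ := hfin
    have : ∑ i : Fin n, ((Q i ∩ Set.Icc a e).encard : ℝ≥0∞) = ⊤ := by
      rw [ENNReal.sum_eq_top]
      refine ⟨i, Finset.mem_univ i, ?_⟩
      rw [Set.Infinite.encard_eq hi]; rfl
    rw [this]; exact le_top
  set P : Finset (Σ _ : Fin n, ℝ) := Finset.univ.sigma (fun i => (hfin i).toFinset) with hP
  have hcard : ∑ i : Fin n, ((Q i ∩ Set.Icc a e).encard : ℝ≥0∞) = ENNReal.ofReal P.card := by
    rw [ENNReal.ofReal_natCast, hP, Finset.card_sigma, Nat.cast_sum]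
    refine Finset.sum_congr rfl fun i _ => ?_
    rw [(hfin i).encard_eq_coe_toFinset_card]; rfl
  rw [hcard]
  apply ENNReal.ofReal_le_ofReal
  have hn : 0 < n := by omega
  obtain ⟨m, hm, hmin⟩ : ∃ m : ℝ, 0 < m ∧ ∀ j, ∀ t ∈ Set.Icc a e, m ≤ r j t := by
    have h1 : ∀ j, ∃ s ∈ Set.Icc a e, ∀ t ∈ Set.Icc a e, r j s ≤ r j t := fun j =>
      isCompact_Icc.exists_isMinOn (Set.nonempty_Icc.2 (by linarith)) (h.cont j).continuousOn
    choose s _ hs using h1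
    obtain ⟨j0, -, hj0⟩ := Finset.exists_min_image (Finset.univ : Finset (Fin n))
      (fun j => r j (s j)) ⟨⟨0, hn⟩, Finset.mem_univ _⟩
    exact ⟨r j0 (s j0), h.pos _ _, fun j t ht =>
      le_trans (hj0 j (Finset.mem_univ j)) (hs j t ht)⟩
  have hbox : ∀ i t, a ≤ t → t + 3 * r i t ≤ e →
      ((y + 1 - x : ℕ) : ℝ) / 2 * r i t ^ (1 / 8 : ℝ) ≤
        PlyBound.bw ζ r P (ζ i t) (6 * r i t) t (t + 3 * r i t) := by
    intro i t h1 h2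
    obtain ⟨N, hNN⟩ := pow_unbounded_of_one_lt (r i t / m) (one_lt_two : (1 : ℝ) < 2)
    rw [div_lt_iff₀ hm] at hNN
    refine PlyBound.box h hm hply ?_ hmin N i t h1 h2 (by linarith)
    intro j τ hj h3 h4
    rw [hP, Finset.mem_sigma]
    exact ⟨Finset.mem_univ _, (hfin j).mem_toFinset.2 ⟨hj, h3, h4⟩⟩
  set q : ℝ := ((y + 1 - x : ℕ) : ℝ) with hq
  have hq0 : 0 ≤ q := Nat.cast_nonneg _
  have hqe : (y : ℝ) - x + 1 = q := by
    rw [hq, Nat.cast_sub (by omega)]; push_cast; ring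
  have hrI : ∀ i, IntervalIntegrable (fun t => 1 / r i t) MeasureTheory.volume a b := fun i =>
    (continuous_const.div (h.cont i) (fun t => (h.pos i t).ne')).intervalIntegrable _ _
  have hbI : IntervalIntegrable (fun t => 3 * (1 / (e - t))) MeasureTheory.volume a b := by
    apply ContinuousOn.intervalIntegrable
    rw [Set.uIcc_of_le hab.le]
    apply ContinuousOn.mul continuousOn_const
    apply ContinuousOn.div continuousOn_const (by fun_prop)
    intro t ht
    have := ht.2
    exact ne_of_gt (by linarith)
  have hkI : ∀ z : (Σ _ : Fin n, ℝ), IntervalIntegrable (fun t =>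
      2 * (Nd * y) * (1 / 22 : ℝ) ^ (-(9 / 8) : ℝ) *
        (1 / r z.1 z.2 * (1 + |(t - z.2) / r z.1 z.2|) ^ (-(9 / 8) : ℝ)))
      MeasureTheory.volume a b := fun z =>
    ((PlyBound.kernel_integrable (h.pos z.1 z.2)).const_mul _).intervalIntegrable
  have hsI : IntervalIntegrable (fun t => ∑ i, (1 / r i t - 3 * (1 / (e - t))))
      MeasureTheory.volume a b := by
    have := IntervalIntegrable.sum (Finset.univ : Finset (Fin n))
      (fun i _ => (hrI i).sub hbI)
    rwa [Finset.sum_fn] at this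
  have hzI : IntervalIntegrable (fun t => ∑ z ∈ P,
      2 * (Nd * y) * (1 / 22 : ℝ) ^ (-(9 / 8) : ℝ) *
        (1 / r z.1 z.2 * (1 + |(t - z.2) / r z.1 z.2|) ^ (-(9 / 8) : ℝ)))
      MeasureTheory.volume a b := by
    have := IntervalIntegrable.sum P (fun z _ => hkI z)
    rwa [Finset.sum_fn] at this
  have hmono := intervalIntegral.integral_mono_on hab.le
    (f := fun t => q / 2 * ∑ i, (1 / r i t - 3 * (1 / (e - t))))
    (g := fun t => ∑ z ∈ P, 2 * (Nd * y) * (1 / 22 : ℝ) ^ (-(9 / 8) : ℝ) *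
        (1 / r z.1 z.2 * (1 + |(t - z.2) / r z.1 z.2|) ^ (-(9 / 8) : ℝ)))
    (μ := MeasureTheory.volume)
    (hsI.const_mul _)
    hzI
    (fun t ht => PlyBound.pointwise h hN hq0 ht.1 (lt_of_le_of_lt ht.2 hbe) hbox)
  rw [intervalIntegral.integral_const_mul,
    intervalIntegral.integral_finsetSum (fun i _ => (hrI i).sub hbI),
    intervalIntegral.integral_finsetSum (fun z _ => hkI z)] at hmono
  have hL : H - n * 168 ≤ ∑ i, ∫ t in a..b, (1 / r i t - 3 * (1 / (e - t))) := by
    have : ∀ i ∈ (Finset.univ : Finset (Fin n)), (∫ t in a..b, 1 / r i t) - 168 ≤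
        ∫ t in a..b, (1 / r i t - 3 * (1 / (e - t))) := by
      intro i _
      rw [intervalIntegral.integral_sub (hrI i) hbI]
      linarith
    have h2 := Finset.sum_le_sum this
    rw [Finset.sum_sub_distrib] at h2
    simp only [Finset.sum_const, Finset.card_univ, Fintype.card_fin, nsmul_eq_mul] at h2
    exact h2
  have hR : ∑ z ∈ P, ∫ t in a..b, 2 * (Nd * y) * (1 / 22 : ℝ) ^ (-(9 / 8) : ℝ) *
        (1 / r z.1 z.2 * (1 + |(t - z.2) / r z.1 z.2|) ^ (-(9 / 8) : ℝ)) ≤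
      P.card * (C2 * y * J) := by
    refine le_trans (Finset.sum_le_card_nsmul _ _ (C2 * y * J) ?_) (le_of_eq (nsmul_eq_mul _ _))
    intro z _
    rw [intervalIntegral.integral_const_mul]
    have h1 := PlyBound.kernel_integral (τ := z.2) (h.pos z.1 z.2) hab.le
    calc _ ≤ 2 * (Nd * y) * (1 / 22 : ℝ) ^ (-(9 / 8) : ℝ) * J := by gcongr
      _ = _ := by rw [hC2]; ring
  have hfinal : q / 4 * H ≤ P.card * (C2 * y * J) := by
    have h1 : H / 2 ≤ H - n * 168 := by
      have : (0 : ℝ) ≤ n := Nat.cast_nonneg _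
      linarith
    have h2 := mul_le_mul_of_nonneg_left (le_trans h1 hL) (by positivity : 0 ≤ q / 2)
    linarith
  have hy0 : (0 : ℝ) < y := by exact_mod_cast (by omega : 0 < y)
  rw [hqe, div_mul_eq_mul_div, div_le_iff₀ (by positivity)]
  have : (0 : ℝ) ≤ P.card * y := by positivity
  nlinarith
end

section
/- For every integer d ≥ 1 there exists a constant K = K(d) > 0 with the following property. Let n entities of radius ρ ≥ 0 move in ℝ^d along 1-Lipschitz trajectories ζ_1, …, ζ_n that are non-overlapping at all times, let 1 ≤ x < y ≤ n−1 be integers, and assume σ_i(y,t) > 0 for all i and all t. Let T = [a, b] be a nondegenerate compact time interval, set H(T) := Σ_{i=1}^n ∫_T dt / r_i(y,t), and assume H(T) ≥ 1010·n. Let T⃗ be T shifted to the right by (b−a)/2^55 and T⁺ := T ∪ T⃗. Then for every query schedule whose uncertainty ply is at most x at every time of T⁺, either the number of queries during T is at least ((y − x + 1)/(K·y))·H(T), or the number of queries during T⃗ is at least ((y − x + 1)/(K·y))·H(T). -/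
open Metric Set
open scoped ENNReal

section Static

variable {E : Type*} [NormedAddCommGroup E] [NormedSpace ℝ E]

lemma aux_scale_count {n : ℕ} {y : ℕ} (F : Finset E)
    (hF : closedBall (0 : E) 12 ⊆ ⋃ c ∈ F, ball c (1 / 3))
    (z : Fin n → E) (r : Fin n → ℝ)
    (hy : ∀ i, (Finset.univ.filter fun j => dist (z i) (z j) < r i).card ≤ y)
    (q : E) (l : ℝ) (hl : 0 < l) (I : Finset (Fin n))
    (h1 : ∀ i ∈ I, dist q (z i) ≤ 12 * l) (h2 : ∀ i ∈ I, l ≤ r i) :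
    I.card ≤ F.card * y := by
  classical
  have hsub : I ⊆ F.biUnion fun c => I.filter fun i => dist (l⁻¹ • (z i - q)) c < 1 / 3 := by
    intro i hi
    have : l⁻¹ • (z i - q) ∈ closedBall (0 : E) 12 := by
      rw [mem_closedBall, dist_zero_right, norm_smul, norm_inv, Real.norm_of_nonneg hl.le,
        ← dist_eq_norm, dist_comm, inv_mul_le_iff₀ hl]
      linarith [h1 i hi]
    obtain ⟨c, hc, hd⟩ := mem_iUnion₂.1 (hF this)
    exact Finset.mem_biUnion.2 ⟨c, hc, Finset.mem_filter.2 ⟨hi, hd⟩⟩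
  refine (Finset.card_le_card hsub).trans (Finset.card_biUnion_le_card_mul _ _ _ ?_)
  intro c hc
  by_cases hne : (I.filter fun i => dist (l⁻¹ • (z i - q)) c < 1 / 3).Nonempty
  · obtain ⟨i, hi⟩ := hne
    rw [Finset.mem_filter] at hi
    refine (Finset.card_le_card ?_).trans (hy i)
    intro j hj
    rw [Finset.mem_filter] at hj
    refine Finset.mem_filter.2 ⟨Finset.mem_univ _, lt_of_lt_of_le ?_ (h2 i hi.1)⟩
    have h3 : dist (l⁻¹ • (z i - q)) (l⁻¹ • (z j - q)) < 1 :=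
      lt_of_le_of_lt (dist_triangle_right _ _ c) (by linarith [hi.2, hj.2])
    rw [dist_smul₀, norm_inv, Real.norm_of_nonneg hl.le, dist_sub_right,
      inv_mul_lt_iff₀ hl] at h3
    linarith
  · rw [Finset.not_nonempty_iff_eq_empty] at hne
    rw [hne]; simp

lemma aux_static {n : ℕ} {y : ℕ} (F : Finset E)
    (hF : closedBall (0 : E) 12 ⊆ ⋃ c ∈ F, ball c (1 / 3))
    (z : Fin n → E) (r : Fin n → ℝ)
    (hy : ∀ i, (Finset.univ.filter fun j => dist (z i) (z j) < r i).card ≤ y)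
    (q : E) (m : ℝ) (hm : 0 < m) (I : Finset (Fin n))
    (h1 : ∀ i ∈ I, dist q (z i) ≤ 6 * r i) (h2 : ∀ i ∈ I, m ≤ r i) :
    ∑ i ∈ I, 1 / (r i) ^ 2 ≤ 2 * (F.card * y) / m ^ 2 := by
  classical
  have hk : ∀ i, ∃ k : ℕ, i ∈ I → m * 2 ^ k ≤ r i ∧ r i < m * 2 ^ (k + 1) := by
    intro i
    by_cases hi : i ∈ I
    · obtain ⟨k, hk1, hk2⟩ := exists_nat_pow_near (x := r i / m) (y := (2 : ℝ))
        ((one_le_div hm).2 (h2 i hi)) (by norm_num)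
      refine ⟨k, fun _ => ⟨?_, ?_⟩⟩
      · rw [le_div_iff₀ hm] at hk1; linarith
      · rw [div_lt_iff₀ hm] at hk2; linarith
    · exact ⟨0, fun h => absurd h hi⟩
  choose k hk using hk
  obtain ⟨M, hM⟩ : ∃ M : ℕ, ∀ i, k i < M := by
    refine ⟨(Finset.univ.sup k) + 1, fun i => Nat.lt_succ_of_le (Finset.le_sup (Finset.mem_univ i))⟩
  rw [← Finset.sum_fiberwise_of_maps_to (s := I) (t := Finset.range M) (g := k)
    (fun i _ => Finset.mem_range.2 (hM i))]
  have hb : ∀ j ∈ Finset.range M, ∑ i ∈ I with k i = j, 1 / (r i) ^ 2 ≤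
      ((F.card * y : ℕ) : ℝ) / m ^ 2 * (1 / 2 : ℝ) ^ j := by
    intro j _
    have hl : 0 < m * 2 ^ j := by positivity
    have hc : (I.filter fun i => k i = j).card ≤ F.card * y := by
      apply aux_scale_count F hF z r hy q (m * 2 ^ j) hl
      · intro i hi
        rw [Finset.mem_filter] at hi
        have := hk i hi.1
        rw [hi.2, pow_succ] at this
        linarith [h1 i hi.1]
      · intro i hi
        rw [Finset.mem_filter] at hi
        have := hk i hi.1
        rw [hi.2] at this
        exact this.1
    have h3 : ∑ i ∈ I with k i = j, 1 / (r i) ^ 2 ≤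
        (I.filter fun i => k i = j).card • (1 / (m * 2 ^ j) ^ 2) := by
      apply Finset.sum_le_card_nsmul
      intro i hi
      rw [Finset.mem_filter] at hi
      have := hk i hi.1
      rw [hi.2] at this
      exact one_div_le_one_div_of_le (by positivity) (pow_le_pow_left₀ hl.le this.1 2)
    refine h3.trans ?_
    rw [nsmul_eq_mul]
    have h4 : 1 / (m * 2 ^ j) ^ 2 ≤ 1 / m ^ 2 * (1 / 2 : ℝ) ^ j := by
      have he : 1 / m ^ 2 * (1 / 2 : ℝ) ^ j = 1 / (m ^ 2 * 2 ^ j) := by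
        rw [one_div_pow]; field_simp
      rw [he]
      apply one_div_le_one_div_of_le (by positivity)
      have : (1 : ℝ) ≤ 2 ^ j := one_le_pow₀ (by norm_num)
      have h5 : 0 < m ^ 2 := by positivity
      nlinarith [mul_le_mul_of_nonneg_left this (by positivity : (0:ℝ) ≤ m ^ 2 * 2 ^ j)]
    calc _ ≤ ((F.card * y : ℕ) : ℝ) * (1 / m ^ 2 * (1 / 2 : ℝ) ^ j) := by
            gcongr
      _ = _ := by ring
  refine (Finset.sum_le_sum hb).trans ?_
  rw [← Finset.mul_sum]
  have hg : ∑ j ∈ Finset.range M, (1 / 2 : ℝ) ^ j ≤ 2 := sum_geometric_two_le M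
  have : (0:ℝ) ≤ ((F.card * y : ℕ) : ℝ) / m ^ 2 := by positivity
  calc _ ≤ ((F.card * y : ℕ) : ℝ) / m ^ 2 * 2 := by gcongr
    _ = _ := by push_cast; ring

lemma aux_cover {E : Type*} [NormedAddCommGroup E] [ProperSpace E] : ∃ F : Finset E,
    closedBall (0 : E) 12 ⊆ ⋃ c ∈ F, ball c (1 / 3) := by
  obtain ⟨t, _, ht, hs⟩ := (isCompact_closedBall (0 : E) 12).finite_cover_balls
    (show (0:ℝ) < 1 / 3 by norm_num)
  exact ⟨ht.toFinset, by simpa using hs⟩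

end Static

section Sep

variable {d n : ℕ} {ρ : ℝ} {x : ℕ}

lemma aux_sep_set (z : Fin n → EuclideanSpace ℝ (Fin d)) (i : Fin n) :
    {r : ℝ | x ≤ {j : Fin n | j ≠ i ∧ dist (z i) (z j) - 2 * ρ ≤ r}.ncard} =
      ⋃ A ∈ {A : Finset (Fin n) | i ∉ A ∧ x ≤ A.card},
        ⋂ j ∈ A, Ici (dist (z i) (z j) - 2 * ρ) := by
  classical
  ext r
  simp only [mem_ofPred_eq, mem_iUnion, mem_iInter, mem_Ici, exists_prop]
  constructor
  · intro h
    refine ⟨Finset.univ.filter fun j => j ≠ i ∧ dist (z i) (z j) - 2 * ρ ≤ r, ⟨by simp, ?_⟩, ?_⟩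
    · rwa [← Set.ncard_coe_finset, Finset.coe_filter_univ]
    · intro j hj; exact (Finset.mem_filter.1 hj).2.2
  · rintro ⟨A, ⟨h1, h2⟩, h3⟩
    refine h2.trans ?_
    rw [← Set.ncard_coe_finset]
    apply Set.ncard_le_ncard _ (Set.toFinite _)
    intro j hj
    exact ⟨fun h => h1 (h ▸ hj), h3 j hj⟩

lemma aux_sep_bdd (hx : 1 ≤ x) (z : Fin n → EuclideanSpace ℝ (Fin d)) (i : Fin n) :
    BddBelow {r : ℝ | x ≤ {j : Fin n | j ≠ i ∧ dist (z i) (z j) - 2 * ρ ≤ r}.ncard} := by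
  refine ⟨-(2 * ρ), ?_⟩
  intro r hr
  have : 0 < {j : Fin n | j ≠ i ∧ dist (z i) (z j) - 2 * ρ ≤ r}.ncard :=
    lt_of_lt_of_le hx hr
  obtain ⟨j, _, hj⟩ := (Set.ncard_pos (Set.toFinite _)).1 this
  linarith [dist_nonneg (x := z i) (y := z j)]

lemma aux_sep_mem (hx : 1 ≤ x) (hxn : x ≤ n - 1) (z : Fin n → EuclideanSpace ℝ (Fin d))
    (i : Fin n) :
    x ≤ {j : Fin n | j ≠ i ∧ dist (z i) (z j) - 2 * ρ ≤ xSep ρ z x i}.ncard := by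
  classical
  have hcl : IsClosed {r : ℝ | x ≤ {j : Fin n | j ≠ i ∧ dist (z i) (z j) - 2 * ρ ≤ r}.ncard} := by
    rw [aux_sep_set]
    apply Set.Finite.isClosed_biUnion (Set.toFinite _)
    intro A _
    exact isClosed_biInter fun j _ => isClosed_Ici
  refine hcl.csInf_mem ?_ (aux_sep_bdd hx z i)
  refine ⟨∑ j, |dist (z i) (z j) - 2 * ρ|, ?_⟩
  show x ≤ _
  have : {j : Fin n | j ≠ i ∧ dist (z i) (z j) - 2 * ρ ≤ ∑ j, |dist (z i) (z j) - 2 * ρ|} =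
      ((Finset.univ.erase i : Finset (Fin n)) : Set (Fin n)) := by
    ext j
    simp only [mem_ofPred_eq, Finset.coe_erase, Finset.coe_univ, mem_sdiff, mem_univ, true_and,
      mem_singleton_iff, and_iff_left_iff_imp]
    intro _
    exact (le_abs_self _).trans (Finset.single_le_sum
      (f := fun j => |dist (z i) (z j) - 2 * ρ|) (fun _ _ => abs_nonneg _) (Finset.mem_univ j))
  rw [this, Set.ncard_coe_finset, Finset.card_erase_of_mem (Finset.mem_univ i)]
  simpa using hxn

lemma aux_sep_lip (hx : 1 ≤ x) (hxn : x ≤ n - 1) (z w : Fin n → EuclideanSpace ℝ (Fin d))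
    (e : ℝ) (h : ∀ j, dist (z j) (w j) ≤ e) (i : Fin n) :
    xSep ρ w x i ≤ xSep ρ z x i + 2 * e := by
  apply csInf_le (aux_sep_bdd hx w i)
  show x ≤ _
  refine (aux_sep_mem (ρ := ρ) hx hxn z i).trans (Set.ncard_le_ncard ?_ (Set.toFinite _))
  rintro j ⟨h1, h2⟩
  refine ⟨h1, ?_⟩
  have := dist_triangle4 (w i) (z i) (z j) (w j)
  rw [dist_comm (w i) (z i)] at this
  linarith [h i, h j]

lemma aux_sep_ball (hρ : 0 ≤ ρ) (hx : 1 ≤ x) (z : Fin n → EuclideanSpace ℝ (Fin d)) (i : Fin n) :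
    (Finset.univ.filter fun j => dist (z i) (z j) < ρ + xSep ρ z x i).card ≤ x := by
  by_contra hcon
  push Not at hcon
  set A := (Finset.univ.filter fun j => dist (z i) (z j) < ρ + xSep ρ z x i).erase i with hA
  have hc : x ≤ A.card := by
    have : (Finset.univ.filter fun j => dist (z i) (z j) < ρ + xSep ρ z x i).card - 1 ≤ A.card :=
      Finset.pred_card_le_card_erase
    omega
  have hne : A.Nonempty := Finset.card_pos.1 (by omega)
  obtain ⟨j, hj, hmax⟩ := Finset.exists_max_image A (fun j => dist (z i) (z j) - 2 * ρ) hne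
  have h1 : xSep ρ z x i ≤ dist (z i) (z j) - 2 * ρ := by
    apply csInf_le (aux_sep_bdd hx z i)
    show x ≤ _
    refine hc.trans ?_
    rw [← Set.ncard_coe_finset]
    apply Set.ncard_le_ncard _ (Set.toFinite _)
    intro k hk
    exact ⟨Finset.ne_of_mem_erase hk, hmax k hk⟩
  have h2 := (Finset.mem_filter.1 (Finset.mem_of_mem_erase hj)).2
  linarith

end Sep

/-- Forced queries. -/
lemma aux_forced {d n : ℕ} {ρ : ℝ} (hρ : 0 ≤ ρ) (ζ : Fin n → ℝ → EuclideanSpace ℝ (Fin d))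
    (hζ : ∀ i, LipschitzWith 1 (ζ i)) {x y : ℕ} (hy : 1 ≤ y) (hyn : y ≤ n - 1)
    (Q : Fin n → Set ℝ) (i : Fin n) (t : ℝ)
    (hpos : 0 < xSep ρ (fun j => ζ j t) y i)
    (hply : {j : Fin n | ζ i t ∈ uRegionM ρ (ζ j) (Q j)
      (t + (ρ + xSep ρ (fun j => ζ j t) y i))}.ncard ≤ x) :
    ∃ A : Finset (Fin n), y + 1 ≤ A.card + x ∧ ∀ j ∈ A, ∃ s ∈ Q j,
      t < s ∧ s ≤ t + (ρ + xSep ρ (fun j => ζ j t) y i) ∧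
      dist (ζ j s) (ζ i t) ≤ 3 * (ρ + xSep ρ (fun j => ζ j t) y i) := by
  classical
  set S := xSep ρ (fun j => ζ j t) y i with hS
  set N : Finset (Fin n) := insert i (Finset.univ.filter
    fun j => j ≠ i ∧ dist (ζ i t) (ζ j t) - 2 * ρ ≤ S) with hN
  set U : Finset (Fin n) := Finset.univ.filter
    fun j => ζ i t ∈ uRegionM ρ (ζ j) (Q j) (t + (ρ + S)) with hU
  have hNc : y + 1 ≤ N.card := by
    rw [hN, Finset.card_insert_of_notMem (by simp)]
    have := aux_sep_mem (ρ := ρ) hy hyn (fun j => ζ j t) i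
    rw [← Set.ncard_coe_finset, Finset.coe_filter_univ]
    exact Nat.succ_le_succ this
  have hUc : U.card ≤ x := by
    rw [← Set.ncard_coe_finset, Finset.coe_filter_univ]
    exact hply
  refine ⟨N \ U, ?_, ?_⟩
  · have := Finset.le_card_sdiff U N
    omega
  · intro j hj
    rw [Finset.mem_sdiff] at hj
    obtain ⟨hjN, hjU⟩ := hj
    have hd : dist (ζ j t) (ζ i t) ≤ 2 * ρ + S := by
      rw [hN, Finset.mem_insert, Finset.mem_filter] at hjN
      rcases hjN with h | h
      · rw [h, dist_self]; linarith
      · rw [dist_comm]; linarith [h.2.2]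
    have hlip : ∀ u v, dist (ζ j u) (ζ j v) ≤ |u - v| := by
      intro u v
      have := (hζ j).dist_le_mul u v
      simpa [Real.dist_eq] using this
    have hex : ∃ s ∈ Q j, t < s ∧ s ≤ t + (ρ + S) := by
      by_contra hcon
      push Not at hcon
      apply hjU
      rw [hU, Finset.mem_filter]
      refine ⟨Finset.mem_univ _, ?_⟩
      have heq : Q j ∩ Iic (t + (ρ + S)) = Q j ∩ Iic t := by
        ext s
        simp only [mem_inter_iff, mem_Iic]
        constructor
        · rintro ⟨h1, h2⟩
          refine ⟨h1, ?_⟩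
          by_contra h3
          exact absurd h2 (not_le.2 (hcon s h1 (not_le.1 h3)))
        · rintro ⟨h1, h2⟩
          exact ⟨h1, by linarith⟩
      unfold uRegionM
      rw [heq]
      split_ifs with hne
      · have hp : sSup (Q j ∩ Iic t) ≤ t := csSup_le hne fun s hs => hs.2
        rw [mem_closedBall, dist_comm]
        have h1 := dist_triangle (ζ j (sSup (Q j ∩ Iic t))) (ζ j t) (ζ i t)
        have h2 := hlip (sSup (Q j ∩ Iic t)) t
        rw [abs_sub_comm, abs_of_nonneg (by linarith)] at h2
        linarith
      · exact mem_univ _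
    obtain ⟨s, h1, h2, h3⟩ := hex
    refine ⟨s, h1, h2, h3, ?_⟩
    have h4 := dist_triangle (ζ j s) (ζ j t) (ζ i t)
    have h5 := hlip s t
    rw [abs_of_pos (by linarith)] at h5
    linarith

section Core

variable {E : Type*} [PseudoMetricSpace E] {n : ℕ}

/-- The large window of the entity `i` at time `t` contains the query `q`. -/
def InW (ζ : Fin n → ℝ → E) (r : Fin n → ℝ → ℝ) (a e : ℝ) (i : Fin n) (t : ℝ)
    (q : (_ : Fin n) × ℝ) : Prop :=
  a ≤ t ∧ t + 6 * r i t ≤ e ∧ t < q.2 ∧ q.2 ≤ t + 6 * r i t ∧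
    dist (ζ q.1 q.2) (ζ i t) ≤ 6 * r i t

/-- The local scale of a query. -/
noncomputable def lam (ζ : Fin n → ℝ → E) (r : Fin n → ℝ → ℝ) (a e : ℝ)
    (q : (_ : Fin n) × ℝ) : ℝ :=
  sInf {v | ∃ i t, InW ζ r a e i t q ∧ v = r i t}

variable {ζ : Fin n → ℝ → E} {r : Fin n → ℝ → ℝ} {a e : ℝ}

lemma lam_nonneg (hr : ∀ i t, 0 < r i t) (q : (_ : Fin n) × ℝ) : 0 ≤ lam ζ r a e q := by
  apply Real.sInf_nonneg
  rintro v ⟨i, t, _, rfl⟩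
  exact (hr i t).le

lemma lam_le (hr : ∀ i t, 0 < r i t) {q : (_ : Fin n) × ℝ} {i : Fin n} {t : ℝ}
    (h : InW ζ r a e i t q) : lam ζ r a e q ≤ r i t := by
  apply csInf_le
  · refine ⟨0, ?_⟩
    rintro v ⟨i, t, _, rfl⟩
    exact (hr i t).le
  · exact ⟨i, t, h, rfl⟩

open Classical in
lemma aux_path (hr : ∀ i t, 0 < r i t) (hζ : ∀ i s t, dist (ζ i s) (ζ i t) ≤ |s - t|)
    (hlip : ∀ i s t, r i s ≤ r i t + 2 * |s - t|) (P : Finset ((_ : Fin n) × ℝ)) (w : ℝ)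
    (hw : 0 ≤ w)
    (hforce : ∀ i t, a ≤ t → t + r i t ≤ e → w ≤ ((P.filter fun q => t < q.2 ∧ q.2 ≤ t + r i t ∧
      dist (ζ q.1 q.2) (ζ i t) ≤ 3 * r i t).card : ℝ))
    (m : ℝ) (hm : 0 < m) (hmr : ∀ i t, a ≤ t → t ≤ e → m ≤ r i t)
    (i : Fin n) (t : ℝ) (hat : a ≤ t) (het : t + 6 * r i t ≤ e) (k : ℕ) :
    ∀ (ii : Fin n) (tt S : ℝ), t ≤ tt → (tt - t) + 5 * r ii tt ≤ 11 * S + 5 * r i t →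
      dist (ζ ii tt) (ζ i t) + 5 * r ii tt ≤ 11 * S + 5 * r i t →
      r ii tt - 3 * S ≤ k * (m / 2) - r i t →
      (w / 65) * S ≤ ∑ q ∈ P.filter (fun q => InW ζ r a e i t q ∧ q.2 ≤ tt), lam ζ r a e q →
      (w / 65) * (r i t / 11) ≤ ∑ q ∈ P.filter (fun q => InW ζ r a e i t q), lam ζ r a e q := by
  have hdone : ∀ (tt S : ℝ), r i t ≤ 11 * S →
      (w / 65) * S ≤ ∑ q ∈ P.filter (fun q => InW ζ r a e i t q ∧ q.2 ≤ tt), lam ζ r a e q →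
      (w / 65) * (r i t / 11) ≤ ∑ q ∈ P.filter (fun q => InW ζ r a e i t q), lam ζ r a e q := by
    intro tt S h1 h2
    calc (w / 65) * (r i t / 11) ≤ (w / 65) * S := by
          apply mul_le_mul_of_nonneg_left (by linarith) (by positivity)
      _ ≤ _ := h2
      _ ≤ _ := by
        apply Finset.sum_le_sum_of_subset_of_nonneg
        · intro q hq
          rw [Finset.mem_filter] at hq ⊢
          exact ⟨hq.1, hq.2.1⟩
        · intro q _ _
          exact lam_nonneg hr q
  induction k with
  | zero =>
    intro ii tt S _ _ _ h4 h5
    apply hdone tt S _ h5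
    have := hr ii tt
    have := hr i t
    simp only [Nat.cast_zero, zero_mul] at h4
    linarith
  | succ k ih =>
    intro ii tt S h1 h2 h3 h4 h5
    by_cases hS : r i t ≤ 11 * S
    · exact hdone tt S hS h5
    push Not at hS
    have hR := hr i t
    have hrr := hr ii tt
    have hd0 := dist_nonneg (x := ζ ii tt) (y := ζ i t)
    have hmm : m ≤ r ii tt := hmr ii tt (by linarith) (by linarith)
    push_cast at h4
    set ws := P.filter fun q => tt < q.2 ∧ q.2 ≤ tt + r ii tt ∧
      dist (ζ q.1 q.2) (ζ ii tt) ≤ 3 * r ii tt with hws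
    have hwc : w ≤ (ws.card : ℝ) := hforce ii tt (by linarith) (by linarith)
    have hwW : ∀ q ∈ ws, InW ζ r a e i t q := by
      intro q hq
      rw [hws, Finset.mem_filter] at hq
      obtain ⟨_, g1, g2, g3⟩ := hq
      have := dist_triangle (ζ q.1 q.2) (ζ ii tt) (ζ i t)
      exact ⟨hat, het, by linarith, by linarith, by linarith⟩
    by_cases hgood : ∀ q ∈ ws, r ii tt / 65 ≤ lam ζ r a e q
    · -- good step
      have hl := hlip ii (tt + r ii tt) tt
      have hz := hζ ii (tt + r ii tt) tt
      rw [add_sub_cancel_left, abs_of_pos hrr] at hl hz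
      have htri := dist_triangle (ζ ii (tt + r ii tt)) (ζ ii tt) (ζ i t)
      refine ih ii (tt + r ii tt) (S + r ii tt) (by linarith) (by linarith) (by linarith)
        (by linarith) ?_
      have hdisj : Disjoint (P.filter (fun q => InW ζ r a e i t q ∧ q.2 ≤ tt)) ws := by
        rw [Finset.disjoint_left]
        intro q hq hq2
        rw [Finset.mem_filter] at hq
        rw [hws, Finset.mem_filter] at hq2
        linarith [hq.2.2, hq2.2.1]
      have hsub : (P.filter (fun q => InW ζ r a e i t q ∧ q.2 ≤ tt)) ∪ ws ⊆
          P.filter (fun q => InW ζ r a e i t q ∧ q.2 ≤ tt + r ii tt) := by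
        intro q hq
        rw [Finset.mem_union] at hq
        rw [Finset.mem_filter]
        rcases hq with hq | hq
        · rw [Finset.mem_filter] at hq
          exact ⟨hq.1, hq.2.1, by linarith [hq.2.2]⟩
        · have hq2 := hq
          rw [hws, Finset.mem_filter] at hq2
          exact ⟨hq2.1, hwW q hq, hq2.2.2.1⟩
      have hsum : w * (r ii tt / 65) ≤ ∑ q ∈ ws, lam ζ r a e q := by
        calc w * (r ii tt / 65) ≤ ws.card * (r ii tt / 65) := by gcongr
          _ = ws.card • (r ii tt / 65) := by rw [nsmul_eq_mul]
          _ ≤ _ := Finset.card_nsmul_le_sum _ _ _ hgood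
      calc (w / 65) * (S + r ii tt) = (w / 65) * S + w * (r ii tt / 65) := by ring
        _ ≤ _ := add_le_add h5 hsum
        _ = _ := (Finset.sum_union hdisj).symm
        _ ≤ _ := Finset.sum_le_sum_of_subset_of_nonneg hsub fun q _ _ => lam_nonneg hr q
    · -- bad step
      push Not at hgood
      obtain ⟨q, hq, hql⟩ := hgood
      obtain ⟨v, ⟨j, u, hju, rfl⟩, hv⟩ := exists_lt_of_csInf_lt
        (⟨r i t, i, t, hwW q hq, rfl⟩ :
          {v | ∃ i t, InW ζ r a e i t q ∧ v = r i t}.Nonempty) hql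
      rw [hws, Finset.mem_filter] at hq
      obtain ⟨_, g1, g2, g3⟩ := hq
      obtain ⟨f1, f2, f3, f4, f5⟩ := hju
      have hu : max u tt - u ≤ 6 * r j u := by
        rcases le_total u tt with h | h
        · rw [max_eq_right h]; linarith
        · rw [max_eq_left h]; linarith [hr j u]
      have hu0 : 0 ≤ max u tt - u := by linarith [le_max_left u tt]
      have hu1 : max u tt ≤ tt + r ii tt := max_le (by linarith) (by linarith)
      have hl := hlip j (max u tt) u
      have hz := hζ j (max u tt) u
      rw [abs_of_nonneg hu0] at hl hz
      have htri := dist_triangle4 (ζ j (max u tt)) (ζ j u) (ζ q.1 q.2) (ζ ii tt)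
      have htri2 := dist_triangle (ζ j (max u tt)) (ζ ii tt) (ζ i t)
      rw [dist_comm (ζ j u)] at htri
      have hrj : r j (max u tt) ≤ r ii tt / 5 := by linarith
      refine ih j (max u tt) S (h1.trans (le_max_right _ _)) (by linarith) (by linarith)
        (by linarith) (h5.trans ?_)
      apply Finset.sum_le_sum_of_subset_of_nonneg
      · intro q hq
        rw [Finset.mem_filter] at hq ⊢
        exact ⟨hq.1, hq.2.1, hq.2.2.trans (le_max_right _ _)⟩
      · intro q _ _
        exact lam_nonneg hr q

open Classical in
lemma aux_path_main (hr : ∀ i t, 0 < r i t) (hζ : ∀ i s t, dist (ζ i s) (ζ i t) ≤ |s - t|)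
    (hlip : ∀ i s t, r i s ≤ r i t + 2 * |s - t|) (P : Finset ((_ : Fin n) × ℝ)) (w : ℝ)
    (hw : 0 ≤ w)
    (hforce : ∀ i t, a ≤ t → t + r i t ≤ e → w ≤ ((P.filter fun q => t < q.2 ∧ q.2 ≤ t + r i t ∧
      dist (ζ q.1 q.2) (ζ i t) ≤ 3 * r i t).card : ℝ))
    (m : ℝ) (hm : 0 < m) (hmr : ∀ i t, a ≤ t → t ≤ e → m ≤ r i t)
    (i : Fin n) (t : ℝ) (hat : a ≤ t) (het : t + 6 * r i t ≤ e) :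
    (w / 715) * r i t ≤ ∑ q ∈ P, if InW ζ r a e i t q then lam ζ r a e q else 0 := by
  obtain ⟨k, hk⟩ := exists_nat_ge (2 * r i t / (m / 2))
  rw [div_le_iff₀ (by positivity)] at hk
  have := aux_path hr hζ hlip P w hw hforce m hm hmr i t hat het k i t 0 le_rfl (by simp)
    (by simp) (by linarith) (by
      rw [mul_zero]; exact Finset.sum_nonneg fun q _ => lam_nonneg hr q)
  rw [← Finset.sum_filter]
  linarith

end Core

section Integrals

lemma aux_log {a b : ℝ} (hab : a < b) :
    ∫ t in a..b, 6 / (b + (b - a) / 2 ^ 55 - t) ≤ 234 := by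
  have hd : 0 < (b - a) / 2 ^ 55 := by
    have : 0 < b - a := by linarith
    positivity
  set δ := (b - a) / 2 ^ 55 with hδ
  have hba : b - a = 2 ^ 55 * δ := by rw [hδ]; ring
  have hI : ∫ t in a..b, 6 / (b + δ - t) = 6 * Real.log ((2 ^ 55 + 1 : ℝ)) := by
    have h1 : ∀ t ∈ uIcc a b, HasDerivAt (fun t => -6 * Real.log (b + δ - t))
        (6 / (b + δ - t)) t := by
      intro t ht
      rw [uIcc_of_le hab.le] at ht
      have hpos : b + δ - t ≠ 0 := by linarith [ht.2]
      have := (((hasDerivAt_id t).const_sub (b + δ)).log hpos).const_mul (-6)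
      refine HasDerivAt.congr_deriv this ?_
      simp only [id]
      ring
    rw [intervalIntegral.integral_eq_sub_of_hasDerivAt h1]
    · have e1 : b + δ - b = δ := by ring
      have e2 : b + δ - a = (2 ^ 55 + 1) * δ := by linarith
      rw [e1, e2, Real.log_mul (by norm_num) hd.ne']
      ring
    · apply ContinuousOn.intervalIntegrable
      apply ContinuousOn.div (by fun_prop) (by fun_prop)
      intro t ht
      rw [uIcc_of_le hab.le] at ht
      linarith [ht.2]
  rw [hI]
  have h2 : Real.log (2 ^ 55 + 1 : ℝ) ≤ Real.log ((2:ℝ) ^ 56) :=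
    Real.log_le_log (by norm_num) (by norm_num)
  rw [Real.log_pow] at h2
  have := Real.log_two_lt_d9
  push_cast at h2
  linarith

lemma aux_arctan (a b s l : ℝ) (hl : 0 < l) :
    ∫ t in a..b, 1 / (l ^ 2 + (s - t) ^ 2 / 36) ≤ 24 / l := by
  have h1 : ∀ t ∈ uIcc a b, HasDerivAt (fun t => (-6 / l) * Real.arctan ((s - t) / (6 * l)))
        (1 / (l ^ 2 + (s - t) ^ 2 / 36)) t := by
    intro t _
    have := ((((hasDerivAt_id t).const_sub s).div_const (6 * l)).arctan).const_mul (-6 / l)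
    refine HasDerivAt.congr_deriv this ?_
    simp only [id]
    have : l ^ 2 + (s - t) ^ 2 / 36 ≠ 0 := by positivity
    have : 1 + ((s - t) / (6 * l)) ^ 2 ≠ 0 := by positivity
    field_simp
    ring
  rw [intervalIntegral.integral_eq_sub_of_hasDerivAt h1]
  · have p1 := Real.arctan_lt_pi_div_two ((s - a) / (6 * l))
    have p2 := Real.neg_pi_div_two_lt_arctan ((s - b) / (6 * l))
    have p3 := Real.pi_lt_four
    have : (-6 / l) * Real.arctan ((s - b) / (6 * l)) - (-6 / l) * Real.arctan ((s - a) / (6 * l))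
      = 6 * (Real.arctan ((s - a) / (6 * l)) - Real.arctan ((s - b) / (6 * l))) / l := by ring
    rw [this]
    gcongr
    linarith
  · apply Continuous.intervalIntegrable
    apply Continuous.div (by fun_prop) (by fun_prop)
    intro t
    positivity

variable {E : Type*} [NormedAddCommGroup E] [NormedSpace ℝ E] {n : ℕ}

open Classical in
lemma aux_core {ζ : Fin n → ℝ → E} {r : Fin n → ℝ → ℝ} {a b : ℝ} (hab : a < b)
    (hr : ∀ i t, 0 < r i t) (hζ : ∀ i s t, dist (ζ i s) (ζ i t) ≤ |s - t|)
    (hlip : ∀ i s t, r i s ≤ r i t + 2 * |s - t|) (P : Finset ((_ : Fin n) × ℝ)) (w : ℝ)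
    (hw : 0 < w)
    (hforce : ∀ i t, a ≤ t → t + r i t ≤ b + (b - a) / 2 ^ 55 →
      w ≤ ((P.filter fun q => t < q.2 ∧ q.2 ≤ t + r i t ∧
      dist (ζ q.1 q.2) (ζ i t) ≤ 3 * r i t).card : ℝ))
    (F : Finset E) (hF : closedBall (0 : E) 12 ⊆ ⋃ c ∈ F, ball c (1 / 3)) (y : ℕ)
    (hy : ∀ t i, (Finset.univ.filter fun j => dist (ζ i t) (ζ j t) < r i t).card ≤ y) :
    ∑ i, ∫ t in a..b, 1 / r i t ≤ 234 * n + (715 / w) * (P.card * (96 * (F.card * y))) := by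
  have hrc : ∀ i, Continuous (r i) := by
    intro i
    refine (LipschitzWith.of_le_add_mul 2 ?_).continuous
    intro s t
    simpa [Real.dist_eq] using hlip i s t
  have hζc : ∀ i, Continuous (ζ i) := by
    intro i
    refine (LipschitzWith.of_dist_le_mul (K := 1) ?_).continuous
    intro s t
    simpa [Real.dist_eq] using hζ i s t
  set e := b + (b - a) / 2 ^ 55 with he
  have hbe : b < e := by
    have : 0 < (b - a) / 2 ^ 55 := div_pos (by linarith) (by positivity)
    linarith
  obtain ⟨m, hm, hmr⟩ : ∃ m : ℝ, 0 < m ∧ ∀ i t, a ≤ t → t ≤ e → m ≤ r i t := by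
    have h1 : ∀ i, ∃ m : ℝ, 0 < m ∧ ∀ t, a ≤ t → t ≤ e → m ≤ r i t := by
      intro i
      obtain ⟨t0, _, h0⟩ := (isCompact_Icc (a := a) (b := e)).exists_isMinOn
        ⟨a, by constructor <;> linarith⟩ (hrc i).continuousOn
      exact ⟨r i t0, hr i t0, fun t h1 h2 => h0 ⟨h1, h2⟩⟩
    choose M hM hM2 using h1
    by_cases hn : Nonempty (Fin n)
    · obtain ⟨i0, _, hi0⟩ := Finset.exists_min_image Finset.univ M Finset.univ_nonempty
      exact ⟨M i0, hM i0, fun i t h1 h2 => (hi0 i (Finset.mem_univ _)).trans (hM2 i t h1 h2)⟩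
    · exact ⟨1, one_pos, fun i => absurd ⟨i⟩ hn⟩
  set f : ((_ : Fin n) × ℝ) → Fin n → ℝ → ℝ := fun q i t =>
    if InW ζ r a e i t q then lam ζ r a e q / (r i t) ^ 2 else 0 with hf
  have hfint : ∀ q i, IntervalIntegrable (f q i) MeasureTheory.volume a b := by
    intro q i
    have hg : IntervalIntegrable (fun t => lam ζ r a e q / (r i t) ^ 2)
        MeasureTheory.volume a b := by
      apply Continuous.intervalIntegrable
      exact continuous_const.div ((hrc i).pow 2) fun t => (pow_pos (hr i t) 2).ne'
    have hS : MeasurableSet {t | InW ζ r a e i t q} := by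
      have hc := hrc i
      have hz := hζc i
      refine MeasurableSet.inter ?_ (MeasurableSet.inter ?_ (MeasurableSet.inter ?_
        (MeasurableSet.inter ?_ ?_)))
      · exact (isClosed_le continuous_const continuous_id).measurableSet
      · exact (isClosed_le (f := fun t => t + 6 * r i t) (g := fun _ => e)
          (by fun_prop) (by fun_prop)).measurableSet
      · exact (isOpen_lt continuous_id continuous_const).measurableSet
      · exact (isClosed_le (f := fun _ => q.2) (g := fun t => t + 6 * r i t)
          (by fun_prop) (by fun_prop)).measurableSet
      · exact (isClosed_le (f := fun t => dist (ζ q.1 q.2) (ζ i t)) (g := fun t => 6 * r i t)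
          (by fun_prop) (by fun_prop)).measurableSet
    rw [intervalIntegrable_iff] at hg ⊢
    have := hg.indicator hS
    refine this.congr (Filter.Eventually.of_forall fun t => ?_)
    simp only [hf, Set.indicator]
    rfl
  have hloadpt : ∀ q, 0 < lam ζ r a e q → ∀ t, ∑ i, f q i t ≤
      (lam ζ r a e q * (4 * (F.card * y))) * (1 / ((lam ζ r a e q) ^ 2 + (q.2 - t) ^ 2 / 36)) := by
    intro q hq t
    set l := lam ζ r a e q with hl
    have hmx : 0 < max l ((q.2 - t) / 6) := lt_of_lt_of_le hq (le_max_left _ _)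
    have h1 := aux_static F hF (fun i => ζ i t) (fun i => r i t) (hy t) (ζ q.1 q.2)
      (max l ((q.2 - t) / 6)) hmx (Finset.univ.filter fun i => InW ζ r a e i t q)
      (fun i hi => (Finset.mem_filter.1 hi).2.2.2.2.2)
      (fun i hi => max_le (lam_le hr (Finset.mem_filter.1 hi).2) (by
        have := (Finset.mem_filter.1 hi).2.2.2.2.1
        linarith))
    by_cases hts : q.2 ≤ t
    · have : ∑ i, f q i t = 0 := by
        apply Finset.sum_eq_zero
        intro i _
        simp only [hf]
        rw [if_neg]
        intro h
        exact absurd h.2.2.1 (not_lt.2 hts)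
      rw [this]
      positivity
    push Not at hts
    have h2 : ∑ i, f q i t =
        l * ∑ i ∈ Finset.univ.filter (fun i => InW ζ r a e i t q), 1 / (r i t) ^ 2 := by
      rw [Finset.mul_sum, Finset.sum_filter]
      apply Finset.sum_congr rfl
      intro i _
      simp only [hf]
      split_ifs
      · ring
      · rfl
    rw [h2]
    have h3 : 1 / (max l ((q.2 - t) / 6)) ^ 2 ≤ 2 * (1 / (l ^ 2 + (q.2 - t) ^ 2 / 36)) := by
      rw [mul_one_div, div_le_div_iff₀ (by positivity) (by positivity)]
      have h4 : l ^ 2 ≤ (max l ((q.2 - t) / 6)) ^ 2 :=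
        pow_le_pow_left₀ hq.le (le_max_left _ _) 2
      have h5 : ((q.2 - t) / 6) ^ 2 ≤ (max l ((q.2 - t) / 6)) ^ 2 :=
        pow_le_pow_left₀ (by linarith) (le_max_right _ _) 2
      rw [div_pow] at h5
      linarith
    calc l * ∑ i ∈ Finset.univ.filter (fun i => InW ζ r a e i t q), 1 / (r i t) ^ 2
        ≤ l * (2 * (F.card * y) / (max l ((q.2 - t) / 6)) ^ 2) := by gcongr
      _ = l * (2 * (F.card * y)) * (1 / (max l ((q.2 - t) / 6)) ^ 2) := by ring
      _ ≤ l * (2 * (F.card * y)) * (2 * (1 / (l ^ 2 + (q.2 - t) ^ 2 / 36))) := by gcongr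
      _ = _ := by ring
  have hload : ∀ q, ∑ i, ∫ t in a..b, f q i t ≤ 96 * (F.card * y) := by
    intro q
    rw [← intervalIntegral.integral_finsetSum fun i _ => hfint q i]
    rcases (lam_nonneg (ζ := ζ) (a := a) (e := e) hr q).eq_or_lt with h0 | h0
    · have : ∀ t, ∑ i, f q i t = 0 := by
        intro t
        apply Finset.sum_eq_zero
        intro i _
        simp only [hf, ← h0]
        simp
      simp only [this]
      simp only [intervalIntegral.integral_zero]
      positivity
    · set l := lam ζ r a e q with hl
      calc ∫ t in a..b, ∑ i, f q i t
          ≤ ∫ t in a..b, (l * (4 * (F.card * y))) * (1 / (l ^ 2 + (q.2 - t) ^ 2 / 36)) := by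
            apply intervalIntegral.integral_mono_on hab.le
            · have := IntervalIntegrable.sum (μ := MeasureTheory.volume) (a := a) (b := b)
                Finset.univ (f := fun i => f q i) fun i _ => hfint q i
              have hh : (fun t => ∑ i, f q i t) = ∑ i, f q i := by
                funext t
                simp
              rw [hh]
              exact this
            · apply Continuous.intervalIntegrable
              apply continuous_const.mul
              apply Continuous.div (by fun_prop) (by fun_prop)
              intro t
              positivity
            · intro t _
              exact hloadpt q h0 t
        _ = (l * (4 * (F.card * y))) * ∫ t in a..b, (1 / (l ^ 2 + (q.2 - t) ^ 2 / 36)) :=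
            intervalIntegral.integral_const_mul _ _
        _ ≤ (l * (4 * (F.card * y))) * (24 / l) := by
            have := aux_arctan a b q.2 l h0
            gcongr
        _ = _ := by field_simp; ring
  have hone : ∀ i, ∫ t in a..b, 1 / r i t ≤
      234 + (715 / w) * ∑ q ∈ P, ∫ t in a..b, f q i t := by
    intro i
    have i1 : IntervalIntegrable (fun t => 6 / (e - t)) MeasureTheory.volume a b := by
      apply ContinuousOn.intervalIntegrable
      apply ContinuousOn.div (by fun_prop) (by fun_prop)
      intro t ht
      rw [uIcc_of_le hab.le] at ht
      linarith [ht.2]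
    have i2 : IntervalIntegrable (fun t => ∑ q ∈ P, f q i t) MeasureTheory.volume a b := by
      have := IntervalIntegrable.sum (μ := MeasureTheory.volume) (a := a) (b := b)
                P (f := fun q => f q i) fun q _ => hfint q i
      have hh : (fun t => ∑ q ∈ P, f q i t) = ∑ q ∈ P, f q i := by
        funext t
        simp
      rw [hh]
      exact this
    calc ∫ t in a..b, 1 / r i t
        ≤ ∫ t in a..b, (6 / (e - t) + (715 / w) * ∑ q ∈ P, f q i t) := by
          apply intervalIntegral.integral_mono_on hab.le
          · apply Continuous.intervalIntegrable
            exact continuous_const.div (hrc i) fun t => (hr i t).ne'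
          · exact i1.add (i2.const_mul _)
          · intro t ht
            have hrt := hr i t
            have het : 0 < e - t := by linarith [ht.2]
            have hf0 : 0 ≤ ∑ q ∈ P, f q i t := by
              apply Finset.sum_nonneg
              intro q _
              simp only [hf]
              split_ifs
              · exact div_nonneg (lam_nonneg hr q) (by positivity)
              · exact le_rfl
            by_cases hel : t + 6 * r i t ≤ e
            · have hp := aux_path_main hr hζ hlip P w hw.le hforce m hm hmr i t ht.1 hel
              have h1 : ∑ q ∈ P, f q i t =
                  (∑ q ∈ P, if InW ζ r a e i t q then lam ζ r a e q else 0) / (r i t) ^ 2 := by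
                rw [Finset.sum_div]
                apply Finset.sum_congr rfl
                intro q _
                simp only [hf]
                split_ifs
                · rfl
                · simp
              have h2 : 1 / r i t ≤ (715 / w) * ∑ q ∈ P, f q i t := by
                rw [h1]
                calc 1 / r i t = (715 / w) * (((w / 715) * r i t) / (r i t) ^ 2) := by
                      field_simp
                  _ ≤ _ := by gcongr
              have h3 : 0 ≤ 6 / (e - t) := by positivity
              linarith
            · push Not at hel
              have h2 : 1 / r i t ≤ 6 / (e - t) := by
                rw [div_le_div_iff₀ hrt het]
                linarith
              have h3 : 0 ≤ (715 / w) * ∑ q ∈ P, f q i t := by positivity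
              linarith
      _ = (∫ t in a..b, 6 / (e - t)) + (715 / w) * ∑ q ∈ P, ∫ t in a..b, f q i t := by
          rw [intervalIntegral.integral_add i1 (i2.const_mul _),
            intervalIntegral.integral_const_mul,
            intervalIntegral.integral_finsetSum fun q _ => hfint q i]
      _ ≤ _ := by
          have := aux_log hab
          gcongr
  calc ∑ i, ∫ t in a..b, 1 / r i t
      ≤ ∑ i, (234 + (715 / w) * ∑ q ∈ P, ∫ t in a..b, f q i t) :=
        Finset.sum_le_sum fun i _ => hone i
    _ = 234 * n + (715 / w) * ∑ q ∈ P, ∑ i, ∫ t in a..b, f q i t := by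
        rw [Finset.sum_add_distrib, ← Finset.mul_sum, Finset.sum_comm]
        simp [mul_comm]
    _ ≤ 234 * n + (715 / w) * ∑ q ∈ P, (96 * (F.card * y) : ℝ) := by
        gcongr with q _
        exact hload q
    _ = _ := by
        rw [Finset.sum_const, nsmul_eq_mul]

end Integrals

lemma aux_arith (w p f y H : ℝ) (hw : 0 < w) (hp : 0 ≤ p) (hf : 0 ≤ f) (hy : 0 < y)
    (h : H ≤ 2 * ((715 / w) * (p * (96 * (f * y))))) :
    w / (4 * 715 * 96 * (f + 1) * y) * H ≤ p / 2 := by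
  have h1 : w * H ≤ 2 * 715 * 96 * (p * f * y) := by
    calc w * H ≤ w * (2 * ((715 / w) * (p * (96 * (f * y))))) :=
          mul_le_mul_of_nonneg_left h hw.le
      _ = _ := by field_simp
  have hpy : 0 ≤ p * y := by positivity
  rw [div_mul_eq_mul_div, div_le_iff₀ (by positivity)]
  nlinarith

theorem stmt12 (d : ℕ) (hd : 1 ≤ d) :
    ∃ K : ℝ, 0 < K ∧
      ∀ (n : ℕ) (ρ : ℝ) (ζ : Fin n → ℝ → EuclideanSpace ℝ (Fin d)) (x y : ℕ)
        (a b : ℝ) (Q : Fin n → Set ℝ),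
        0 ≤ ρ →
        (∀ i : Fin n, LipschitzWith 1 (ζ i)) →
        (∀ (t : ℝ) (i j : Fin n), i ≠ j → 2 * ρ ≤ dist (ζ i t) (ζ j t)) →
        1 ≤ x → x < y → y ≤ n - 1 →
        (∀ (i : Fin n) (t : ℝ), 0 < xSep ρ (fun j => ζ j t) y i) →
        a < b →
        1010 * (n : ℝ) ≤
          ∑ i : Fin n, ∫ t in a..b, 1 / (ρ + xSep ρ (fun j => ζ j t) y i) →
        (∀ t ∈ Set.Icc a b ∪
            Set.Icc (a + (b - a) / 2 ^ 55) (b + (b - a) / 2 ^ 55),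
          ∀ q : EuclideanSpace ℝ (Fin d),
          {i : Fin n | q ∈ uRegionM ρ (ζ i) (Q i) t}.ncard ≤ x) →
        ENNReal.ofReal
            ((((y : ℝ) - (x : ℝ) + 1) / (K * (y : ℝ))) *
              ∑ i : Fin n, ∫ t in a..b, 1 / (ρ + xSep ρ (fun j => ζ j t) y i))
          ≤ ∑ i : Fin n, ((Q i ∩ Set.Icc a b).encard : ℝ≥0∞) ∨
        ENNReal.ofReal
            ((((y : ℝ) - (x : ℝ) + 1) / (K * (y : ℝ))) *
              ∑ i : Fin n, ∫ t in a..b, 1 / (ρ + xSep ρ (fun j => ζ j t) y i))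
          ≤ ∑ i : Fin n,
              ((Q i ∩ Set.Icc (a + (b - a) / 2 ^ 55) (b + (b - a) / 2 ^ 55)).encard : ℝ≥0∞) := by
  classical
  obtain ⟨F, hF⟩ := aux_cover (E := EuclideanSpace ℝ (Fin d))
  refine ⟨4 * 715 * 96 * (F.card + 1), by positivity, ?_⟩
  intro n ρ ζ x y a b Q hρ hζ hno hx hxy hyn hsep hab hH hply
  set H := ∑ i : Fin n, ∫ t in a..b, 1 / (ρ + xSep ρ (fun j => ζ j t) y i) with hHdef
  set δ := (b - a) / 2 ^ 55 with hδ
  have hδ0 : 0 < δ := div_pos (by linarith) (by positivity)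
  have hδ1 : δ ≤ b - a := div_le_self (by linarith) (by norm_num)
  have hy1 : 1 ≤ y := by omega
  by_cases hinf1 : ∃ i, (Q i ∩ Icc a b).Infinite
  · obtain ⟨i, hi⟩ := hinf1
    left
    have : ∑ i : Fin n, ((Q i ∩ Set.Icc a b).encard : ℝ≥0∞) = ⊤ := by
      apply ENNReal.sum_eq_top.2
      exact ⟨i, Finset.mem_univ _, by rw [hi.encard_eq]; rfl⟩
    rw [this]
    exact le_top
  by_cases hinf2 : ∃ i, (Q i ∩ Icc (a + δ) (b + δ)).Infinite
  · obtain ⟨i, hi⟩ := hinf2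
    right
    have : ∑ i : Fin n, ((Q i ∩ Set.Icc (a + δ) (b + δ)).encard : ℝ≥0∞) = ⊤ := by
      apply ENNReal.sum_eq_top.2
      exact ⟨i, Finset.mem_univ _, by rw [hi.encard_eq]; rfl⟩
    rw [this]
    exact le_top
  simp only [not_exists, Set.not_infinite] at hinf1 hinf2
  have hun : Icc a (b + δ) = Icc a b ∪ Icc (a + δ) (b + δ) := by
    ext t
    simp only [mem_union, mem_Icc]
    constructor
    · rintro ⟨h1, h2⟩
      rcases le_total t b with h | h
      · exact Or.inl ⟨h1, h⟩
      · exact Or.inr ⟨by linarith, h2⟩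
    · rintro (⟨h1, h2⟩ | ⟨h1, h2⟩)
      · exact ⟨h1, by linarith⟩
      · exact ⟨by linarith, h2⟩
  set P : Finset ((_ : Fin n) × ℝ) := Finset.univ.sigma
    fun i => (hinf1 i).toFinset ∪ (hinf2 i).toFinset with hP
  have hmemP : ∀ i s, s ∈ Q i → a ≤ s → s ≤ b + δ → (⟨i, s⟩ : (_ : Fin n) × ℝ) ∈ P := by
    intro i s hs h1 h2
    have h3 : s ∈ Icc a b ∪ Icc (a + δ) (b + δ) := hun ▸ ⟨h1, h2⟩
    simp only [hP, Finset.mem_sigma, Finset.mem_univ, true_and, Finset.mem_union,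
      Set.Finite.mem_toFinset]
    rcases h3 with h3 | h3
    · exact Or.inl ⟨hs, h3⟩
    · exact Or.inr ⟨hs, h3⟩
  have hPcard : (P.card : ℝ) ≤ ∑ i, ((Q i ∩ Icc a b).ncard : ℝ) +
      ∑ i, ((Q i ∩ Icc (a + δ) (b + δ)).ncard : ℝ) := by
    rw [hP, Finset.card_sigma, ← Finset.sum_add_distrib]
    push_cast
    apply Finset.sum_le_sum
    intro i _
    rw [Set.ncard_eq_toFinset_card _ (hinf1 i), Set.ncard_eq_toFinset_card _ (hinf2 i)]
    exact_mod_cast Finset.card_union_le _ _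
  have hzl : ∀ i s t, dist (ζ i s) (ζ i t) ≤ |s - t| := by
    intro i s t
    have := (hζ i).dist_le_mul s t
    simpa [Real.dist_eq] using this
  have hxyr : (x : ℝ) < y := by exact_mod_cast hxy
  have hy0 : (0 : ℝ) < y := by exact_mod_cast hy1
  have hcore := aux_core (ζ := ζ) (r := fun i t => ρ + xSep ρ (fun j => ζ j t) y i) hab
    (fun i t => by linarith [hsep i t]) hzl
    (fun i s t => by
      have := aux_sep_lip (ρ := ρ) hy1 hyn (fun j => ζ j t) (fun j => ζ j s) |s - t|
        (fun j => by rw [abs_sub_comm]; exact hzl j t s) i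
      linarith)
    P ((y : ℝ) - x + 1) (by linarith)
    (by
      intro i t hat het
      have hp := hply (t + (ρ + xSep ρ (fun j => ζ j t) y i))
        (hun ▸ ⟨by linarith [hsep i t], het⟩) (ζ i t)
      obtain ⟨A, hA1, hA2⟩ := aux_forced hρ ζ hζ hy1 hyn Q i t (hsep i t) hp
      choose! s hs1 hs2 hs3 hs4 using hA2
      have hcard : A.card ≤ (P.filter fun q => t < q.2 ∧
          q.2 ≤ t + (ρ + xSep ρ (fun j => ζ j t) y i) ∧
          dist (ζ q.1 q.2) (ζ i t) ≤ 3 * (ρ + xSep ρ (fun j => ζ j t) y i)).card := by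
        apply Finset.card_le_card_of_injOn (fun j => (⟨j, s j⟩ : (_ : Fin n) × ℝ))
        · intro j hj
          rw [Finset.mem_coe, Finset.mem_filter]
          refine ⟨hmemP j (s j) (hs1 j hj) ?_ ?_, hs2 j hj, hs3 j hj, hs4 j hj⟩
          · linarith [hs2 j hj]
          · exact (hs3 j hj).trans het
        · intro j _ k _ h
          exact congrArg Sigma.fst h
      have h1 : ((y : ℝ) + 1) ≤ A.card + x := by exact_mod_cast hA1
      have h2 : (A.card : ℝ) ≤ _ := Nat.cast_le.2 hcard
      linarith)
    F hF y (fun t i => aux_sep_ball hρ hy1 (fun j => ζ j t) i)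
  set w := (y : ℝ) - x + 1 with hw
  have hw0 : 0 < w := by linarith
  have hHn : H ≤ 234 * n + (715 / w) * (P.card * (96 * (F.card * y))) := hcore
  have hH2 : H ≤ 2 * ((715 / w) * (P.card * (96 * (F.card * y)))) := by
    have : (0 : ℝ) ≤ n := Nat.cast_nonneg n
    linarith
  have hval : w / (4 * 715 * 96 * (F.card + 1) * y) * H ≤ P.card / 2 := by
    exact aux_arith w P.card F.card y H hw0 (Nat.cast_nonneg _) (Nat.cast_nonneg _) hy0 hH2
  have hconv : ∀ (T : Set ℝ), (∀ i, (Q i ∩ T).Finite) →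
      ∑ i, ((Q i ∩ T).encard : ℝ≥0∞) = ENNReal.ofReal (∑ i, ((Q i ∩ T).ncard : ℝ)) := by
    intro T hT
    rw [ENNReal.ofReal_sum_of_nonneg fun i _ => Nat.cast_nonneg _]
    apply Finset.sum_congr rfl
    intro i _
    rw [ENNReal.ofReal_natCast, ← (hT i).cast_ncard_eq]
    rfl
  rw [hconv _ hinf1, hconv _ hinf2]
  rcases le_total (∑ i, ((Q i ∩ Icc a b).ncard : ℝ))
    (∑ i, ((Q i ∩ Icc (a + δ) (b + δ)).ncard : ℝ)) with h | h
  · right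
    apply ENNReal.ofReal_le_ofReal
    linarith
  · left
    apply ENNReal.ofReal_le_ofReal
    linarith
end

section
/- Let Z = (z_1, …, z_n) be a non-overlapping configuration of n entities of radius ρ ≥ 0 in ℝ^d, and let x be a positive integer with 2x ≤ n−1 and σ_i(x) > 0 for all i. Set φ_x := Σ_{i=1}^n 1/σ_i(x), φ_{2x} := Σ_{i=1}^n 1/σ_i(2x), and μ := 2^{1/d}·(Σ_{i=1}^n 1/r_i(2x)) / (Σ_{i=1}^n 1/r_i(x)). Then φ_{2x} ≥ (μ·λ_{d,x}/2^{1/d})·φ_x. -/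
open Metric Set

lemma sepConst_nonneg (d x : ℕ) : 0 ≤ sepConst d x :=
  Real.sInf_nonneg (fun _ hc => hc.1)

lemma xSep_mem_nonneg {d n : ℕ} {ρ : ℝ} {z : Fin n → EuclideanSpace ℝ (Fin d)}
    (hsep : ∀ i j : Fin n, i ≠ j → 2 * ρ ≤ dist (z i) (z j)) {x : ℕ} (hx1 : 1 ≤ x)
    (i : Fin n) {r : ℝ}
    (hr : x ≤ {j : Fin n | j ≠ i ∧ dist (z i) (z j) - 2 * ρ ≤ r}.ncard) : 0 ≤ r := by
  have h0 : {j : Fin n | j ≠ i ∧ dist (z i) (z j) - 2 * ρ ≤ r}.ncard ≠ 0 := by omega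
  obtain ⟨j, hj1, hj2⟩ := Set.nonempty_of_ncard_ne_zero h0
  have := hsep i j (Ne.symm hj1)
  linarith

lemma xSep_set_nonempty {d n : ℕ} (ρ : ℝ) (z : Fin n → EuclideanSpace ℝ (Fin d))
    {x : ℕ} (hx : x ≤ n - 1) (i : Fin n) :
    {r : ℝ | x ≤ {j : Fin n | j ≠ i ∧ dist (z i) (z j) - 2 * ρ ≤ r}.ncard}.Nonempty := by
  obtain ⟨M, hM⟩ := (Set.finite_range (fun j => dist (z i) (z j) - 2 * ρ)).bddAbove
  refine ⟨M, ?_⟩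
  have : {j : Fin n | j ≠ i ∧ dist (z i) (z j) - 2 * ρ ≤ M} = {i}ᶜ := by
    ext j
    simp only [Set.mem_ofPred_eq, Set.mem_compl_iff, Set.mem_singleton_iff, and_iff_left_iff_imp]
    intro _
    exact hM ⟨j, rfl⟩
  rw [Set.mem_ofPred_eq, this, Set.ncard_compl]
  simpa using hx

lemma xSep_mono {d n : ℕ} {ρ : ℝ} {z : Fin n → EuclideanSpace ℝ (Fin d)}
    (hsep : ∀ i j : Fin n, i ≠ j → 2 * ρ ≤ dist (z i) (z j)) {x y : ℕ} (hx1 : 1 ≤ x)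
    (hxy : x ≤ y) (hy : y ≤ n - 1) (i : Fin n) : xSep ρ z x i ≤ xSep ρ z y i := by
  apply csInf_le_csInf ⟨0, fun r hr => xSep_mem_nonneg hsep hx1 i hr⟩
    (xSep_set_nonempty ρ z hy i)
  intro r hr
  exact le_trans hxy hr

lemma sepConst_mul_le {d n : ℕ} {ρ : ℝ} (hρ : 0 < ρ) {z : Fin n → EuclideanSpace ℝ (Fin d)}
    (hsep : ∀ i j : Fin n, i ≠ j → 2 * ρ ≤ dist (z i) (z j)) {x : ℕ} (hx1 : 1 ≤ x)
    (hx : x ≤ n - 1) (i : Fin n) : sepConst d x * ρ ≤ xSep ρ z x i := by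
  classical
  apply le_csInf (xSep_set_nonempty ρ z hx i)
  intro r hr
  have hr0 := xSep_mem_nonneg hsep hx1 i hr
  rw [← le_div_iff₀ hρ]
  apply csInf_le ⟨0, fun c hc => hc.1⟩
  refine ⟨by positivity, ?_⟩
  set J := {j : Fin n | j ≠ i ∧ dist (z i) (z j) - 2 * ρ ≤ r} with hJ
  have hcard : x ≤ (insert i J.toFinset).card := by
    refine le_trans hr ?_
    rw [Set.ncard_eq_toFinset_card']
    exact Finset.card_le_card (Finset.subset_insert _ _)
  obtain ⟨T, hT1, hT2, hT3⟩ := Finset.exists_subsuperset_card_eq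
    (s := {i}) (t := insert i J.toFinset) (n := x) (by simp) (by simpa using hx1) hcard
  let e : Fin x ≃ T := (T.equivFinOfCardEq hT3).symm
  have hd : ∀ a b : Fin n, dist (ρ⁻¹ • z a) (ρ⁻¹ • z b) = dist (z a) (z b) / ρ := by
    intro a b
    rw [dist_smul₀, Real.norm_of_nonneg (by positivity)]
    field_simp
  refine ⟨fun k => ρ⁻¹ • z (e k), ?_, e.symm ⟨i, hT1 (by simp)⟩, ?_⟩
  · intro a b hab
    rw [interior_closedBall _ one_ne_zero, interior_closedBall _ one_ne_zero]
    apply Metric.ball_disjoint_ball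
    rw [hd, le_div_iff₀ hρ]
    have := hsep (e a) (e b) (fun h => hab (e.injective (Subtype.ext h)))
    linarith
  · intro k
    rw [hd, Equiv.apply_symm_apply, div_le_iff₀ hρ, add_mul, div_mul_cancel₀ _ hρ.ne', dist_comm]
    have hk := hT2 (e k).2
    rw [Finset.mem_insert] at hk
    rcases hk with hk | hk
    · rw [hk, dist_self]; positivity
    · have hk2 : ((e k : T) : Fin n) ∈ J := by simpa using hk
      have := hk2.2
      linarith

theorem stmt15 (d n : ℕ) (hd : 1 ≤ d) (ρ : ℝ) (hρ : 0 ≤ ρ)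
    (z : Fin n → EuclideanSpace ℝ (Fin d))
    (hsep : ∀ i j : Fin n, i ≠ j → 2 * ρ ≤ dist (z i) (z j))
    (x : ℕ) (hx1 : 1 ≤ x) (hxn : 2 * x ≤ n - 1)
    (hpos : ∀ i : Fin n, 0 < xSep ρ z x i) :
    ((((2 : ℝ) ^ ((1 : ℝ) / d) * ∑ i : Fin n, 1 / (ρ + xSep ρ z (2 * x) i)) /
          (∑ i : Fin n, 1 / (ρ + xSep ρ z x i))) *
        (sepConst d x / (1 + sepConst d x)) / (2 : ℝ) ^ ((1 : ℝ) / d)) *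
        (∑ i : Fin n, 1 / xSep ρ z x i)
      ≤ ∑ i : Fin n, 1 / xSep ρ z (2 * x) i := by
  set c := sepConst d x with hc
  have hc0 : 0 ≤ c := sepConst_nonneg d x
  have hx : x ≤ n - 1 := by omega
  have hpos2 : ∀ i, 0 < xSep ρ z (2 * x) i := fun i =>
    lt_of_lt_of_le (hpos i) (xSep_mono hsep hx1 (by omega) hxn i)
  have h1 : ∑ i : Fin n, 1 / (ρ + xSep ρ z (2 * x) i) ≤ ∑ i : Fin n, 1 / xSep ρ z (2 * x) i := by
    apply Finset.sum_le_sum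
    intro i _
    exact one_div_le_one_div_of_le (hpos2 i) (by linarith)
  have h2 : c / (1 + c) * ∑ i : Fin n, 1 / xSep ρ z x i ≤ ∑ i : Fin n, 1 / (ρ + xSep ρ z x i) := by
    rw [Finset.mul_sum]
    apply Finset.sum_le_sum
    intro i _
    have hp := hpos i
    have hcs : c * ρ ≤ xSep ρ z x i := by
      rcases hρ.eq_or_lt with h | h
      · rw [← h] at hp ⊢
        linarith
      · exact sepConst_mul_le h hsep hx1 hx i
    rw [div_mul_div_comm, div_le_div_iff₀ (by positivity) (by positivity)]
    nlinarith
  have : Nonempty (Fin n) := ⟨⟨0, by omega⟩⟩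
  have h3 : 0 < ∑ i : Fin n, 1 / (ρ + xSep ρ z x i) := by
    apply Finset.sum_pos _ Finset.univ_nonempty
    intro i _
    have := hpos i
    positivity
  have h4 : 0 ≤ ∑ i : Fin n, 1 / (ρ + xSep ρ z (2 * x) i) := by
    apply Finset.sum_nonneg
    intro i _
    have := hpos2 i
    positivity
  have ht : (0 : ℝ) < (2 : ℝ) ^ ((1 : ℝ) / d) := by positivity
  generalize (2 : ℝ) ^ ((1 : ℝ) / d) = t at *
  refine le_trans ?_ h1
  generalize ∑ i : Fin n, 1 / (ρ + xSep ρ z (2 * x) i) = A at *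
  generalize ∑ i : Fin n, 1 / (ρ + xSep ρ z x i) = B at *
  generalize ∑ i : Fin n, 1 / xSep ρ z x i = F at *
  have : t * A / B * (c / (1 + c)) / t * F = A * (c / (1 + c) * F) / B := by
    field_simp
  rw [this, div_le_iff₀ h3]
  exact mul_le_mul_of_nonneg_left h2 h4
end

section
/- Let d ≥ 1, let x ≤ y be positive integers with y + 1 even, and set D := 4·(1 + y − x). Consider n = y + 1 stationary point entities (radius ρ = 0) in ℝ^d, with (y+1)/2 of them located at a point P and (y+1)/2 at a point Q, where ‖P − Q‖ = D. Then for every query schedule whose uncertainty degree is at most y at every time of a bounded interval I: every entity has a query time in every sub-interval (s, s + D] contained in I, and consequently the total number of queries during I is at least (y + 1)·⌊|I|/D⌋. -/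
open Metric Set
open scoped ENNReal

theorem stmt16 (d : ℕ) (hd : 1 ≤ d) (x y : ℕ) (hx : 1 ≤ x) (hxy : x ≤ y)
    (heven : Even (y + 1))
    (z : Fin (y + 1) → EuclideanSpace ℝ (Fin d))
    (P R : EuclideanSpace ℝ (Fin d))
    (hPR : dist P R = 4 * (1 + (y : ℝ) - (x : ℝ)))
    (S : Finset (Fin (y + 1))) (hS : 2 * S.card = y + 1)
    (hzP : ∀ i ∈ S, z i = P) (hzR : ∀ i ∉ S, z i = R)
    (Q : Fin (y + 1) → Set ℝ) (a b : ℝ) (hab : a ≤ b)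
    (hdeg : ∀ t ∈ Set.Icc a b, ∀ i : Fin (y + 1),
      {j : Fin (y + 1) |
          (uRegion 0 (z i) (Q i) t ∩ uRegion 0 (z j) (Q j) t).Nonempty}.ncard ≤ y) :
    (∀ (i : Fin (y + 1)) (s : ℝ),
        Set.Ioc s (s + 4 * (1 + (y : ℝ) - (x : ℝ))) ⊆ Set.Icc a b →
        (Q i ∩ Set.Ioc s (s + 4 * (1 + (y : ℝ) - (x : ℝ)))).Nonempty) ∧
      (((y + 1) * ⌊(b - a) / (4 * (1 + (y : ℝ) - (x : ℝ)))⌋₊ : ℕ∞) ≤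
        ∑ i : Fin (y + 1), (Q i ∩ Set.Icc a b).encard) := by
  have hxy' : (x : ℝ) ≤ y := by exact_mod_cast hxy
  obtain ⟨D, hD⟩ : ∃ D : ℝ, D = 4 * (1 + (y : ℝ) - (x : ℝ)) := ⟨_, rfl⟩
  rw [← hD] at hPR ⊢
  have hDpos : 0 < D := by rw [hD]; linarith
  have hz : ∀ i j, dist (z i) (z j) ≤ D := by
    intro i j
    by_cases hi : i ∈ S <;> by_cases hj : j ∈ S
    · rw [hzP i hi, hzP j hj, dist_self]; exact hDpos.le
    · rw [hzP i hi, hzR j hj, hPR]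
    · rw [hzR i hi, hzP j hj, dist_comm, hPR]
    · rw [hzR i hi, hzR j hj, dist_self]; exact hDpos.le
  have key : ∀ (i : Fin (y + 1)) (s : ℝ), Set.Ioc s (s + D) ⊆ Set.Icc a b →
      (Q i ∩ Set.Ioc s (s + D)).Nonempty := by
    intro i s hs
    by_contra hne
    have ht : s + D ∈ Set.Icc a b := hs ⟨by linarith, le_refl _⟩
    have h1 := hdeg (s + D) ht i
    have hall : {j : Fin (y + 1) |
        (uRegion 0 (z i) (Q i) (s + D) ∩ uRegion 0 (z j) (Q j) (s + D)).Nonempty}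
        = Set.univ := by
      ext j
      simp only [Set.mem_setOf_eq, Set.mem_univ, iff_true]
      refine ⟨z j, ?_, ?_⟩
      · unfold uRegion
        split_ifs with h
        · rw [mem_closedBall]
          have : sSup (Q i ∩ Set.Iic (s + D)) ≤ s := by
            apply csSup_le h
            rintro q ⟨hq, hq'⟩
            by_contra hlt
            exact hne ⟨q, hq, lt_of_not_ge hlt, hq'⟩
          have := hz j i
          linarith
        · trivial
      · unfold uRegion
        split_ifs with h
        · apply mem_closedBall_self
          have : sSup (Q j ∩ Set.Iic (s + D)) ≤ s + D := csSup_le h fun q hq => hq.2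
          linarith
        · trivial
    rw [hall, Set.ncard_univ, Nat.card_eq_fintype_card, Fintype.card_fin] at h1
    omega
  refine ⟨key, ?_⟩
  have hk : (⌊(b - a) / D⌋₊ : ℝ) * D ≤ b - a := by
    rw [← le_div_iff₀ hDpos]
    exact Nat.floor_le (div_nonneg (by linarith) hDpos.le)
  generalize ⌊(b - a) / D⌋₊ = k at hk ⊢
  have hmain : ∀ i : Fin (y + 1), (k : ℕ∞) ≤ (Q i ∩ Set.Icc a b).encard := by
    intro i
    have hsub : ∀ m : Fin k, Set.Ioc (a + m * D) (a + m * D + D) ⊆ Set.Icc a b := by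
      rintro m q ⟨h1, h2⟩
      have hm : ((m : ℕ) : ℝ) + 1 ≤ k := by exact_mod_cast m.2
      have h3 := mul_le_mul_of_nonneg_right hm hDpos.le
      have h4 : 0 ≤ ((m : ℕ) : ℝ) * D := by positivity
      exact ⟨by linarith, by linarith⟩
    choose f hf using fun m : Fin k => key i _ (hsub m)
    have hmono : StrictMono f := by
      intro m m' hmm
      have hm : ((m : ℕ) : ℝ) + 1 ≤ (m' : ℕ) := by exact_mod_cast hmm
      have h3 := mul_le_mul_of_nonneg_right hm hDpos.le
      have h1 := (hf m).2.2
      have h2 := (hf m').2.1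
      linarith
    have hr : Set.range f ⊆ Q i ∩ Set.Icc a b := by
      rintro _ ⟨m, rfl⟩
      exact ⟨(hf m).1, hsub m (hf m).2⟩
    calc (k : ℕ∞) = (Set.range f).encard := by
          rw [← Set.image_univ, hmono.injective.encard_image, Set.encard_univ]; simp
      _ ≤ _ := Set.encard_le_encard hr
  calc ((y : ℕ∞) + 1) * k = ∑ _i : Fin (y + 1), (k : ℕ∞) := by simp
    _ ≤ _ := Finset.sum_le_sum fun i _ => hmain i
end

section
/- Let d ≥ 1 and m ≥ 1, and consider 2m stationary point entities (radius ρ = 0) in ℝ^d such that for each 1 ≤ i ≤ m the two entities of pair i (entities numbered 2i−1 and 2i) are at distance 4i − 1 from each other. Then for every query schedule whose uncertainty degree is at most 1 at every time of a bounded interval I: each of the two entities of pair i has a query time in every sub-interval (s, s + (4i−1)] contained in I, and consequently the total number of queries during I is at least Σ_{i=1}^m 2·⌊|I|/(4i−1)⌋. -/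
open Metric Set
open scoped ENNReal

theorem center_mem_uRegion {d : ℕ} (z : EuclideanSpace ℝ (Fin d)) (Q : Set ℝ) (t : ℝ) :
    z ∈ uRegion 0 z Q t := by
  unfold uRegion
  split_ifs with h
  · have h1 : sSup (Q ∩ Set.Iic t) ≤ t := csSup_le h (fun x hx => hx.2)
    apply mem_closedBall_self
    linarith
  · exact Set.mem_univ _

theorem mem_uRegion_of_no_query {d : ℕ} (z w : EuclideanSpace ℝ (Fin d)) (Q : Set ℝ) (s L : ℝ)
    (hw : dist w z ≤ L) (hQ : ¬ (Q ∩ Set.Ioc s (s + L)).Nonempty) :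
    w ∈ uRegion 0 z Q (s + L) := by
  unfold uRegion
  split_ifs with h
  · have h1 : sSup (Q ∩ Set.Iic (s + L)) ≤ s := by
      apply csSup_le h
      intro x hx
      by_contra hlt
      exact hQ ⟨x, hx.1, not_le.mp hlt, hx.2⟩
    rw [mem_closedBall]
    linarith
  · exact Set.mem_univ _

theorem count_queries (Q : Set ℝ) (a b L : ℝ) (hL : 0 < L) (hab : a ≤ b)
    (H : ∀ s, Set.Ioc s (s + L) ⊆ Set.Icc a b → (Q ∩ Set.Ioc s (s + L)).Nonempty) :
    (⌊(b - a) / L⌋₊ : ℕ∞) ≤ (Q ∩ Set.Icc a b).encard := by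
  set n := ⌊(b - a) / L⌋₊ with hn
  have hnL : (n : ℝ) * L ≤ b - a := by
    rw [← le_div_iff₀ hL]
    exact Nat.floor_le (div_nonneg (by linarith) hL.le)
  have sub : ∀ j : Fin n, Set.Ioc (a + (j : ℕ) * L) (a + (j : ℕ) * L + L) ⊆ Set.Icc a b := by
    intro j x hx
    have h0 : (0 : ℝ) ≤ ((j : ℕ) : ℝ) * L := by positivity
    have h1 : (((j : ℕ) : ℝ) + 1) * L ≤ n * L := by
      apply mul_le_mul_of_nonneg_right _ hL.le
      exact_mod_cast j.2
    exact ⟨by linarith [hx.1], by linarith [hx.2]⟩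
  choose q hq using fun j : Fin n => H _ (sub j)
  have key : ∀ j k : Fin n, j < k → q j < q k := by
    intro j k hjk
    have h1 : (((j : ℕ) : ℝ) + 1) * L ≤ ((k : ℕ) : ℝ) * L := by
      apply mul_le_mul_of_nonneg_right _ hL.le
      exact_mod_cast hjk
    linarith [(hq j).2.2, (hq k).2.1]
  have hmono : StrictMono q := fun j k h => key j k h
  have hr : Set.range q ⊆ Q ∩ Set.Icc a b := by
    rintro _ ⟨j, rfl⟩
    exact ⟨(hq j).1, sub j (hq j).2⟩
  calc (n : ℕ∞) = (Set.range q).encard := by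
        rw [← Set.image_univ, hmono.injective.encard_image, Set.encard_univ]
        simp
    _ ≤ _ := Set.encard_le_encard hr

theorem stmt17 (d m : ℕ) (hd : 1 ≤ d) (hm : 1 ≤ m)
    (z : Fin m → Fin 2 → EuclideanSpace ℝ (Fin d))
    (hpair : ∀ i : Fin m, dist (z i 0) (z i 1) = 4 * ((i : ℕ) + 1 : ℝ) - 1)
    (Q : Fin m → Fin 2 → Set ℝ) (a b : ℝ) (hab : a ≤ b)
    (hdeg : ∀ t ∈ Set.Icc a b, ∀ (i : Fin m) (k : Fin 2),
      {p : Fin m × Fin 2 |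
          (uRegion 0 (z i k) (Q i k) t ∩
            uRegion 0 (z p.1 p.2) (Q p.1 p.2) t).Nonempty}.ncard ≤ 1) :
    (∀ (i : Fin m) (k : Fin 2) (s : ℝ),
        Set.Ioc s (s + (4 * ((i : ℕ) + 1 : ℝ) - 1)) ⊆ Set.Icc a b →
        (Q i k ∩ Set.Ioc s (s + (4 * ((i : ℕ) + 1 : ℝ) - 1))).Nonempty) ∧
      ((∑ i : Fin m, (2 * ⌊(b - a) / (4 * ((i : ℕ) + 1 : ℝ) - 1)⌋₊ : ℕ∞)) ≤
        ∑ i : Fin m, ∑ k : Fin 2, (Q i k ∩ Set.Icc a b).encard) := by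
  have part1 : ∀ (i : Fin m) (k : Fin 2) (s : ℝ),
        Set.Ioc s (s + (4 * ((i : ℕ) + 1 : ℝ) - 1)) ⊆ Set.Icc a b →
        (Q i k ∩ Set.Ioc s (s + (4 * ((i : ℕ) + 1 : ℝ) - 1))).Nonempty := by
    intro i k s hs
    by_contra hne
    have hi : (0 : ℝ) ≤ ((i : ℕ) : ℝ) := by positivity
    have ht := hs ⟨by linarith, le_refl _⟩
    have hd' : ∃ k' : Fin 2, k' ≠ k ∧ dist (z i k') (z i k) = 4 * ((i : ℕ) + 1 : ℝ) - 1 := by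
      rcases (by omega : k = 0 ∨ k = 1) with rfl | rfl
      · exact ⟨1, by decide, by rw [dist_comm]; exact hpair i⟩
      · exact ⟨0, by decide, hpair i⟩
    obtain ⟨k', hk', hdist⟩ := hd'
    have h := hdeg _ ht i k
    rw [Set.ncard_le_one (Set.toFinite _)] at h
    have e := h (i, k) ⟨z i k, center_mem_uRegion _ _ _, center_mem_uRegion _ _ _⟩ (i, k')
      ⟨z i k', mem_uRegion_of_no_query _ _ _ _ _ hdist.le hne, center_mem_uRegion _ _ _⟩
    exact hk' (Prod.ext_iff.mp e).2.symm
  refine ⟨part1, Finset.sum_le_sum fun i _ => ?_⟩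
  have hi : (0 : ℝ) ≤ ((i : ℕ) : ℝ) := by positivity
  have c := fun k => count_queries (Q i k) a b (4 * ((i : ℕ) + 1 : ℝ) - 1) (by linarith) hab
    (part1 i k)
  rw [Fin.sum_univ_two, two_mul]
  exact add_le_add (c 0) (c 1)
end
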